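/- arXiv:1304.0045 — 6 statements merged into one kernel-verified Lean document; each statement's English description precedes it below -/
import Mathlib

section
/- Let φ : ℝ → ℝ be three times continuously differentiable with φ, φ′, φ″, φ‴ all bounded on ℝ. If a sequence {x_n} ⊂ ℝ satisfies φ(x_n) → sup_{x∈ℝ} φ(x) as n → ∞, then: (i) lim_{n→∞} φ′(x_n) = 0, and (ii) limsup_{n→∞} φ″(x_n) ≤ 0. -/
open Filter

lemma aux_mono (f f' : ℝ → ℝ) (hf : ∀ t, HasDerivAt f (f' t) t) (h0 : 0 ≤ f 0)
    (hp : ∀ t, 0 ≤ t → 0 ≤ f' t) : ∀ t, 0 ≤ t → 0 ≤ f t := by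
  have hm : MonotoneOn f (Set.Ici 0) := by
    apply monotoneOn_of_deriv_nonneg (convex_Ici 0)
    · exact fun t _ => (hf t).continuousAt.continuousWithinAt
    · exact fun t _ => (hf t).differentiableAt.differentiableWithinAt
    · intro t ht
      rw [interior_Ici] at ht
      rw [(hf t).deriv]
      exact hp t (le_of_lt ht)
  intro t ht
  exact h0.trans (hm (Set.mem_Ici.2 le_rfl) (Set.mem_Ici.2 ht) ht)

lemma aux_taylor (g g1 g2 g3 : ℝ → ℝ) (M : ℝ) (h1 : ∀ t, HasDerivAt g (g1 t) t)
    (h2 : ∀ t, HasDerivAt g1 (g2 t) t) (h3 : ∀ t, HasDerivAt g2 (g3 t) t)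
    (hM : ∀ t, -M ≤ g3 t) (t : ℝ) (ht : 0 ≤ t) :
    g 0 + g1 0 * t + g2 0 * t ^ 2 / 2 - M * t ^ 3 / 6 ≤ g t := by
  have k2 := aux_mono (fun t => g2 t - g2 0 + M * t) (fun t => g3 t + M)
    (fun t => by
      refine (((h3 t).sub_const (g2 0)).add ((hasDerivAt_id t).const_mul M)).congr_deriv ?_
      norm_num)
    (by simp) (fun t _ => by linarith [hM t])
  have k1 := aux_mono (fun t => g1 t - g1 0 - g2 0 * t + M * t ^ 2 / 2)
    (fun t => g2 t - g2 0 + M * t)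
    (fun t => by
      refine ((((h2 t).sub_const (g1 0)).sub ((hasDerivAt_id t).const_mul (g2 0))).add
        (((hasDerivAt_pow 2 t).const_mul M).div_const 2)).congr_deriv ?_
      norm_num; ring)
    (by simp) k2
  have k0 := aux_mono (fun t => g t - g 0 - g1 0 * t - g2 0 * t ^ 2 / 2 + M * t ^ 3 / 6)
    (fun t => g1 t - g1 0 - g2 0 * t + M * t ^ 2 / 2)
    (fun t => by
      refine (((((h1 t).sub_const (g 0)).sub ((hasDerivAt_id t).const_mul (g1 0))).sub
        (((hasDerivAt_pow 2 t).const_mul (g2 0)).div_const 2)).add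
        (((hasDerivAt_pow 3 t).const_mul M).div_const 6)).congr_deriv ?_
      norm_num; ring)
    (by simp) k1 t ht
  linarith

/-- If `φ` is three times continuously differentiable with `φ, φ', φ'', φ'''`
bounded, and `φ (x n)` tends to `sup φ`, then `φ' (x n) → 0` and `limsup φ'' (x n) ≤ 0`. -/
theorem stmt5 (φ : ℝ → ℝ) (hφ : ContDiff ℝ 3 φ)
    (hb0 : ∃ M, ∀ x, |φ x| ≤ M) (hb1 : ∃ M, ∀ x, |deriv φ x| ≤ M)
    (hb2 : ∃ M, ∀ x, |deriv (deriv φ) x| ≤ M)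
    (hb3 : ∃ M, ∀ x, |deriv (deriv (deriv φ)) x| ≤ M)
    (x : ℕ → ℝ)
    (hx : Tendsto (fun n => φ (x n)) atTop (nhds (sSup (Set.range φ)))) :
    Tendsto (fun n => deriv φ (x n)) atTop (nhds 0) ∧
      limsup (fun n => deriv (deriv φ) (x n)) atTop ≤ 0 := by
  obtain ⟨M0, hM0⟩ := hb0
  obtain ⟨M2, hM2⟩ := hb2
  obtain ⟨M, hM⟩ := hb3
  have hM2' : 0 ≤ M2 := (abs_nonneg _).trans (hM2 0)
  have hM' : 0 ≤ M := (abs_nonneg _).trans (hM 0)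
  have c1 : ContDiff ℝ 2 (deriv φ) := ((contDiff_succ_iff_deriv (n := 2)).1 hφ).2.2
  have c2 : ContDiff ℝ 1 (deriv (deriv φ)) := ((contDiff_succ_iff_deriv (n := 1)).1 c1).2.2
  have d1 : ∀ t, HasDerivAt φ (deriv φ t) t := fun t =>
    ((hφ.differentiable (by norm_num)) t).hasDerivAt
  have d2 : ∀ t, HasDerivAt (deriv φ) (deriv (deriv φ) t) t := fun t =>
    ((c1.differentiable (by norm_num)) t).hasDerivAt
  have d3 : ∀ t, HasDerivAt (deriv (deriv φ)) (deriv (deriv (deriv φ)) t) t := fun t =>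
    ((c2.differentiable (by norm_num)) t).hasDerivAt
  set S := sSup (Set.range φ) with hS
  have hle : ∀ y, φ y ≤ S := fun y => le_csSup
    ⟨M0, by rintro _ ⟨z, rfl⟩; exact (le_abs_self _).trans (hM0 z)⟩ ⟨y, rfl⟩
  have plus : ∀ y h : ℝ, 0 ≤ h →
      φ y + deriv φ y * h + deriv (deriv φ) y * h ^ 2 / 2 - M * h ^ 3 / 6 ≤ S := by
    intro y h hh
    have := aux_taylor (fun t => φ (y + t)) (fun t => deriv φ (y + t))
      (fun t => deriv (deriv φ) (y + t)) (fun t => deriv (deriv (deriv φ)) (y + t)) M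
      (fun t => (d1 (y + t)).comp_const_add y t) (fun t => (d2 (y + t)).comp_const_add y t)
      (fun t => (d3 (y + t)).comp_const_add y t) (fun t => (abs_le.1 (hM _)).1) h hh
    simp only [add_zero] at this
    exact this.trans (hle _)
  have minus : ∀ y h : ℝ, 0 ≤ h →
      φ y - deriv φ y * h + deriv (deriv φ) y * h ^ 2 / 2 - M * h ^ 3 / 6 ≤ S := by
    intro y h hh
    have := aux_taylor (fun t => φ (y - t)) (fun t => -deriv φ (y - t))
      (fun t => deriv (deriv φ) (y - t)) (fun t => -deriv (deriv (deriv φ)) (y - t)) M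
      (fun t => (d1 (y - t)).comp_const_sub y t)
      (fun t => ((d2 (y - t)).comp_const_sub y t).neg.congr_deriv (neg_neg _))
      (fun t => (d3 (y - t)).comp_const_sub y t)
      (fun t => neg_le_neg (abs_le.1 (hM _)).2) h hh
    simp only [sub_zero] at this
    linarith [hle (y - h)]
  have key : ∀ ε : ℝ, 0 < ε → ∀ᶠ n in atTop,
      |deriv φ (x n)| < ε ∧ deriv (deriv φ) (x n) ≤ ε := by
    intro ε hε
    obtain ⟨h, hh, h1, h2⟩ : ∃ h : ℝ, 0 < h ∧ h ≤ 1 ∧ (M2 + M + 1) * h ≤ ε / 2 := by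
      refine ⟨min 1 (ε / 2 / (M2 + M + 1)), by positivity, min_le_left _ _, ?_⟩
      have hK : 0 < M2 + M + 1 := by positivity
      rw [mul_comm, ← le_div_iff₀ hK]
      exact min_le_right _ _
    have hd : S - ε * h ^ 2 / 4 < S := by
      have : 0 < ε * h ^ 2 / 4 := by positivity
      linarith
    filter_upwards [hx.eventually (lt_mem_nhds hd)] with n hn
    have p := plus (x n) h hh.le
    have m := minus (x n) h hh.le
    have b := (abs_le.1 (hM2 (x n))).1
    have hh2 : 0 < h ^ 2 := by positivity
    have e1 : -M2 * h ^ 2 ≤ deriv (deriv φ) (x n) * h ^ 2 :=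
      mul_le_mul_of_nonneg_right b hh2.le
    have e2 : (M2 + M + 1) * h ^ 2 ≤ ε / 2 * h := by nlinarith
    have e3 : h ^ 2 ≤ h := by nlinarith
    have e4 : M * h ^ 3 ≤ M * h ^ 2 :=
      mul_le_mul_of_nonneg_left (by nlinarith) hM'
    have e5 : ε * h ^ 2 ≤ ε * h := mul_le_mul_of_nonneg_left e3 hε.le
    have e6 : 0 ≤ M * h ^ 2 := by positivity
    have e7 : 0 < ε * h := by positivity
    refine ⟨abs_lt.2 ⟨?_, ?_⟩, ?_⟩
    · refine lt_of_mul_lt_mul_right ?_ hh.le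
      linarith
    · refine lt_of_mul_lt_mul_right ?_ hh.le
      linarith
    · refine le_of_mul_le_mul_right ?_ hh2
      have e8 : M * h ≤ ε / 2 := by nlinarith
      have e9 : M * h ^ 3 ≤ ε / 2 * h ^ 2 := by
        calc M * h ^ 3 = (M * h) * h ^ 2 := by ring
          _ ≤ _ := mul_le_mul_of_nonneg_right e8 hh2.le
      have e10 : 0 < ε * h ^ 2 := by positivity
      linarith
  constructor
  · rw [Metric.tendsto_nhds]
    intro ε hε
    filter_upwards [key ε hε] with n hn
    simpa [Real.dist_eq] using hn.1
  · apply le_of_forall_pos_le_add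
    intro ε hε
    rw [zero_add]
    refine limsup_le_of_le ?_ ((key ε hε).mono fun n hn => hn.2)
    exact IsBoundedUnder.isCoboundedUnder_le
      (isBoundedUnder_of ⟨-M2, fun n => (abs_le.1 (hM2 (x n))).1⟩)
end

section
/- Let T > 0, let ℒu = J*u − u with J ∈ L¹(ℝ), J ≥ 0, ∫_ℝ J dx = 1, and let b = b(x,t) be a given continuous bounded real-valued function on ℝ×[0,T]. Suppose u : ℝ×[0,T] → ℝ is continuous and bounded, is three times continuously differentiable in x and once in t on ℝ×(0,T] with all these derivatives bounded on ℝ×[ε,T] for every ε > 0, and satisfies u_t = u_xx + ℒu − b(x,t) u_x on ℝ×(0,T]. If u(x,0) ≤ 0 for all x ∈ ℝ, then u(x,t) ≤ 0 for all x ∈ ℝ and t ∈ [0,T]. -/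
open MeasureTheory Set

lemma aux_phi1 (a x : ℝ) :
    HasDerivAt (fun y : ℝ => 1 - (1 + (y - a)^2)⁻¹) (2 * (x - a) / (1 + (x - a)^2)^2) x := by
  have h : HasDerivAt (fun y : ℝ => 1 + (y - a)^2) (2 * (x - a)) x := by
    have := (((hasDerivAt_id x).sub_const a).pow 2).const_add 1
    refine HasDerivAt.congr_deriv this ?_
    simp
  have hne : 1 + (x - a)^2 ≠ 0 := by positivity
  have := (h.fun_inv hne).const_sub 1
  refine HasDerivAt.congr_deriv this ?_
  ring

lemma aux_phi2 (a x : ℝ) :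
    HasDerivAt (fun y : ℝ => 2 * (y - a) / (1 + (y - a)^2)^2)
      ((2 * (1 + (x - a)^2) - 8 * (x - a)^2) / (1 + (x - a)^2)^3) x := by
  have h : HasDerivAt (fun y : ℝ => 1 + (y - a)^2) (2 * (x - a)) x := by
    have := (((hasDerivAt_id x).sub_const a).pow 2).const_add 1
    refine HasDerivAt.congr_deriv this ?_
    simp
  have hne : 1 + (x - a)^2 ≠ 0 := by positivity
  have h1 : HasDerivAt (fun y : ℝ => 2 * (y - a)) 2 x := by
    have := ((hasDerivAt_id x).sub_const a).const_mul 2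
    refine HasDerivAt.congr_deriv this ?_
    simp
  have := h1.fun_div (h.fun_pow 2) (pow_ne_zero 2 hne)
  refine HasDerivAt.congr_deriv this ?_
  field_simp
  simp
  ring

lemma aux_max (g dg : ℝ → ℝ) (ddg x : ℝ) (h1 : ∀ y, HasDerivAt g (dg y) y)
    (h2 : HasDerivAt dg ddg x) (hm : ∀ y, g y ≤ g x) : dg x = 0 ∧ ddg ≤ 0 := by
  have hd : deriv g = dg := funext fun y => (h1 y).deriv
  have hmax : IsLocalMax g x := Filter.Eventually.of_forall hm
  have h0 : dg x = 0 := by rw [← hd]; exact hmax.deriv_eq_zero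
  refine ⟨h0, ?_⟩
  by_contra hc
  push Not at hc
  have hmin : IsLocalMin g x := by
    apply isLocalMin_of_deriv_deriv_pos
    · rw [hd, h2.deriv]; exact hc
    · rw [hd, h0]
    · exact (h1 x).continuousAt
  have he : g =ᶠ[nhds x] fun _ => g x := by
    filter_upwards [hmin] with y hy
    exact le_antisymm (hm y) hy
  have h3 := he.deriv.deriv_eq
  rw [hd, h2.deriv] at h3
  simp at h3
  linarith

lemma aux_time (f : ℝ → ℝ) (df t T : ℝ) (ht : t ∈ Ioc 0 T)
    (h : HasDerivWithinAt f df (Ioc 0 T) t) (θ : ℝ)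
    (hm : ∀ s ∈ Ioc 0 T, f s - θ * s ≤ f t - θ * t) : θ ≤ df := by
  have h1 : HasDerivWithinAt f df (Ioo 0 t) t :=
    h.mono fun s hs => ⟨hs.1, hs.2.le.trans ht.2⟩
  rw [hasDerivWithinAt_iff_tendsto_slope' (by simp)] at h1
  have := right_nhdsWithin_Ioo_neBot ht.1
  refine ge_of_tendsto h1 ?_
  filter_upwards [self_mem_nhdsWithin] with s hs
  have h2 := hm s ⟨hs.1, hs.2.le.trans ht.2⟩
  rw [slope_comm, slope_def_field, le_div_iff₀ (by linarith [hs.2])]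
  linarith

/-- Comparison principle for `u_t = u_xx + ℒu - b u_x` with
`ℒu = J*u - u`: a bounded, continuous, sufficiently regular solution on `ℝ × [0,T]`
which is nonpositive at `t = 0` stays nonpositive. -/
theorem stmt7 (T : ℝ) (hT : 0 < T)
    (J : ℝ → ℝ) (hJint : Integrable J) (hJpos : ∀ x, 0 ≤ J x) (hJ1 : (∫ x, J x) = 1)
    (b : ℝ → ℝ → ℝ)
    (hbc : ContinuousOn (Function.uncurry b) (Set.univ ×ˢ Set.Icc 0 T))
    (hbb : ∃ M, ∀ x, ∀ t ∈ Set.Icc (0 : ℝ) T, |b x t| ≤ M)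
    (u : ℝ → ℝ → ℝ)
    (huc : ContinuousOn (Function.uncurry u) (Set.univ ×ˢ Set.Icc 0 T))
    (hub : ∃ M, ∀ x, ∀ t ∈ Set.Icc (0 : ℝ) T, |u x t| ≤ M)
    (hx3 : ∀ t ∈ Set.Ioc (0 : ℝ) T, ContDiff ℝ 3 fun x => u x t)
    (hbdd : ∀ δ > (0 : ℝ), ∃ M, ∀ x, ∀ t ∈ Set.Icc δ T,
      |deriv (fun y => u y t) x| ≤ M ∧ |iteratedDeriv 2 (fun y => u y t) x| ≤ M ∧
        |iteratedDeriv 3 (fun y => u y t) x| ≤ M)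
    (heq : ∀ x, ∀ t ∈ Set.Ioc (0 : ℝ) T,
      HasDerivWithinAt (fun s => u x s)
        (iteratedDeriv 2 (fun y => u y t) x + ((∫ z, J z * u (x - z) t) - u x t)
          - b x t * deriv (fun y => u y t) x) (Set.Ioc 0 T) t)
    (h0 : ∀ x, u x 0 ≤ 0) :
    ∀ x, ∀ t ∈ Set.Icc (0 : ℝ) T, u x t ≤ 0 := by
  obtain ⟨B, hB⟩ := hbb
  obtain ⟨M, hM⟩ := hub
  by_contra hcon
  push Not at hcon
  obtain ⟨x1, t1, ht1, hu1⟩ := hcon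
  have hB0 : 0 ≤ B := (abs_nonneg _).trans (hB x1 t1 ht1)
  obtain ⟨θ, hθ, hθ1⟩ : ∃ θ > 0, 0 < u x1 t1 - θ * t1 := by
    refine ⟨u x1 t1 / (2 * T), by positivity, ?_⟩
    have : u x1 t1 / (2 * T) * t1 ≤ u x1 t1 / (2 * T) * T := by
      gcongr; exact ht1.2
    have h2 : u x1 t1 / (2 * T) * T = u x1 t1 / 2 := by field_simp
    linarith
  let W : Set ℝ := {w | ∃ x, ∃ t ∈ Icc (0:ℝ) T, w = u x t - θ * t}
  have hWne : W.Nonempty := ⟨_, x1, t1, ht1, rfl⟩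
  have hWb : BddAbove W := by
    refine ⟨M, ?_⟩
    rintro _ ⟨x, t, ht, rfl⟩
    have := (abs_le.1 (hM x t ht)).2
    have : 0 ≤ θ * t := mul_nonneg hθ.le ht.1
    linarith
  obtain ⟨S, hS⟩ : ∃ S, IsLUB W S := ⟨_, isLUB_csSup hWne hWb⟩
  have hSle : ∀ x, ∀ t ∈ Icc (0:ℝ) T, u x t - θ * t ≤ S :=
    fun x t ht => hS.1 ⟨x, t, ht, rfl⟩
  have hS0 : 0 < S := hθ1.trans_le (hSle _ _ ht1)
  obtain ⟨δ, hδ, hδS, hδθ⟩ : ∃ δ > 0, δ < S ∧ δ * (5 + 4 * B) < θ := by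
    refine ⟨min (S / 2) (θ / (2 * (5 + 4 * B))), by positivity, ?_, ?_⟩
    · exact (min_le_left _ _).trans_lt (by linarith)
    · calc _ ≤ θ / (2 * (5 + 4 * B)) * (5 + 4 * B) := by gcongr; exact min_le_right _ _
        _ = θ / 2 := by field_simp
        _ < θ := by linarith
  obtain ⟨_, ⟨x0, t0, ht0, rfl⟩, hx0, -⟩ := hS.exists_between (show S - δ < S by linarith)
  let φ : ℝ → ℝ := fun y => 1 - (1 + (y - x0)^2)⁻¹
  have hφ0 : ∀ y, 0 ≤ φ y := by
    intro y
    have : (1 + (y - x0)^2)⁻¹ ≤ 1 := inv_le_one_of_one_le₀ (by nlinarith [sq_nonneg (y - x0)])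
    simp only [φ]; linarith
  have hφx0 : φ x0 = 0 := by simp [φ]
  have hφc : Continuous φ := continuous_iff_continuousAt.2 fun x => (aux_phi1 x0 x).continuousAt
  have hφ1 : ∀ y, y ∉ Icc (x0 - 1) (x0 + 1) → 1 / 2 ≤ φ y := by
    intro y hy
    have h2 : 1 ≤ (y - x0)^2 := by
      by_contra hc
      push Not at hc
      have := abs_lt.1 ((sq_lt_one_iff_abs_lt_one _).1 hc)
      exact hy ⟨by linarith, by linarith⟩
    have : (1 + (y - x0)^2)⁻¹ ≤ 2⁻¹ := by
      apply inv_anti₀ <;> linarith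
    simp only [φ]; linarith
  let F : ℝ × ℝ → ℝ := fun p => Function.uncurry u p - θ * p.2 - 2 * δ * φ p.1
  have hK : IsCompact (Icc (x0 - 1) (x0 + 1) ×ˢ Icc (0:ℝ) T) := isCompact_Icc.prod isCompact_Icc
  have hFc : ContinuousOn F (Icc (x0 - 1) (x0 + 1) ×ˢ Icc (0:ℝ) T) := by
    have h1 := huc.mono (show Icc (x0 - 1) (x0 + 1) ×ˢ Icc (0:ℝ) T ⊆ univ ×ˢ Icc 0 T from
      prod_mono (subset_univ _) subset_rfl)
    refine (h1.sub ?_).sub ?_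
    · fun_prop
    · exact (by fun_prop : Continuous fun p : ℝ × ℝ => 2 * δ * φ p.1).continuousOn
  have hmem : (x0, t0) ∈ Icc (x0 - 1) (x0 + 1) ×ˢ Icc (0:ℝ) T :=
    ⟨⟨by simp, by simp⟩, ht0⟩
  obtain ⟨⟨xs, ts⟩, ⟨-, hts⟩, hmaxK⟩ := hK.exists_isMaxOn ⟨_, hmem⟩ hFc
  simp only at hts
  have hF0 : S - δ < u xs ts - θ * ts - 2 * δ * φ xs := by
    have := hmaxK hmem
    simp only [F, Function.uncurry, mem_ofPred_eq, hφx0] at this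
    linarith
  have hmax : ∀ x, ∀ t ∈ Icc (0:ℝ) T,
      u x t - θ * t - 2 * δ * φ x ≤ u xs ts - θ * ts - 2 * δ * φ xs := by
    intro x t ht
    by_cases hx : x ∈ Icc (x0 - 1) (x0 + 1)
    · exact hmaxK (show (x, t) ∈ _ from ⟨hx, ht⟩)
    · have h1 := hSle x t ht
      have h2 := mul_le_mul_of_nonneg_left (hφ1 x hx) (by linarith : 0 ≤ 2 * δ)
      linarith
  have hφs := mul_nonneg (by linarith : 0 ≤ 2 * δ) (hφ0 xs)
  have hts0 : 0 < ts := by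
    rcases hts.1.eq_or_lt with h | h
    · rw [← h] at hF0
      have := h0 xs
      linarith
    · exact h
  have hts' : ts ∈ Ioc 0 T := ⟨hts0, hts.2⟩
  have htime := aux_time (fun s => u xs s) _ ts T hts' (heq xs ts hts') θ (by
    intro s hs
    have := hmax xs s ⟨hs.1.le, hs.2⟩
    linarith)
  have hcd := hx3 ts hts'
  have hd1 : ∀ y, HasDerivAt (fun x => u x ts) (deriv (fun y => u y ts) y) y := fun y =>
    (hcd.differentiable (by norm_num) y).hasDerivAt
  have hd2 : HasDerivAt (deriv (fun y => u y ts)) (iteratedDeriv 2 (fun y => u y ts) xs) xs := by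
    have h := hcd.differentiable_iteratedDeriv 1 (by norm_num)
    rw [iteratedDeriv_succ, iteratedDeriv_one]
    rw [iteratedDeriv_one] at h
    exact (h xs).hasDerivAt
  have hsp := aux_max (fun x => u x ts - 2 * δ * φ x) _ _ xs
    (fun y => (hd1 y).sub ((aux_phi1 x0 y).const_mul (2 * δ)))
    (hd2.sub ((aux_phi2 x0 xs).const_mul (2 * δ))) (by
      intro y
      have := hmax y ts hts
      linarith)
  obtain ⟨hsp1, hsp2⟩ := hsp
  generalize xs - x0 = q at hsp1 hsp2
  have hq1 : |2 * q / (1 + q^2)^2| ≤ 2 := by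
    rw [abs_div, abs_of_pos (by positivity : 0 < (1 + q^2)^2), div_le_iff₀ (by positivity), abs_le]
    constructor <;> nlinarith [sq_nonneg (q - 1), sq_nonneg (q + 1), sq_nonneg (q^2)]
  have hq2 : (2 * (1 + q^2) - 8 * q^2) / (1 + q^2)^3 ≤ 2 := by
    rw [div_le_iff₀ (by positivity)]
    nlinarith [sq_nonneg q, sq_nonneg (q^2), mul_nonneg (sq_nonneg q) (sq_nonneg (q^2))]
  have hux : |b xs ts * deriv (fun y => u y ts) xs| ≤ B * (4 * δ) := by
    rw [abs_mul]
    have : |deriv (fun y => u y ts) xs| ≤ 4 * δ := by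
      rw [sub_eq_zero.1 hsp1, abs_mul, abs_of_pos (by linarith : 0 < 2 * δ)]
      have := mul_le_mul_of_nonneg_left hq1 (by linarith : 0 ≤ 2 * δ)
      linarith
    exact mul_le_mul (hB xs ts hts) this (abs_nonneg _) hB0
  have huxx : iteratedDeriv 2 (fun y => u y ts) xs ≤ 4 * δ := by
    have := mul_le_mul_of_nonneg_left hq2 (by linarith : 0 ≤ 2 * δ)
    linarith
  have hJu : (∫ z, J z * u (xs - z) ts) ≤ S + θ * ts := by
    have hcont : Continuous fun z => u (xs - z) ts :=
      hcd.continuous.comp (continuous_const.sub continuous_id)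
    have hi : Integrable fun z => J z * u (xs - z) ts :=
      hJint.mul_bdd hcont.aestronglyMeasurable
        (Filter.Eventually.of_forall fun z => by rw [Real.norm_eq_abs]; exact hM _ ts hts)
    calc (∫ z, J z * u (xs - z) ts) ≤ ∫ z, J z * (S + θ * ts) := by
          apply integral_mono hi (hJint.mul_const _)
          intro z
          have := hSle (xs - z) ts hts
          exact mul_le_mul_of_nonneg_left (by linarith) (hJpos z)
      _ = S + θ * ts := by rw [integral_mul_const, hJ1, one_mul]
  have := (abs_le.1 hux).1
  linarith
end

section
/- Let J ∈ L¹(ℝ) with J ≥ 0 and ∫_ℝ J(x) dx = 1, and let ℒφ = J*φ − φ. Then for every φ ∈ L¹(ℝ): ∫_ℝ ℒφ(x) · sgn(φ(x)) dx ≤ 0, where sgn denotes the sign function. -/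
open MeasureTheory

/-- For `J ∈ L¹(ℝ)` nonnegative with `∫ J = 1` and `ℒφ = J*φ - φ`:
for every `φ ∈ L¹(ℝ)`, `∫ ℒφ(x) · sgn(φ(x)) dx ≤ 0`. -/
theorem stmt9 (J : ℝ → ℝ) (hJint : Integrable J) (hJpos : ∀ x, 0 ≤ J x)
    (hJ1 : (∫ x, J x) = 1) (φ : ℝ → ℝ) (hφ : Integrable φ) :
    (∫ x, ((∫ y, J y * φ (x - y)) - φ x) * Real.sign (φ x)) ≤ 0 := by
  by_cases hI : Integrable (fun x => ((∫ y, J y * φ (x - y)) - φ x) * Real.sign (φ x))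
  swap
  · rw [integral_undef hI]
  have hconv : Integrable (fun x => ∫ y, J y * |φ (x - y)|) :=
    hJint.integrable_convolution (ContinuousLinearMap.mul ℝ ℝ) hφ.abs
  have hval : (∫ x, ∫ y, J y * |φ (x - y)|) = (∫ x, J x) * ∫ x, |φ x| :=
    integral_convolution (ContinuousLinearMap.mul ℝ ℝ) hJint hφ.abs
  have hle := integral_mono hI (hconv.sub hφ.abs) (fun x => ?_)
  · refine hle.trans (le_of_eq ?_)
    simp only [Pi.sub_apply]
    rw [integral_sub hconv hφ.abs, hval, hJ1]
    ring
  · have h1 : |∫ y, J y * φ (x - y)| ≤ ∫ y, J y * |φ (x - y)| := by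
      refine (abs_integral_le_integral_abs).trans (le_of_eq ?_)
      congr 1
      ext y
      rw [abs_mul, abs_of_nonneg (hJpos y)]
    have h2 := abs_le.mp h1
    simp only [Pi.sub_apply]
    rcases lt_trichotomy (φ x) 0 with h | h | h
    · rw [Real.sign_of_neg h, abs_of_neg h]; linarith
    · rw [h, Real.sign_zero, abs_zero]; linarith
    · rw [Real.sign_of_pos h, abs_of_pos h]; linarith
end

section
/- Let ε > 0 and let ℒu = J*u − u with J ∈ L¹(ℝ), |x|²J ∈ L¹(ℝ), ∫_ℝ J dx = 1, J even and nonnegative. Let u^ε be a bounded classical solution on ℝ×(0,∞) of u_t = ε u_xx + ℒu − u u_x, smooth with all derivatives bounded on ℝ×(t₀,∞) for every t₀ > 0, with initial datum u₀ satisfying: u₀ − u₋ ∈ L¹((−∞,0)), u₀ − u₊ ∈ L¹((0,∞)) for constants u₋ < u₊, u₀ weakly differentiable with u₀′ ∈ L¹(ℝ) and u₀′ ≥ 0 a.e., and suppose u^ε_x ≥ 0 on ℝ×(0,∞), u^ε_x(·,t) ∈ L¹(ℝ) for each t > 0 with ∫_ℝ u^ε_x(x,t) dx = ∫_ℝ u₀′(x)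 dx. Then for every p ∈ [1,∞] and all t > 0: ‖u^ε_x(·,t)‖_{L^p(ℝ)} ≤ t^{−1+1/p} ‖u₀′‖_{L¹(ℝ)}^{1/p}. -/
open MeasureTheory Filter
open scoped ENNReal

theorem discrete_sum (f : ℝ → ℝ) (a b k C : ℝ) (hab : a ≤ b)
    (H : ∀ s t, a ≤ s → s ≤ t → t ≤ b → f s + k * (t - s) ≤ f t + C * (t - s) ^ 2) :
    f a + k * (b - a) ≤ f b := by
  have key : ∀ n : ℕ, f a + k * (b - a) ≤ f b + C * (b - a) ^ 2 * (1 / ((n : ℝ) + 1)) := by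
    intro n
    have hn : (0 : ℝ) < (n : ℝ) + 1 := by positivity
    set h := (b - a) / ((n : ℝ) + 1) with hh
    have hh0 : 0 ≤ h := div_nonneg (by linarith) hn.le
    have hhn : h * ((n : ℝ) + 1) = b - a := by rw [hh]; field_simp
    have ind : ∀ i : ℕ, (i : ℝ) ≤ (n : ℝ) + 1 →
        f a + k * (i * h) ≤ f (a + i * h) + C * i * h ^ 2 := by
      intro i
      induction i with
      | zero => intro _; simp
      | succ i ih =>
        intro hi
        push_cast at hi ⊢
        have h1 := ih (by linarith)
        have h2 := H (a + i * h) (a + (i + 1) * h) (by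
          have : (0 : ℝ) ≤ i * h := by positivity
          linarith) (by nlinarith) (by
          have := mul_le_mul_of_nonneg_left hi hh0
          nlinarith)
        have e : a + ((i : ℝ) + 1) * h - (a + i * h) = h := by ring
        rw [e] at h2
        nlinarith
    have h3 := ind (n + 1) (by push_cast; rfl)
    push_cast at h3
    have e1 : ((n : ℝ) + 1) * h = b - a := by linarith
    rw [e1] at h3
    have e2 : C * ((n : ℝ) + 1) * h ^ 2 = C * (b - a) ^ 2 * (1 / ((n : ℝ) + 1)) := by
      rw [← hhn]; field_simp
    rw [e2] at h3
    simpa using h3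
  have lim : Tendsto (fun n : ℕ => f b + C * (b - a) ^ 2 * (1 / ((n : ℝ) + 1))) atTop
      (nhds (f b + C * (b - a) ^ 2 * 0)) :=
    tendsto_const_nhds.add (tendsto_const_nhds.mul tendsto_one_div_add_atTop_nhds_zero_nat)
  have := ge_of_tendsto' lim key
  simpa using this

theorem riccati (m : ℝ → ℝ) (a b C L : ℝ) (hab : a ≤ b) (hC : 0 ≤ C) (hL : 0 ≤ L)
    (H : ∀ s t, a ≤ s → s ≤ t → t ≤ b → m t + (t - s) * m t ^ 2 ≤ m s + C * (t - s) ^ 2)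
    (HL : ∀ s t, a ≤ s → s ≤ t → t ≤ b → m s ≤ m t + L * (t - s)) :
    m b * (b - a) ≤ 1 := by
  rcases le_or_gt (m b) 0 with h0 | h0
  · nlinarith
  have mono : ∀ t, a ≤ t → t ≤ b → m b ≤ m t := by
    intro t h1 h2
    have := discrete_sum (fun t => - m t) t b 0 C h2 (fun s r hs hr hb => by
      have := H s r (by linarith) hr hb
      have : 0 ≤ (r - s) * m r ^ 2 := mul_nonneg (by linarith) (sq_nonneg _)
      linarith)
    linarith
  have := discrete_sum (fun t => 1 / m t) a b 1 (L / m b + C / m b ^ 2) hab (fun s t hs hst ht => by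
    have q1 := H s t hs hst ht
    have q2 := HL s t hs hst ht
    have ms := mono s hs (by linarith)
    have mt := mono t (by linarith) ht
    have ps : 0 < m s := by linarith
    have pt : 0 < m t := by linarith
    have hd : 0 ≤ t - s := by linarith
    have e : 1 / m t - 1 / m s = (m s - m t) / (m t * m s) := by field_simp
    have r1 : L * m t + C ≤ (L / m b + C / m b ^ 2) * (m t * m s) := by
      have a1 : L * m t ≤ L / m b * (m t * m s) := by
        rw [div_mul_eq_mul_div, le_div_iff₀ h0]
        have : 0 ≤ L * m t := by positivity
        nlinarith
      have a2 : C ≤ C / m b ^ 2 * (m t * m s) := by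
        rw [div_mul_eq_mul_div, le_div_iff₀ (by positivity)]
        have : m b ^ 2 ≤ m t * m s := by nlinarith
        nlinarith
      linarith
    have r2 : (t - s) - (L / m b + C / m b ^ 2) * (t - s) ^ 2 ≤ (m s - m t) / (m t * m s) := by
      rw [le_div_iff₀ (by positivity)]
      have b1 := mul_le_mul_of_nonneg_left r1 (sq_nonneg (t - s))
      have b2 := mul_le_mul_of_nonneg_left q2 (mul_nonneg hd pt.le)
      nlinarith
    linarith)
  have hma := mono a le_rfl hab
  have : 0 < 1 / m a := by
    have : 0 < m a := by linarith
    positivity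
  have : b - a ≤ 1 / m b := by linarith
  rw [le_div_iff₀ h0] at this
  linarith

theorem exists_max (f g : ℝ → ℝ) (M : ℝ) (hM : 0 ≤ M) (hf : ∀ x, HasDerivAt f (g x) x)
    (hg0 : ∀ x, 0 ≤ g x) (hfM : ∀ x, |f x| ≤ M) (hL : ∀ x y, |g x - g y| ≤ M * |x - y|) :
    ∃ x0, ∀ x, g x ≤ g x0 := by
  by_cases hz : ∀ x, g x ≤ 0
  · exact ⟨0, fun x => (hz x).trans (hg0 0)⟩
  push Not at hz
  obtain ⟨x1, hx1⟩ := hz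
  have hcont : Continuous g := by
    have : LipschitzWith (Real.toNNReal M) g := LipschitzWith.of_dist_le_mul fun x y => by
      rw [Real.dist_eq, Real.dist_eq, Real.coe_toNNReal _ hM]; exact hL x y
    exact this.continuous
  refine hcont.exists_forall_ge' x1 ?_
  set c := g x1
  set δ := c / (2 * (M + 1)) with hδ
  have hδ0 : 0 < δ := by positivity
  have hMδ : M * δ ≤ c / 2 := by
    rw [hδ]; rw [mul_div_assoc', div_le_div_iff₀ (by positivity) (by positivity)]; nlinarith
  have hmono : Monotone f := monotone_of_deriv_nonneg (fun x => (hf x).differentiableAt)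
    (fun x => by rw [(hf x).deriv]; exact hg0 x)
  have bound : ∀ x, δ * (g x - M * δ) ≤ f (x + δ) - f x := by
    intro x
    obtain ⟨ξ, hξ, h⟩ := exists_hasDerivAt_eq_slope f g (show x < x + δ by linarith)
      (fun y _ => (hf y).continuousAt.continuousWithinAt) (fun y _ => hf y)
    have e : x + δ - x = δ := by ring
    rw [e, eq_div_iff hδ0.ne'] at h
    rw [← h]
    have h1 := hL x ξ
    have h2 : |x - ξ| ≤ δ := by rw [abs_le]; constructor <;> linarith [hξ.1, hξ.2]
    have h3 := le_abs_self (g x - g ξ)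
    have h4 := mul_le_mul_of_nonneg_left h2 hM
    nlinarith
  have conc : ∀ l : Filter ℝ, Tendsto (fun x => f (x + δ) - f x) l (nhds 0) →
      ∀ᶠ x in l, g x ≤ c := by
    intro l hl
    have hp : 0 < δ * (c / 2) := by positivity
    filter_upwards [hl.eventually (gt_mem_nhds hp)] with x hx
    have := bound x
    have h5 : δ * (g x - M * δ) < δ * (c / 2) := by linarith
    have := lt_of_mul_lt_mul_left h5 hδ0.le
    linarith
  rw [cocompact_eq_atBot_atTop, eventually_sup]
  constructor
  · apply conc
    have h1 := tendsto_atBot_ciInf hmono ⟨-M, by rintro _ ⟨x, rfl⟩; exact (abs_le.1 (hfM x)).1⟩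
    have h2 := h1.comp (tendsto_atBot_add_const_right atBot δ tendsto_id)
    simpa using h2.sub h1
  · apply conc
    have h1 := tendsto_atTop_ciSup hmono ⟨M, by rintro _ ⟨x, rfl⟩; exact (abs_le.1 (hfM x)).2⟩
    have h2 := h1.comp (tendsto_atTop_add_const_right atTop δ tendsto_id)
    simpa using h2.sub h1

theorem at_max (ε : ℝ) (hε : 0 < ε) (J : ℝ → ℝ) (hJint : Integrable J)
    (hJ1 : (∫ x, J x) = 1) (hJpos : ∀ x, 0 ≤ J x) (f : ℝ → ℝ) (hf : ContDiff ℝ (⊤ : ℕ∞) f)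
    (M : ℝ) (hfM : ∀ x, |f x| ≤ M) (hgM : ∀ x, |deriv f x| ≤ M)
    (x0 : ℝ) (hx0 : ∀ x, deriv f x ≤ deriv f x0) (D : ℝ)
    (hD : HasDerivAt (fun x => ε * iteratedDeriv 2 f x + ((∫ z, J z * f (x - z)) - f x)
      - f x * deriv f x) D x0) : D ≤ - (deriv f x0) ^ 2 := by
  have hg : ContDiff ℝ (⊤ : ℕ∞) (deriv f) := by
    have := (contDiff_infty_iff_deriv (𝕜 := ℝ) (f := f)).1 hf
    exact this.2
  have hg' : ContDiff ℝ (⊤ : ℕ∞) (deriv (deriv f)) :=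
    ((contDiff_infty_iff_deriv (𝕜 := ℝ) (f := deriv f)).1 hg).2
  have df : Differentiable ℝ f := hf.differentiable (by simp)
  have dg : Differentiable ℝ (deriv f) := hg.differentiable (by simp)
  have dg' : Differentiable ℝ (deriv (deriv f)) := hg'.differentiable (by simp)
  have hmax : IsLocalMax (deriv f) x0 := Eventually.of_forall hx0
  have hz : deriv (deriv f) x0 = 0 := hmax.deriv_eq_zero
  have h2 : deriv (deriv (deriv f)) x0 ≤ 0 := by
    by_contra hpos
    push Not at hpos
    have hmin := isLocalMin_of_deriv_deriv_pos hpos hz dg.continuous.continuousAt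
    have hc : deriv f =ᶠ[nhds x0] fun _ => deriv f x0 := by
      filter_upwards [hmin] with x hx
      exact le_antisymm (hx0 x) hx
    have := hc.deriv.deriv.eq_of_nhds
    simp at this
    linarith
  have hconv : HasDerivAt (fun x => ∫ z, J z * f (x - z)) (∫ z, J z * deriv f (x0 - z)) x0 := by
    refine (hasDerivAt_integral_of_dominated_loc_of_deriv_le (μ := volume)
      (F := fun x z => J z * f (x - z)) (F' := fun x z => J z * deriv f (x - z))
      (bound := fun z => J z * M) (s := Set.univ) univ_mem ?_ ?_ ?_ ?_ ?_ ?_).2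
    · refine Eventually.of_forall fun x => ?_
      exact hJint.aestronglyMeasurable.mul
        (df.continuous.comp (continuous_const.sub continuous_id)).aestronglyMeasurable
    · refine hJint.mul_bdd (c := M)
        (df.continuous.comp (continuous_const.sub continuous_id)).aestronglyMeasurable
        (Eventually.of_forall fun z => ?_)
      exact hfM _
    · exact hJint.aestronglyMeasurable.mul
        (dg.continuous.comp (continuous_const.sub continuous_id)).aestronglyMeasurable
    · refine Eventually.of_forall fun z x _ => ?_
      rw [norm_mul, Real.norm_eq_abs, abs_of_nonneg (hJpos z)]
      exact mul_le_mul_of_nonneg_left (hgM _) (hJpos z)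
    · exact hJint.mul_const M
    · refine Eventually.of_forall fun z x _ => ?_
      have := (df (x - z)).hasDerivAt.comp_sub_const x z
      exact this.const_mul (J z)
  have hI : (∫ z, J z * deriv f (x0 - z)) ≤ deriv f x0 := by
    calc (∫ z, J z * deriv f (x0 - z)) ≤ ∫ z, J z * deriv f x0 := by
          refine integral_mono ?_ (hJint.mul_const _) fun z => ?_
          · refine hJint.mul_bdd (c := M)
              (dg.continuous.comp (continuous_const.sub continuous_id)).aestronglyMeasurable
              (Eventually.of_forall fun z => ?_)
            exact hgM _
          · exact mul_le_mul_of_nonneg_left (hx0 _) (hJpos z)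
      _ = deriv f x0 := by rw [integral_mul_const, hJ1, one_mul]
  have hit : iteratedDeriv 2 f = deriv (deriv f) := by
    rw [iteratedDeriv_succ, iteratedDeriv_one]
  rw [hit] at hD
  have hE := (((dg' x0).hasDerivAt.const_mul ε).add (hconv.sub (df x0).hasDerivAt)).sub
    ((df x0).hasDerivAt.mul (dg x0).hasDerivAt)
  have := hD.unique hE
  rw [this, hz]
  have := mul_nonpos_of_nonneg_of_nonpos hε.le h2
  nlinarith

theorem lp_interp (g : ℝ → ℝ) (A t : ℝ) (ht : 0 < t) (hg : Integrable g) (h0 : ∀ x, 0 ≤ g x)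
    (h1 : ∀ x, g x ≤ 1 / t) (hA : (∫ x, g x) = A) (p : ℝ≥0∞) (hp : 1 ≤ p) :
    eLpNorm g p volume ≤ ENNReal.ofReal (t ^ (-1 + p⁻¹.toReal) * A ^ p⁻¹.toReal) := by
  have hA0 : 0 ≤ A := hA ▸ integral_nonneg h0
  rcases eq_or_ne p ∞ with rfl | hpt
  · simp only [ENNReal.inv_top, ENNReal.toReal_zero, add_zero, Real.rpow_zero, mul_one,
      eLpNorm_exponent_top]
    refine eLpNormEssSup_le_of_ae_enorm_bound (Eventually.of_forall fun x => ?_)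
    rw [Real.enorm_eq_ofReal (h0 x), Real.rpow_neg_one]
    exact ENNReal.ofReal_le_ofReal (by simpa using h1 x)
  · have hp0 : p ≠ 0 := by rintro rfl; simp at hp
    set q := p.toReal with hq
    have hq1 : 1 ≤ q := by
      rw [hq, ← ENNReal.toReal_one]; exact ENNReal.toReal_mono hpt hp
    have hq0 : 0 < q := by linarith
    rw [eLpNorm_eq_lintegral_rpow_enorm_toReal hp0 hpt, ENNReal.toReal_inv, ← hq]
    have hb : (∫⁻ x, ‖g x‖ₑ ^ q) ≤ ENNReal.ofReal ((1 / t) ^ (q - 1) * A) := by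
      calc (∫⁻ x, ‖g x‖ₑ ^ q) ≤ ∫⁻ x, ENNReal.ofReal ((1 / t) ^ (q - 1) * g x) := by
            refine lintegral_mono fun x => ?_
            rw [Real.enorm_eq_ofReal (h0 x), ENNReal.ofReal_rpow_of_nonneg (h0 x) hq0.le]
            refine ENNReal.ofReal_le_ofReal ?_
            have e : g x ^ q = g x ^ (q - 1) * g x := by
              rcases (h0 x).eq_or_lt with h | h
              · rw [← h, Real.zero_rpow hq0.ne']; simp
              · rw [← Real.rpow_add_one h.ne']; ring_nf
            rw [e]
            exact mul_le_mul_of_nonneg_right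
              (Real.rpow_le_rpow (h0 x) (h1 x) (by linarith)) (h0 x)
        _ = ENNReal.ofReal (∫ x, (1 / t) ^ (q - 1) * g x) := by
            rw [ofReal_integral_eq_lintegral_ofReal (hg.const_mul _)
              (Eventually.of_forall fun x => mul_nonneg (by positivity) (h0 x))]
        _ = _ := by rw [integral_const_mul, hA]
    refine (ENNReal.rpow_le_rpow hb (by positivity)).trans ?_
    rw [ENNReal.ofReal_rpow_of_nonneg (by positivity) (by positivity)]
    refine ENNReal.ofReal_le_ofReal (le_of_eq ?_)
    rw [Real.mul_rpow (by positivity) hA0, ← Real.rpow_mul (by positivity), one_div,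
      Real.inv_rpow ht.le, ← Real.rpow_neg ht.le, one_div]
    congr 2
    field_simp
    ring

theorem slice_x (U : ℝ × ℝ → ℝ) (x t : ℝ) (h : DifferentiableAt ℝ U (x, t)) :
    HasDerivAt (fun y => U (y, t)) (fderiv ℝ U (x, t) (1, 0)) x :=
  h.hasFDerivAt.comp_hasDerivAt x ((hasDerivAt_id x).prodMk (hasDerivAt_const x t))

theorem slice_t (U : ℝ × ℝ → ℝ) (x t : ℝ) (h : DifferentiableAt ℝ U (x, t)) :
    HasDerivAt (fun s => U (x, s)) (fderiv ℝ U (x, t) (0, 1)) t :=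
  h.hasFDerivAt.comp_hasDerivAt t ((hasDerivAt_const t x).prodMk (hasDerivAt_id t))

theorem clm_bound (A : ℝ × ℝ →L[ℝ] ℝ) (a : ℝ × ℝ) (ha : ‖a‖ ≤ 1) (M : ℝ) (hA : ‖A‖ ≤ M) :
    |A a| ≤ M := by
  have := A.le_of_opNorm_le hA a
  rw [Real.norm_eq_abs] at this
  have h0 : 0 ≤ M := (norm_nonneg A).trans hA
  nlinarith

theorem fderiv_apply_bound {E : Type*} [NormedAddCommGroup E] [NormedSpace ℝ E]
    (F : E → E →L[ℝ] ℝ) (z a : E) (ha : ‖a‖ ≤ 1)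
    (h : DifferentiableAt ℝ F z) : ‖fderiv ℝ (fun y => F y a) z‖ ≤ ‖fderiv ℝ F z‖ := by
  refine ContinuousLinearMap.opNorm_le_bound _ (norm_nonneg (fderiv ℝ F z)) fun b => ?_
  have e : fderiv ℝ (fun y => F y a) z b = fderiv ℝ F z b a := by
    rw [fderiv_clm_apply h (differentiableAt_const a)]; simp
  rw [e]
  calc ‖fderiv ℝ F z b a‖ ≤ ‖fderiv ℝ F z b‖ * ‖a‖ := ContinuousLinearMap.le_opNorm _ _
    _ ≤ ‖fderiv ℝ F z b‖ * 1 := by gcongr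
    _ ≤ _ := by rw [mul_one]; exact ContinuousLinearMap.le_opNorm _ _

theorem taylor_bound (W W' W'' : ℝ → ℝ) (s t L : ℝ) (hst : s ≤ t)
    (h1 : ∀ r ∈ Set.Icc s t, HasDerivAt W (W' r) r)
    (h2 : ∀ r ∈ Set.Icc s t, HasDerivAt W' (W'' r) r)
    (h3 : ∀ r ∈ Set.Icc s t, |W'' r| ≤ L) :
    W t - (t - s) * W' t ≤ W s + L * (t - s) ^ 2 := by
  rcases hst.eq_or_lt with rfl | hlt
  · simp
  obtain ⟨ξ, hξ, h⟩ := exists_hasDerivAt_eq_slope W W' hlt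
      (fun y hy => (h1 y hy).continuousAt.continuousWithinAt)
      (fun y hy => h1 y (Set.Ioo_subset_Icc_self hy))
  rw [eq_div_iff (by linarith)] at h
  have hξ' := Set.Ioo_subset_Icc_self hξ
  have := (convex_Icc s t).norm_image_sub_le_of_norm_hasDerivWithin_le
    (fun r hr => (h2 r hr).hasDerivWithinAt) h3 hξ' (Set.right_mem_Icc.2 hst)
  rw [Real.norm_eq_abs, Real.norm_eq_abs, abs_of_nonneg (by linarith [hξ.2] : 0 ≤ t - ξ)] at this
  have h4 := neg_abs_le (W' t - W' ξ)
  have hL : 0 ≤ L := (abs_nonneg _).trans (h3 s (Set.left_mem_Icc.2 hst))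
  have h5 : L * (t - ξ) ≤ L * (t - s) := mul_le_mul_of_nonneg_left (by linarith [hξ.1]) hL
  have h6 : -(L * (t - s)) ≤ W' t - W' ξ := by linarith
  have := mul_le_mul_of_nonneg_left h6 (by linarith : 0 ≤ t - s)
  nlinarith

set_option maxSynthPendingDepth 6 in
set_option synthInstance.maxHeartbeats 200000 in
theorem sup_bound (ε : ℝ) (hε : 0 < ε)
    (J : ℝ → ℝ) (hJint : Integrable J)
    (hJ1 : (∫ x, J x) = 1) (hJpos : ∀ x, 0 ≤ J x)
    (u : ℝ → ℝ → ℝ)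
    (hub : ∃ M, ∀ x t, 0 < t → |u x t| ≤ M)
    (hsmooth : ∀ x t, 0 < t → ContDiffAt ℝ (⊤ : ℕ∞) (Function.uncurry u) (x, t))
    (hder : ∀ t₀ > (0 : ℝ), ∀ n : ℕ, ∃ M, ∀ x t, t₀ < t →
      ‖iteratedFDeriv ℝ n (Function.uncurry u) (x, t)‖ ≤ M)
    (heq : ∀ x t, 0 < t →
      HasDerivAt (fun s => u x s)
        (ε * iteratedDeriv 2 (fun y => u y t) x + ((∫ z, J z * u (x - z) t) - u x t)
          - u x t * deriv (fun y => u y t) x) t)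
    (hux0 : ∀ x : ℝ, ∀ t > (0 : ℝ), 0 ≤ deriv (fun y => u y t) x)
    (a b : ℝ) (ha : 0 < a) (hab : a ≤ b) (x : ℝ) :
    deriv (fun y => u y b) x * (b - a) ≤ 1 := by
  obtain ⟨M0, hM0⟩ := hub
  obtain ⟨M1, hM1⟩ := hder (a / 2) (by linarith) 1
  obtain ⟨M2, hM2⟩ := hder (a / 2) (by linarith) 2
  obtain ⟨M3, hM3⟩ := hder (a / 2) (by linarith) 3
  set U := Function.uncurry u with hU
  set M := max (max M0 M1) (max M2 M3) with hM
  have l0 : M0 ≤ M := (le_max_left _ _).trans (le_max_left _ _)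
  have l1 : M1 ≤ M := (le_max_right _ _).trans (le_max_left _ _)
  have l2 : M2 ≤ M := (le_max_left _ _).trans (le_max_right _ _)
  have l3 : M3 ≤ M := (le_max_right _ _).trans (le_max_right _ _)
  have hMnn : 0 ≤ M := (abs_nonneg _).trans ((hM0 0 a ha).trans l0)
  have n10 : ‖((1 : ℝ), (0 : ℝ))‖ ≤ 1 := by simp [Prod.norm_def]
  have n01 : ‖((0 : ℝ), (1 : ℝ))‖ ≤ 1 := by simp [Prod.norm_def]
  -- smoothness
  have s0 : ∀ x t, 0 < t → DifferentiableAt ℝ U (x, t) := fun x t ht =>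
    (hsmooth x t ht).differentiableAt (by simp)
  have c1 : ∀ x t, 0 < t → ContDiffAt ℝ (⊤ : ℕ∞) (fderiv ℝ U) (x, t) := fun x t ht =>
    (hsmooth x t ht).fderiv_right (by simp)
  have c2 : ∀ x t, 0 < t → ContDiffAt ℝ (⊤ : ℕ∞) (fderiv ℝ (fderiv ℝ U)) (x, t) := fun x t ht =>
    (c1 x t ht).fderiv_right (by simp)
  have d1 : ∀ x t, 0 < t → DifferentiableAt ℝ (fderiv ℝ U) (x, t) := fun x t ht =>
    (c1 x t ht).differentiableAt (by simp)
  have d2 : ∀ x t, 0 < t → DifferentiableAt ℝ (fderiv ℝ (fderiv ℝ U)) (x, t) := fun x t ht =>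
    (c2 x t ht).differentiableAt (by simp)
  -- bounds
  have b1 : ∀ x t, a ≤ t → ‖fderiv ℝ U (x, t)‖ ≤ M := fun x t ht => by
    rw [← norm_iteratedFDeriv_one]; exact (hM1 x t (by linarith)).trans l1
  have b2 : ∀ x t, a ≤ t → ‖fderiv ℝ (fderiv ℝ U) (x, t)‖ ≤ M := fun x t ht => by
    rw [← norm_iteratedFDeriv_one, norm_iteratedFDeriv_fderiv]
    exact (hM2 x t (by linarith)).trans l2
  have b3 : ∀ x t, a ≤ t → ‖fderiv ℝ (fderiv ℝ (fderiv ℝ U)) (x, t)‖ ≤ M := fun x t ht => by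
    rw [← norm_iteratedFDeriv_one, norm_iteratedFDeriv_fderiv, norm_iteratedFDeriv_fderiv]
    exact (hM3 x t (by linarith)).trans l3
  -- w and its derivatives
  set w : ℝ × ℝ → ℝ := fun z => fderiv ℝ U z (1, 0) with hw
  have dw : ∀ x t, 0 < t → DifferentiableAt ℝ w (x, t) := fun x t ht =>
    (d1 x t ht).clm_apply (differentiableAt_const _)
  have ew : ∀ x t, 0 < t → ∀ c, fderiv ℝ w (x, t) c = fderiv ℝ (fderiv ℝ U) (x, t) c (1, 0) :=
    fun x t ht c => by
      rw [hw, fderiv_clm_apply (d1 x t ht) (differentiableAt_const _)]; simp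
  have bw : ∀ x t, a ≤ t → ‖fderiv ℝ w (x, t)‖ ≤ M := fun x t ht =>
    (fderiv_apply_bound (fderiv ℝ U) (x, t) (1, 0) n10 (d1 x t (by linarith))).trans (b2 x t ht)
  have hxd : ∀ x t, 0 < t → HasDerivAt (fun y => u y t) (w (x, t)) x := fun x t ht =>
    slice_x U x t (s0 x t ht)
  have hwd : ∀ t, 0 < t → deriv (fun y => u y t) = fun x => w (x, t) := fun t ht =>
    funext fun x => (hxd x t ht).deriv
  -- second time derivative
  set w2 : ℝ × ℝ → ℝ := fun z => fderiv ℝ (fderiv ℝ U) z (0, 1) (1, 0) with hw2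
  have dw2a : ∀ x t, 0 < t → DifferentiableAt ℝ (fun z => fderiv ℝ (fderiv ℝ U) z (0, 1)) (x, t) :=
    fun x t ht => (d2 x t ht).clm_apply (differentiableAt_const _)
  have dw2 : ∀ x t, 0 < t → DifferentiableAt ℝ w2 (x, t) := fun x t ht =>
    (dw2a x t ht).clm_apply (differentiableAt_const _)
  have bw2 : ∀ x t, a ≤ t → |fderiv ℝ w2 (x, t) (0, 1)| ≤ M := fun x t ht => by
    have ht0 : 0 < t := by linarith
    have e : fderiv ℝ w2 (x, t) (0, 1) =
        fderiv ℝ (fderiv ℝ (fderiv ℝ U)) (x, t) (0, 1) (0, 1) (1, 0) := by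
      rw [hw2, fderiv_clm_apply (dw2a x t ht0) (differentiableAt_const _),
        fderiv_clm_apply (d2 x t ht0) (differentiableAt_const _)]; simp
    rw [e]
    refine clm_bound _ _ n10 M ?_
    refine (ContinuousLinearMap.le_opNorm _ _).trans ?_
    refine (mul_le_of_le_one_right (norm_nonneg _) n01).trans ?_
    refine (ContinuousLinearMap.le_opNorm _ _).trans ?_
    exact (mul_le_of_le_one_right (norm_nonneg _) n01).trans (b3 x t ht)
  -- maximum points
  have hex : ∀ t, ∃ x0, a ≤ t → ∀ x, w (x, t) ≤ w (x0, t) := by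
    intro t
    by_cases ht : a ≤ t
    · have ht0 : 0 < t := by linarith
      obtain ⟨x0, h⟩ := exists_max (fun y => u y t) (fun x => w (x, t)) M hMnn
        (fun x => hxd x t ht0)
        (fun x => by have := hux0 x t ht0; rw [hwd t ht0] at this; exact this)
        (fun x => (hM0 x t ht0).trans l0)
        (fun x y => by
          have := convex_univ.norm_image_sub_le_of_norm_hasDerivWithin_le (C := M)
            (f := fun x => w (x, t)) (x := y) (y := x)
            (fun r _ => (slice_x w r t (dw r t ht0)).hasDerivWithinAt)
            (fun r _ => clm_bound _ _ n10 M (bw r t ht)) (Set.mem_univ _) (Set.mem_univ _)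
          exact this)
      exact ⟨x0, fun _ => h⟩
    · exact ⟨0, fun h => absurd h ht⟩
  choose X hX using hex
  have hfin : w (X b, b) * (b - a) ≤ 1 := by
    refine riccati (fun t => w (X t, t)) a b M M hab hMnn hMnn ?_ ?_
    · intro s t has hst htb
      have hat : a ≤ t := by linarith
      have ht0 : 0 < t := by linarith
      have key : w2 (X t, t) ≤ - w (X t, t) ^ 2 := by
        have hcd : ContDiff ℝ (⊤ : ℕ∞) (fun y => u y t) := by
          rw [contDiff_iff_contDiffAt]
          intro y
          have h1 : ContDiffAt ℝ (⊤ : ℕ∞) (fun y : ℝ => (y, t)) y :=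
            contDiffAt_id.prodMk contDiffAt_const
          exact (hsmooth y t ht0).comp y h1
        have hut : (fun x => ε * iteratedDeriv 2 (fun y => u y t) x
            + ((∫ z, J z * u (x - z) t) - u x t) - u x t * deriv (fun y => u y t) x)
            = fun x => fderiv ℝ U (x, t) (0, 1) := by
          funext x
          exact (heq x t ht0).unique (slice_t U x t (s0 x t ht0))
        have hsym : fderiv ℝ (fderiv ℝ U) (X t, t) (1, 0) (0, 1) = w2 (X t, t) :=
          ((hsmooth (X t) t ht0).isSymmSndFDerivAt (by
            rw [minSmoothness_of_isRCLikeNormedField]; exact WithTop.coe_le_coe.2 le_top)) (1, 0) (0, 1)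
        have hD : HasDerivAt (fun x => fderiv ℝ U (x, t) (0, 1)) (w2 (X t, t)) (X t) := by
          have := slice_x (fun z => fderiv ℝ U z (0, 1)) (X t) t
            ((d1 (X t) t ht0).clm_apply (differentiableAt_const _))
          rw [fderiv_clm_apply (d1 (X t) t ht0) (differentiableAt_const _)] at this
          rw [← hsym]
          simpa using this
        rw [← hut] at hD
        have := at_max ε hε J hJint hJ1 hJpos (fun y => u y t) hcd M
          (fun x => (hM0 x t ht0).trans l0)
          (fun x => by
            rw [hwd t ht0]; exact clm_bound _ _ n10 M (b1 x t hat))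
          (X t) (fun x => by rw [hwd t ht0]; exact hX t hat x) _ hD
        rw [hwd t ht0] at this
        exact this
      have tay := taylor_bound (fun r => w (X t, r)) (fun r => w2 (X t, r))
        (fun r => fderiv ℝ w2 (X t, r) (0, 1)) s t M hst
        (fun r hr => by
          have hr0 : 0 < r := by linarith [hr.1]
          have := slice_t w (X t) r (dw (X t) r hr0)
          rw [ew _ _ hr0] at this
          exact this)
        (fun r hr => slice_t w2 (X t) r (dw2 (X t) r (by linarith [hr.1])))
        (fun r hr => bw2 (X t) r (by linarith [hr.1]))
      have hmx := hX s has (X t)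
      have := mul_le_mul_of_nonneg_left key (by linarith : 0 ≤ t - s)
      nlinarith
    · intro s t has hst htb
      have := (convex_Icc s t).norm_image_sub_le_of_norm_hasDerivWithin_le (C := M)
            (f := fun r => w (X s, r)) (x := s) (y := t)
            (fun r hr => (slice_t w (X s) r (dw (X s) r (by linarith [hr.1]))).hasDerivWithinAt)
            (fun r hr => clm_bound _ _ n01 M (bw (X s) r (by linarith [hr.1])))
            (Set.left_mem_Icc.2 hst) (Set.right_mem_Icc.2 hst)
      rw [Real.norm_eq_abs, Real.norm_eq_abs, abs_of_nonneg (by linarith : 0 ≤ t - s)] at this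
      have h1 := neg_abs_le (w (X s, t) - w (X s, s))
      have h2 := hX t (by linarith) (X s)
      linarith
  rw [hwd b (by linarith)]
  have := mul_le_mul_of_nonneg_right (hX b hab x) (by linarith : 0 ≤ b - a)
  exact this.trans hfin

/-- `L^p` decay of the spatial derivative: for a bounded, smooth classical
solution `u` of `u_t = ε u_xx + J*u - u - u u_x` with nondecreasing step-like initial datum,
whose spatial derivative is nonnegative, integrable, and of conserved integral
`∫ u_x(·,t) = ∫ u₀'`, one has `‖u_x(·,t)‖_p ≤ t^{-1+1/p} ‖u₀'‖₁^{1/p}` for all `p ∈ [1,∞]`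
and `t > 0`. -/
theorem stmt13 (ε : ℝ) (hε : 0 < ε)
    (J : ℝ → ℝ) (hJint : Integrable J) (hJ2 : Integrable fun x => x ^ 2 * J x)
    (hJ1 : (∫ x, J x) = 1) (hJeven : ∀ x, J (-x) = J x) (hJpos : ∀ x, 0 ≤ J x)
    (um up : ℝ) (hum : um < up)
    (u₀ : ℝ → ℝ)
    (hm : IntegrableOn (fun x => u₀ x - um) (Set.Iio 0))
    (hp : IntegrableOn (fun x => u₀ x - up) (Set.Ioi 0))
    (v : ℝ → ℝ) (hv : Integrable v) (hv0 : ∀ᵐ x ∂(volume : Measure ℝ), 0 ≤ v x)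
    (hu₀v : ∀ x, u₀ x = u₀ 0 + ∫ s in (0 : ℝ)..x, v s)
    (u : ℝ → ℝ → ℝ)
    (hub : ∃ M, ∀ x t, 0 < t → |u x t| ≤ M)
    (hsmooth : ∀ x t, 0 < t → ContDiffAt ℝ (⊤ : ℕ∞) (Function.uncurry u) (x, t))
    (hder : ∀ t₀ > (0 : ℝ), ∀ n : ℕ, ∃ M, ∀ x t, t₀ < t →
      ‖iteratedFDeriv ℝ n (Function.uncurry u) (x, t)‖ ≤ M)
    (heq : ∀ x t, 0 < t →
      HasDerivAt (fun s => u x s)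
        (ε * iteratedDeriv 2 (fun y => u y t) x + ((∫ z, J z * u (x - z) t) - u x t)
          - u x t * deriv (fun y => u y t) x) t)
    (hux0 : ∀ x : ℝ, ∀ t > (0 : ℝ), 0 ≤ deriv (fun y => u y t) x)
    (hux1 : ∀ t > (0 : ℝ), Integrable fun x => deriv (fun y => u y t) x)
    (hcons : ∀ t > (0 : ℝ), (∫ x, deriv (fun y => u y t) x) = ∫ x, v x) :
    ∀ p : ℝ≥0∞, 1 ≤ p → ∀ t > (0 : ℝ),
      eLpNorm (fun x => deriv (fun y => u y t) x) p volume
        ≤ ENNReal.ofReal (t ^ (-1 + p⁻¹.toReal) * (∫ x, |v x|) ^ p⁻¹.toReal) := by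
  intro p hp1 t ht
  refine lp_interp _ (∫ x, |v x|) t ht (hux1 t ht) (fun x => hux0 x t ht) (fun x => ?_) ?_ p hp1
  · have key : ∀ a ∈ Set.Ioo 0 t, deriv (fun y => u y t) x * (t - a) ≤ 1 := fun a ha =>
      sup_bound ε hε J hJint hJ1 hJpos u hub hsmooth hder heq hux0 a t ha.1 ha.2.le x
    have hlim : Tendsto (fun a => deriv (fun y => u y t) x * (t - a)) (nhdsWithin 0 (Set.Ioi 0))
        (nhds (deriv (fun y => u y t) x * (t - 0))) :=
      (Continuous.tendsto (by fun_prop) 0).mono_left nhdsWithin_le_nhds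
    have := le_of_tendsto hlim (by
      filter_upwards [Ioo_mem_nhdsGT ht] with a ha using key a ha)
    rw [le_div_iff₀ ht]
    simpa using this
  · rw [hcons t ht]
    refine integral_congr_ae ?_
    filter_upwards [hv0] with x hx
    rw [abs_of_nonneg hx]
end

section
/- Let ε > 0 and let ℒu = J*u − u with J ∈ L¹(ℝ), |x|²J ∈ L¹(ℝ), ∫_ℝ J dx = 1, J even and nonnegative. Let u₋ < u₊ and let u^ε be the bounded classical solution on ℝ×(0,∞) of u_t = ε u_xx + ℒu − u u_x (smooth with all derivatives bounded on ℝ×(t₀,∞) for every t₀ > 0, nondecreasing in x, and satisfying u^ε(·,t) − w(·,t) ∈ L¹(ℝ) for each t > 0 with ‖u^ε(·,t) − w(·,t)‖₁ bounded as t → 0, where w solves the viscous Burgers Riemann problem with states u₋, u₊) with initial datum u₀ satisfying u₀ − u₋ ∈ L¹((−∞,0)), u₀ − u₊ ∈ L¹((0,∞)), u₀′ ∈ L¹(ℝ), u₀′ ≥ 0 a.e. Then for every p ∈ [1,∞] there exists C = C(p) > 0 independent of t and of ε such that ‖u^ε(·,t) − w^R(·,t)‖_{L^p(ℝ)} ≤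 C t^{−(1−1/p)/2} [log(2+t)]^{(1+1/p)/2} for all t > 0, where w^R is the rarefaction wave. -/
open MeasureTheory Filter
open scoped ENNReal

/-- The heat kernel `G^ε(x,t) = (4πεt)^{-1/2} e^{-x²/(4εt)}`. -/
noncomputable def heatK (ε t y : ℝ) : ℝ :=
  (4 * Real.pi * ε * t) ^ (-(1 : ℝ) / 2) * Real.exp (-(y ^ 2) / (4 * ε * t))

/-- Duhamel integral formulation of `u_t = ε u_xx + J*u - u - u u_x` with initial datum `u₀`. -/
def IsDuhamelSol (ε : ℝ) (J u₀ : ℝ → ℝ) (u : ℝ → ℝ → ℝ) : Prop :=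
  ∀ x t, 0 < t →
    u x t = (∫ y, heatK ε t y * u₀ (x - y))
      + (∫ s in (0 : ℝ)..t, ∫ y, heatK ε (t - s) y *
          ((∫ z, J z * u (x - y - z) s) - u (x - y) s))
      - ∫ s in (0 : ℝ)..t, ∫ y, heatK ε (t - s) y *
          (u (x - y) s * deriv (fun z => u z s) (x - y))

/-- The rarefaction wave with states `um < up` (for `t > 0`). -/
noncomputable def rarefactionWave (um up : ℝ) (x t : ℝ) : ℝ :=
  if x ≤ um * t then um else if up * t ≤ x then up else x / t

/-- The Riemann initial datum with states `um`, `up`. -/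
noncomputable def riemannDatum (um up : ℝ) (x : ℝ) : ℝ :=
  if x < 0 then um else up

/-- A bounded classical solution of the viscous Burgers equation `w_t - w_xx + w w_x = 0`
on `ℝ × (0,∞)` attaining the Riemann datum with states `um`, `up` in `L¹_loc` as `t → 0`
(the smooth approximation of the rarefaction wave). -/
def IsBurgersRiemannSol (um up : ℝ) (w : ℝ → ℝ → ℝ) : Prop :=
  (∃ M, ∀ x t, 0 < t → |w x t| ≤ M) ∧
  (∀ t, 0 < t → ContDiff ℝ 2 fun x => w x t) ∧
  (∀ x t, 0 < t →
    HasDerivAt (fun s => w x s)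
      (iteratedDeriv 2 (fun y => w y t) x - w x t * deriv (fun y => w y t) x) t) ∧
  (∀ R > (0 : ℝ),
    Tendsto (fun t => ∫ x in Set.Icc (-R) R, |w x t - riemannDatum um up x|)
      (nhdsWithin 0 (Set.Ioi 0)) (nhds 0))

section calculus

/-- partial derivative in the space variable -/
noncomputable def dX (F : ℝ × ℝ → ℝ) (p : ℝ × ℝ) : ℝ := fderiv ℝ F p (1, 0)

/-- partial derivative in the time variable -/
noncomputable def dT (F : ℝ × ℝ → ℝ) (p : ℝ × ℝ) : ℝ := fderiv ℝ F p (0, 1)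

lemma hasDerivAt_ray {F : ℝ × ℝ → ℝ} {y c t : ℝ} (h : DifferentiableAt ℝ F (y + c * t, t)) :
    HasDerivAt (fun s => F (y + c * s, s)) (c * dX F (y + c * t, t) + dT F (y + c * t, t)) t := by
  have h1 : HasDerivAt (fun s : ℝ => ((y + c * s, s) : ℝ × ℝ)) ((c, 1) : ℝ × ℝ) t := by
    refine HasDerivAt.prodMk ?_ (hasDerivAt_id t)
    simpa using ((hasDerivAt_id t).const_mul c).const_add y
  have h2 := HasFDerivAt.comp_hasDerivAt (f := fun s : ℝ => ((y + c * s, s) : ℝ × ℝ)) t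
    h.hasFDerivAt h1
  have h3 : ((c, 1) : ℝ × ℝ) = c • ((1, 0) : ℝ × ℝ) + (0, 1) := by simp
  rw [h3, map_add, map_smul, smul_eq_mul] at h2
  exact h2

lemma hasDerivAt_x {F : ℝ × ℝ → ℝ} {x t : ℝ} (h : DifferentiableAt ℝ F (x, t)) :
    HasDerivAt (fun y => F (y, t)) (dX F (x, t)) x := by
  have h1 : HasDerivAt (fun y : ℝ => ((y, t) : ℝ × ℝ)) ((1, 0) : ℝ × ℝ) x :=
    HasDerivAt.prodMk (hasDerivAt_id x) (hasDerivAt_const x t)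
  exact h.hasFDerivAt.comp_hasDerivAt x h1

lemma hasDerivAt_t {F : ℝ × ℝ → ℝ} {x t : ℝ} (h : DifferentiableAt ℝ F (x, t)) :
    HasDerivAt (fun s => F (x, s)) (dT F (x, t)) t := by
  have h1 : HasDerivAt (fun s : ℝ => ((x, s) : ℝ × ℝ)) ((0, 1) : ℝ × ℝ) t :=
    HasDerivAt.prodMk (hasDerivAt_const t x) (hasDerivAt_id t)
  exact h.hasFDerivAt.comp_hasDerivAt t h1

lemma contDiffAt_dX {F : ℝ × ℝ → ℝ} {p : ℝ × ℝ} (h : ContDiffAt ℝ (⊤ : ℕ∞) F p) :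
    ContDiffAt ℝ (⊤ : ℕ∞) (dX F) p := by
  have := h.fderiv_right (m := ((⊤ : ℕ∞) : WithTop ℕ∞)) (by norm_cast)
  exact this.clm_apply contDiffAt_const

lemma contDiffAt_dT {F : ℝ × ℝ → ℝ} {p : ℝ × ℝ} (h : ContDiffAt ℝ (⊤ : ℕ∞) F p) :
    ContDiffAt ℝ (⊤ : ℕ∞) (dT F) p := by
  have := h.fderiv_right (m := ((⊤ : ℕ∞) : WithTop ℕ∞)) (by norm_cast)
  exact this.clm_apply contDiffAt_const

lemma ContDiffAt.diffAt {F : ℝ × ℝ → ℝ} {p : ℝ × ℝ} (h : ContDiffAt ℝ (⊤ : ℕ∞) F p) :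
    DifferentiableAt ℝ F p := h.differentiableAt (by simp)

lemma dT_dX_comm {F : ℝ × ℝ → ℝ} {p : ℝ × ℝ} (h : ContDiffAt ℝ (⊤ : ℕ∞) F p) :
    dT (dX F) p = dX (dT F) p := by
  have hs : IsSymmSndFDerivAt ℝ F p := h.isSymmSndFDerivAt (by
    simp only [minSmoothness_of_isRCLikeNormedField]; 
    exact WithTop.coe_le_coe.2 (le_top : (2 : ℕ∞) ≤ ⊤))
  have hd : DifferentiableAt ℝ (fderiv ℝ F) p :=
    (h.fderiv_right (m := ((⊤ : ℕ∞) : WithTop ℕ∞)) (by norm_cast)).differentiableAt (by simp)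
  have e1 : ∀ e : ℝ × ℝ, fderiv ℝ (fun q => fderiv ℝ F q e) p = (fderiv ℝ (fderiv ℝ F) p).flip e := by
    intro e
    have := (hd.hasFDerivAt.clm_apply (hasFDerivAt_const e p)).fderiv
    rw [this]; ext <;> simp
  unfold dT dX
  rw [e1, e1]
  simpa using hs.eq _ _

lemma abs_dX_le {F : ℝ × ℝ → ℝ} {p : ℝ × ℝ} {K : ℝ} (h : ‖iteratedFDeriv ℝ 1 F p‖ ≤ K) :
    |dX F p| ≤ K := by
  rw [norm_iteratedFDeriv_one] at h
  have := (fderiv ℝ F p).le_opNorm (1, 0)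
  simp only [Real.norm_eq_abs, Prod.norm_mk, norm_one, norm_zero] at this
  unfold dX; simp at this ⊢; linarith

lemma abs_dT_le {F : ℝ × ℝ → ℝ} {p : ℝ × ℝ} {K : ℝ} (h : ‖iteratedFDeriv ℝ 1 F p‖ ≤ K) :
    |dT F p| ≤ K := by
  rw [norm_iteratedFDeriv_one] at h
  have := (fderiv ℝ F p).le_opNorm (0, 1)
  simp only [Real.norm_eq_abs, Prod.norm_mk, norm_one, norm_zero] at this
  unfold dT; simp at this ⊢; linarith

lemma abs_dX_dX_le {F : ℝ × ℝ → ℝ} {p : ℝ × ℝ} {K : ℝ} (hF : ContDiffAt ℝ (⊤ : ℕ∞) F p)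
    (h : ‖iteratedFDeriv ℝ 2 F p‖ ≤ K) : |dX (dX F) p| ≤ K := by
  have hd : DifferentiableAt ℝ (fderiv ℝ F) p :=
    (hF.fderiv_right (m := ((⊤ : ℕ∞) : WithTop ℕ∞)) (by norm_cast)).differentiableAt (by simp)
  have e1 : dX (dX F) p = iteratedFDeriv ℝ 2 F p ![(1, 0), (1, 0)] := by
    rw [iteratedFDeriv_two_apply]
    unfold dX
    have := (hd.hasFDerivAt.clm_apply (hasFDerivAt_const ((1 : ℝ), (0 : ℝ)) p)).fderiv
    rw [this]; simp
  rw [e1]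
  have := (iteratedFDeriv ℝ 2 F p).le_opNorm ![(1, 0), (1, 0)]
  simp [Fin.prod_univ_two, Prod.norm_mk] at this
  exact this.trans h

end calculus

structure Ker (J : ℝ → ℝ) : Prop where
  int : Integrable J
  int2 : Integrable fun x => x ^ 2 * J x
  one : (∫ x, J x) = 1
  even : ∀ x, J (-x) = J x
  pos : ∀ x, 0 ≤ J x

/-- the working set of properties of an admissible solution -/
structure Adm (ε : ℝ) (J : ℝ → ℝ) (um up : ℝ) (u : ℝ → ℝ → ℝ) : Prop where
  eps : 0 < ε
  ker : Ker J
  smooth : ∀ x t, 0 < t → ContDiffAt ℝ (⊤ : ℕ∞) (Function.uncurry u) (x, t)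
  bdd : ∀ t₀ > (0 : ℝ), ∀ n : ℕ, ∃ K, ∀ x t, t₀ < t →
        ‖iteratedFDeriv ℝ n (Function.uncurry u) (x, t)‖ ≤ K
  pde : ∀ x t, 0 < t →
        HasDerivAt (fun s => u x s)
          (ε * iteratedDeriv 2 (fun y => u y t) x + ((∫ z, J z * u (x - z) t) - u x t)
            - u x t * deriv (fun y => u y t) x) t
  mono : ∀ t > (0 : ℝ), Monotone fun x => u x t
  bot : ∀ t > (0 : ℝ), Tendsto (fun x => u x t) atBot (nhds um)
  top : ∀ t > (0 : ℝ), Tendsto (fun x => u x t) atTop (nhds up)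

namespace Adm

variable {ε : ℝ} {J : ℝ → ℝ} {um up : ℝ} {u : ℝ → ℝ → ℝ}

lemma ge (A : Adm ε J um up u) (x : ℝ) {t : ℝ} (ht : 0 < t) : um ≤ u x t :=
  (A.mono t ht).le_of_tendsto (A.bot t ht) x

lemma le (A : Adm ε J um up u) (x : ℝ) {t : ℝ} (ht : 0 < t) : u x t ≤ up :=
  (A.mono t ht).ge_of_tendsto (A.top t ht) x

lemma abs_le (A : Adm ε J um up u) (x : ℝ) {t : ℝ} (ht : 0 < t) : |u x t| ≤ max |um| |up| :=
  abs_le_max_abs_abs (A.ge x ht) (A.le x ht)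

lemma hx (A : Adm ε J um up u) (x : ℝ) {t : ℝ} (ht : 0 < t) :
    HasDerivAt (fun y => u y t) (dX (Function.uncurry u) (x, t)) x :=
  hasDerivAt_x (F := Function.uncurry u) (A.smooth x t ht).diffAt

lemma hxx (A : Adm ε J um up u) (x : ℝ) {t : ℝ} (ht : 0 < t) :
    HasDerivAt (fun y => dX (Function.uncurry u) (y, t)) (dX (dX (Function.uncurry u)) (x, t)) x :=
  hasDerivAt_x (contDiffAt_dX (A.smooth x t ht)).diffAt

lemma hxxx (A : Adm ε J um up u) (x : ℝ) {t : ℝ} (ht : 0 < t) :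
    HasDerivAt (fun y => dX (dX (Function.uncurry u)) (y, t))
      (dX (dX (dX (Function.uncurry u))) (x, t)) x :=
  hasDerivAt_x (contDiffAt_dX (contDiffAt_dX (A.smooth x t ht))).diffAt

lemma cont (A : Adm ε J um up u) {t : ℝ} (ht : 0 < t) : Continuous fun y => u y t :=
  continuous_iff_continuousAt.2 fun x => (A.hx x ht).continuousAt

lemma cont_ux (A : Adm ε J um up u) {t : ℝ} (ht : 0 < t) :
    Continuous fun y => dX (Function.uncurry u) (y, t) :=
  continuous_iff_continuousAt.2 fun x => (A.hxx x ht).continuousAt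

lemma ux_nonneg (A : Adm ε J um up u) (x : ℝ) {t : ℝ} (ht : 0 < t) :
    0 ≤ dX (Function.uncurry u) (x, t) := by
  rw [← (A.hx x ht).deriv]
  exact (A.mono t ht).deriv_nonneg

lemma eqn (A : Adm ε J um up u) (x : ℝ) {t : ℝ} (ht : 0 < t) :
    dT (Function.uncurry u) (x, t) = ε * dX (dX (Function.uncurry u)) (x, t)
      + ((∫ z, J z * u (x - z) t) - u x t) - u x t * dX (Function.uncurry u) (x, t) := by
  have h1 : HasDerivAt (fun s => u x s) (dT (Function.uncurry u) (x, t)) t :=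
    hasDerivAt_t (F := Function.uncurry u) (A.smooth x t ht).diffAt
  rw [h1.unique (A.pde x t ht), (A.hx x ht).deriv, iteratedDeriv_succ, iteratedDeriv_one]
  have : deriv (fun y => u y t) = fun y => dX (Function.uncurry u) (y, t) :=
    funext fun y => (A.hx y ht).deriv
  rw [this, (A.hxx x ht).deriv]

lemma ux_bdd (A : Adm ε J um up u) {t₀ : ℝ} (ht : 0 < t₀) :
    ∃ K, 0 ≤ K ∧ ∀ x t, t₀ < t → |dX (Function.uncurry u) (x, t)| ≤ K ∧
      |dT (Function.uncurry u) (x, t)| ≤ K ∧ |dX (dX (Function.uncurry u)) (x, t)| ≤ K := by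
  obtain ⟨K1, h1⟩ := A.bdd t₀ ht 1
  obtain ⟨K2, h2⟩ := A.bdd t₀ ht 2
  refine ⟨max (max K1 K2) 0, le_max_right _ _, fun x t h => ⟨?_, ?_, ?_⟩⟩
  · exact abs_dX_le ((h1 x t h).trans (by simp))
  · exact abs_dT_le ((h1 x t h).trans (by simp))
  · exact abs_dX_dX_le (A.smooth x t (ht.trans h)) ((h2 x t h).trans (by simp))

lemma int_mul (A : Adm ε J um up u) (x : ℝ) {t : ℝ} (ht : 0 < t) :
    Integrable fun z => J z * u (x - z) t := by
  have hc : Continuous fun z => u (x - z) t := (A.cont ht).comp (continuous_const.sub continuous_id)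
  exact A.ker.int.mul_bdd (c := max |um| |up|) hc.aestronglyMeasurable
    (Eventually.of_forall fun z => A.abs_le _ ht)

lemma int_mul_ux (A : Adm ε J um up u) (x : ℝ) {t : ℝ} (ht : 0 < t) :
    Integrable fun z => J z * dX (Function.uncurry u) (x - z, t) := by
  have hc : Continuous fun z => dX (Function.uncurry u) (x - z, t) :=
    (A.cont_ux ht).comp (continuous_const.sub continuous_id)
  obtain ⟨K, -, hK⟩ := A.ux_bdd (half_pos ht)
  exact A.ker.int.mul_bdd (c := K) hc.aestronglyMeasurable
    (Eventually.of_forall fun z => (hK _ t (by linarith)).1)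

lemma hconv (A : Adm ε J um up u) (x : ℝ) {t : ℝ} (ht : 0 < t) :
    HasDerivAt (fun y => ∫ z, J z * u (y - z) t) 
      (∫ z, J z * dX (Function.uncurry u) (x - z, t)) x := by
  obtain ⟨K, hK0, hK⟩ := A.ux_bdd (half_pos ht)
  refine (hasDerivAt_integral_of_dominated_loc_of_deriv_le (μ := volume)
    (F := fun y z => J z * u (y - z) t)
    (F' := fun y z => J z * dX (Function.uncurry u) (y - z, t)) (s := Set.univ)
    (bound := fun z => J z * K) univ_mem ?_ (A.int_mul x ht) (A.int_mul_ux x ht).1 ?_ ?_ ?_).2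
  · exact Eventually.of_forall fun y => (A.int_mul y ht).1
  · refine Eventually.of_forall fun z y _ => ?_
    rw [norm_mul, Real.norm_eq_abs, Real.norm_eq_abs, abs_of_nonneg (A.ker.pos z)]
    exact mul_le_mul_of_nonneg_left (hK _ t (by linarith)).1 (A.ker.pos z)
  · exact A.ker.int.mul_const K
  · refine Eventually.of_forall fun z y _ => ?_
    have := (A.hx (y - z) ht).comp_sub_const y z
    exact this.const_mul (J z)

lemma eqn_x (A : Adm ε J um up u) (x : ℝ) {t : ℝ} (ht : 0 < t) :
    dT (dX (Function.uncurry u)) (x, t) = ε * dX (dX (dX (Function.uncurry u))) (x, t)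
      + ((∫ z, J z * dX (Function.uncurry u) (x - z, t)) - dX (Function.uncurry u) (x, t))
      - (dX (Function.uncurry u) (x, t) * dX (Function.uncurry u) (x, t)
        + u x t * dX (dX (Function.uncurry u)) (x, t)) := by
  rw [dT_dX_comm (A.smooth x t ht)]
  have h1 : HasDerivAt (fun y => dT (Function.uncurry u) (y, t))
      (dX (dT (Function.uncurry u)) (x, t)) x :=
    hasDerivAt_x (contDiffAt_dT (A.smooth x t ht)).diffAt
  have h2 := (((A.hxxx x ht).const_mul ε).add ((A.hconv x ht).sub (A.hx x ht))).sub
    ((A.hx x ht).mul (A.hxx x ht))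
  refine h1.unique (h2.congr_of_eventuallyEq (Eventually.of_forall fun y => ?_))
  exact A.eqn y ht

end Adm

lemma second_deriv_nonpos {f f' : ℝ → ℝ} {a f'' : ℝ} (h1 : ∀ x, HasDerivAt f (f' x) x)
    (h2 : HasDerivAt f' f'' a) (hmax : ∀ x, f x ≤ f a) : f' a = 0 ∧ f'' ≤ 0 := by
  have hM : IsLocalMax f a := Eventually.of_forall hmax
  have h0 : f' a = 0 := hM.hasDerivAt_eq_zero (h1 a)
  refine ⟨h0, ?_⟩
  by_contra! hpos
  have e1 : deriv f = f' := funext fun x => (h1 x).deriv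
  have hm : IsLocalMin f a := isLocalMin_of_deriv_deriv_pos (by rw [e1, h2.deriv]; exact hpos)
    (by rw [e1, h0]) (h1 a).continuousAt
  have hc : f =ᶠ[nhds a] fun _ => f a := by
    filter_upwards [hM, hm] with x hx hx'
    exact le_antisymm hx hx'
  have := hc.deriv.deriv.eq_of_nhds
  rw [e1, h2.deriv] at this
  simp at this
  linarith

lemma deriv_nonneg_of_left_max {f : ℝ → ℝ} {f' a b : ℝ} (hab : a < b) (h : HasDerivAt f f' b)
    (hmax : ∀ s ∈ Set.Icc a b, f s ≤ f b) : 0 ≤ f' := by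
  have h1 := (hasDerivAt_iff_tendsto_slope.1 h).mono_left
    (nhdsWithin_mono b (fun x (hx : x < b) => ne_of_lt hx) : nhdsWithin b (Set.Iio b) ≤ _)
  refine ge_of_tendsto h1 ?_
  filter_upwards [Ioo_mem_nhdsLT hab] with s hs
  rw [slope_def_field]
  exact div_nonneg_of_nonpos (by linarith [hmax s ⟨hs.1.le, hs.2.le⟩]) (by linarith [hs.2])

namespace Adm

variable {ε : ℝ} {J : ℝ → ℝ} {um up : ℝ} {u : ℝ → ℝ → ℝ}

lemma cont_t (A : Adm ε J um up u) (x : ℝ) {t : ℝ} (ht : 0 < t) :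
    ContinuousAt (fun s => u x s) t := (A.pde x t ht).continuousAt

lemma unif_top (A : Adm ε J um up u) {a b η : ℝ} (ha : 0 < a) (hη : 0 < η) :
    ∃ X, ∀ x ≥ X, ∀ t ∈ Set.Icc a b, up - η < u x t := by
  refine isCompact_Icc.induction_on (p := fun s => ∃ X, ∀ x ≥ X, ∀ t ∈ s, up - η < u x t)
    ⟨0, by simp⟩ ?_ ?_ ?_
  · rintro s s' hs ⟨X, hX⟩
    exact ⟨X, fun x hx t ht => hX x hx t (hs ht)⟩
  · rintro s s' ⟨X, hX⟩ ⟨X', hX'⟩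
    refine ⟨max X X', fun x hx t ht => ?_⟩
    rcases ht with ht | ht
    · exact hX x (le_trans (le_max_left _ _) hx) t ht
    · exact hX' x (le_trans (le_max_right _ _) hx) t ht
  · intro t ht
    have ht0 : 0 < t := lt_of_lt_of_le ha ht.1
    obtain ⟨X, hX⟩ := ((A.top t ht0).eventually (lt_mem_nhds (by linarith : up - η < up))).exists
    have h1 : ∀ᶠ s in nhds t, up - η < u X s := (A.cont_t X ht0).eventually (lt_mem_nhds hX)
    refine ⟨_, mem_nhdsWithin_of_mem_nhds (inter_mem h1 (lt_mem_nhds ht0)), X, ?_⟩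
    intro x hx s hs
    exact lt_of_lt_of_le hs.1 (A.mono s hs.2 hx)

lemma unif_bot (A : Adm ε J um up u) {a b η : ℝ} (ha : 0 < a) (hη : 0 < η) :
    ∃ X, ∀ x ≤ X, ∀ t ∈ Set.Icc a b, u x t < um + η := by
  refine isCompact_Icc.induction_on (p := fun s => ∃ X, ∀ x ≤ X, ∀ t ∈ s, u x t < um + η)
    ⟨0, by simp⟩ ?_ ?_ ?_
  · rintro s s' hs ⟨X, hX⟩
    exact ⟨X, fun x hx t ht => hX x hx t (hs ht)⟩
  · rintro s s' ⟨X, hX⟩ ⟨X', hX'⟩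
    refine ⟨min X X', fun x hx t ht => ?_⟩
    rcases ht with ht | ht
    · exact hX x (le_trans hx (min_le_left _ _)) t ht
    · exact hX' x (le_trans hx (min_le_right _ _)) t ht
  · intro t ht
    have ht0 : 0 < t := lt_of_lt_of_le ha ht.1
    obtain ⟨X, hX⟩ := ((A.bot t ht0).eventually (gt_mem_nhds (by linarith : um < um + η))).exists
    have h1 : ∀ᶠ s in nhds t, u X s < um + η := (A.cont_t X ht0).eventually (gt_mem_nhds hX)
    refine ⟨_, mem_nhdsWithin_of_mem_nhds (inter_mem h1 (lt_mem_nhds ht0)), X, ?_⟩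
    intro x hx s hs
    exact lt_of_le_of_lt (A.mono s hs.2 hx) hs.1

lemma ux_le_diff (A : Adm ε J um up u) {x t s K : ℝ} (ht : 0 < t) (hs : 0 < s)
    (hK : ∀ y, |dX (dX (Function.uncurry u)) (y, t)| ≤ K) :
    dX (Function.uncurry u) (x, t) ≤ (u (x + s) t - u x t) / s + K * s := by
  obtain ⟨c, hc, hc'⟩ := exists_hasDerivAt_eq_slope (fun y => u y t)
    (fun y => dX (Function.uncurry u) (y, t)) (by linarith : x < x + s) (A.cont ht).continuousOn
    (fun y _ => A.hx y ht)
  rw [add_sub_cancel_left] at hc'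
  rw [← hc']
  have := Convex.norm_image_sub_le_of_norm_hasDerivWithin_le (f := fun y => dX (Function.uncurry u) (y, t))
    (f' := fun y => dX (dX (Function.uncurry u)) (y, t)) (s := Set.univ) (C := K) (x := c) (y := x)
    (fun y _ => (A.hxx y ht).hasDerivWithinAt) (fun y _ => hK y) convex_univ trivial trivial
  have hK0 : 0 ≤ K := (abs_nonneg _).trans (hK 0)
  rw [Real.norm_eq_abs, Real.norm_eq_abs] at this
  have h2 : |x - c| ≤ s := by rw [_root_.abs_le]; constructor <;> linarith [hc.1, hc.2]
  have h3 := mul_le_mul_of_nonneg_left h2 hK0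
  linarith [le_abs_self (dX (Function.uncurry u) (x, t) - dX (Function.uncurry u) (c, t))]

lemma ux_decay (A : Adm ε J um up u) {a b η : ℝ} (ha : 0 < a) (hη : 0 < η) :
    ∃ X, ∀ x, X ≤ |x| → ∀ t ∈ Set.Icc a b, dX (Function.uncurry u) (x, t) ≤ η := by
  obtain ⟨K, hK0, hK⟩ := A.ux_bdd (half_pos ha)
  set s := η / (2 * (K + 1)) with hs
  have hs0 : 0 < s := by positivity
  obtain ⟨X1, h1⟩ := A.unif_top (b := b) (η := η * s / 2) ha (by positivity)
  obtain ⟨X2, h2⟩ := A.unif_bot (b := b) (η := η * s / 2) ha (by positivity)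
  refine ⟨max X1 (-X2 + s), fun x hx t ht => ?_⟩
  have ht0 : 0 < t := lt_of_lt_of_le ha ht.1
  have h3 := A.ux_le_diff (x := x) (s := s) (K := K) ht0 hs0 
    (fun y => (hK y t (by linarith [ht.1])).2.2)
  have h4 : K * s ≤ η / 2 := by
    rw [hs, mul_div_assoc', div_le_div_iff₀ (by positivity) (by positivity)]
    nlinarith
  have h5 : u (x + s) t - u x t ≤ η * s / 2 := by
    rcases le_total 0 x with h | h
    · rw [abs_of_nonneg h] at hx
      linarith [h1 x ((le_max_left _ _).trans hx) t ht, A.le (x + s) ht0]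
    · rw [abs_of_nonpos h] at hx
      have := (le_max_right _ _).trans hx
      linarith [h2 (x + s) (by linarith) t ht, A.ge x ht0]
  have h6 : (u (x + s) t - u x t) / s ≤ η / 2 := by
    rw [div_le_iff₀ hs0]; linarith
  linarith

lemma oleinik_aux (A : Adm ε J um up u) {a T : ℝ} (ha : 0 < a) (haT : a < T) (x₀ : ℝ) :
    (T - a) * dX (Function.uncurry u) (x₀, T) ≤ 1 := by
  by_contra! hcon
  have hTa : 0 < T - a := by linarith
  obtain ⟨X, hX⟩ := A.ux_decay (b := T) (η := 1 / (T - a)) ha (by positivity)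
  set X' := max X |x₀| with hX'
  have hcomp : IsCompact (Set.Icc (-X') X' ×ˢ Set.Icc a T) := isCompact_Icc.prod isCompact_Icc
  have hx₀ : (x₀, T) ∈ Set.Icc (-X') X' ×ˢ Set.Icc a T := by
    have : |x₀| ≤ X' := le_max_right _ _
    rw [_root_.abs_le] at this
    exact ⟨this, haT.le, le_rfl⟩
  have hcont : ContinuousOn (fun p : ℝ × ℝ => (p.2 - a) * dX (Function.uncurry u) p)
      (Set.Icc (-X') X' ×ˢ Set.Icc a T) := by
    intro p hp
    refine ContinuousAt.continuousWithinAt ?_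
    refine (continuous_snd.sub continuous_const).continuousAt.mul ?_
    exact (contDiffAt_dX (A.smooth p.1 p.2 (lt_of_lt_of_le ha hp.2.1))).continuousAt
  obtain ⟨⟨y, t⟩, ⟨hy, ht⟩, hmax⟩ := hcomp.exists_isMaxOn ⟨_, hx₀⟩ hcont
  have hgt : 1 < (t - a) * dX (Function.uncurry u) (y, t) := lt_of_lt_of_le hcon (hmax hx₀)
  have ht0 : 0 < t := lt_of_lt_of_le ha ht.1
  have hat : a < t := by
    rcases eq_or_lt_of_le ht.1 with h | h
    · simp only at h; subst h; simp at hgt; linarith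
    · exact h
  have hglob : ∀ x s, s ∈ Set.Icc a T → (s - a) * dX (Function.uncurry u) (x, s)
      ≤ (t - a) * dX (Function.uncurry u) (y, t) := by
    intro x s hs
    by_cases hxX : |x| ≤ X'
    · exact hmax (show (x, s) ∈ _ from ⟨_root_.abs_le.1 hxX, hs⟩)
    · have h1 := hX x ((le_max_left _ _).trans (not_le.1 hxX).le) s hs
      have h2 : (s - a) * dX (Function.uncurry u) (x, s) ≤ (T - a) * (1 / (T - a)) :=
        mul_le_mul (by linarith [hs.2]) h1 (A.ux_nonneg x (lt_of_lt_of_le ha hs.1)) hTa.le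
      rw [mul_one_div_cancel hTa.ne'] at h2
      linarith
  have hta : 0 < t - a := by linarith
  have hxmax : ∀ x, dX (Function.uncurry u) (x, t) ≤ dX (Function.uncurry u) (y, t) := fun x =>
    le_of_mul_le_mul_left (hglob x t ht) hta
  obtain ⟨e1, e2⟩ := second_deriv_nonpos (fun x => A.hxx x ht0) (A.hxxx y ht0) hxmax
  have e3 : (∫ z, J z * dX (Function.uncurry u) (y - z, t)) ≤ dX (Function.uncurry u) (y, t) := by
    calc (∫ z, J z * dX (Function.uncurry u) (y - z, t)) 
        ≤ ∫ z, J z * dX (Function.uncurry u) (y, t) := by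
          refine integral_mono (A.int_mul_ux y ht0) (A.ker.int.mul_const _) fun z => ?_
          exact mul_le_mul_of_nonneg_left (hxmax _) (A.ker.pos z)
      _ = _ := by rw [integral_mul_const, A.ker.one, one_mul]
  have hv0 : 0 < dX (Function.uncurry u) (y, t) := by
    by_contra! h
    nlinarith
  have e4 := A.eqn_x y ht0
  rw [e1] at e4
  have hd : HasDerivAt (fun s => (s - a) * dX (Function.uncurry u) (y, s))
      (1 * dX (Function.uncurry u) (y, t) + (t - a) * dT (dX (Function.uncurry u)) (y, t)) t :=
    ((hasDerivAt_id t).sub_const a).mul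
      (hasDerivAt_t (contDiffAt_dX (A.smooth y t ht0)).diffAt)
  have e5 := deriv_nonneg_of_left_max hat hd
    (fun s hs => hglob y s ⟨hs.1, hs.2.trans ht.2⟩)
  have e6 : ε * dX (dX (dX (Function.uncurry u))) (y, t) ≤ 0 :=
    mul_nonpos_of_nonneg_of_nonpos A.eps.le e2
  have e7 : dT (dX (Function.uncurry u)) (y, t)
      ≤ - (dX (Function.uncurry u) (y, t) * dX (Function.uncurry u) (y, t)) := by linarith
  nlinarith

/-- Oleinik's estimate. -/
lemma oleinik (A : Adm ε J um up u) {t : ℝ} (ht : 0 < t) (x : ℝ) :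
    dX (Function.uncurry u) (x, t) ≤ 1 / t := by
  rw [le_div_iff₀ ht]
  have h1 : Tendsto (fun a => (t - a) * dX (Function.uncurry u) (x, t)) (nhdsWithin 0 (Set.Ioi 0))
      (nhds ((t - 0) * dX (Function.uncurry u) (x, t))) := by
    refine Tendsto.mono_left ?_ nhdsWithin_le_nhds
    exact ((continuous_const.sub continuous_id).mul continuous_const).tendsto _
  have := le_of_tendsto h1 (b := 1) (by
    filter_upwards [Ioo_mem_nhdsGT ht] with a ha
    exact A.oleinik_aux ha.1 ha.2 x)
  linarith

lemma slope_le (A : Adm ε J um up u) {t : ℝ} (ht : 0 < t) :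
    Antitone fun x => u x t - x / t := by
  refine antitone_of_hasDerivAt_nonpos (f' := fun x => dX (Function.uncurry u) (x, t) - 1 / t)
    (fun x => (A.hx x ht).sub ((hasDerivAt_id x).div_const t)) fun x => ?_
  simpa using A.oleinik ht x

end Adm

lemma second_diff_nonneg {g g' : ℝ → ℝ} (h : ∀ x, HasDerivAt g (g' x) x) (hm : Monotone g')
    (x z : ℝ) : 0 ≤ g (x + z) + g (x - z) - 2 * g x := by
  have hc : ConvexOn ℝ Set.univ g := by
    refine Monotone.convexOn_univ_of_deriv (fun x => (h x).differentiableAt) ?_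
    rwa [funext fun x => (h x).deriv]
  have := hc.2 (Set.mem_univ (x + z)) (Set.mem_univ (x - z)) (show (0 : ℝ) ≤ 1 / 2 by norm_num)
    (show (0 : ℝ) ≤ 1 / 2 by norm_num) (by norm_num)
  simp only [smul_eq_mul] at this
  have e : 1 / 2 * (x + z) + 1 / 2 * (x - z) = x := by ring
  rw [e] at this
  linarith

/-- space primitive -/
noncomputable def primU (u : ℝ → ℝ → ℝ) (t x : ℝ) : ℝ := ∫ y in (0 : ℝ)..x, u y t

/-- nonlocal flux -/
noncomputable def Qf (J : ℝ → ℝ) (u : ℝ → ℝ → ℝ) (t x : ℝ) : ℝ :=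
  (1 / 2) * ∫ z, J z * (primU u t (x + z) + primU u t (x - z) - 2 * primU u t x)

namespace Adm

variable {ε : ℝ} {J : ℝ → ℝ} {um up : ℝ} {u : ℝ → ℝ → ℝ}

lemma hprim (A : Adm ε J um up u) {t : ℝ} (ht : 0 < t) (x : ℝ) :
    HasDerivAt (primU u t) (u x t) x :=
  intervalIntegral.integral_hasDerivAt_right ((A.cont ht).intervalIntegrable _ _)
    ((A.cont ht).stronglyMeasurableAtFilter _ _) (A.cont ht).continuousAt

lemma cont_prim (A : Adm ε J um up u) {t : ℝ} (ht : 0 < t) : Continuous (primU u t) :=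
  continuous_iff_continuousAt.2 fun x => (A.hprim ht x).continuousAt

lemma sd_nonneg (A : Adm ε J um up u) {t : ℝ} (ht : 0 < t) (x z : ℝ) :
    0 ≤ primU u t (x + z) + primU u t (x - z) - 2 * primU u t x :=
  second_diff_nonneg (A.hprim ht) (A.mono t ht) x z

lemma sd_le (A : Adm ε J um up u) {t : ℝ} (ht : 0 < t) (x z : ℝ) :
    primU u t (x + z) + primU u t (x - z) - 2 * primU u t x ≤ z ^ 2 / t := by
  have := second_diff_nonneg (g := fun y => y ^ 2 / (2 * t) - primU u t y)
    (g' := fun y => y / t - u y t) (fun y => by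
      have h1 := (((hasDerivAt_pow 2 y).div_const (2 * t))).sub (A.hprim ht y)
      refine h1.congr_deriv ?_
      push_cast; field_simp) (fun y y' h => by
      have := A.slope_le ht h
      simp only at this ⊢
      linarith) x z
  have e : (x + z) ^ 2 / (2 * t) + (x - z) ^ 2 / (2 * t) - 2 * (x ^ 2 / (2 * t)) = z ^ 2 / t := by
    field_simp; ring
  linarith

lemma int_sd (A : Adm ε J um up u) {t : ℝ} (ht : 0 < t) (x : ℝ) :
    Integrable fun z => J z * (primU u t (x + z) + primU u t (x - z) - 2 * primU u t x) := by
  have hc : Continuous fun z => primU u t (x + z) + primU u t (x - z) - 2 * primU u t x := by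
    have := A.cont_prim ht
    fun_prop
  refine (A.ker.int2.div_const t).mono (A.ker.int.1.mul hc.aestronglyMeasurable)
    (Eventually.of_forall fun z => ?_)
  have h0 := A.sd_nonneg ht x z
  have hJ := A.ker.pos z
  rw [Real.norm_of_nonneg (mul_nonneg hJ h0), Real.norm_of_nonneg (by positivity)]
  calc _ ≤ J z * (z ^ 2 / t) := mul_le_mul_of_nonneg_left (A.sd_le ht x z) hJ
    _ = _ := by ring

lemma Q_nonneg (A : Adm ε J um up u) {t : ℝ} (ht : 0 < t) (x : ℝ) : 0 ≤ Qf J u t x := by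
  unfold Qf
  exact mul_nonneg (by norm_num)
    (integral_nonneg fun z => mul_nonneg (A.ker.pos z) (A.sd_nonneg ht x z))

lemma Q_le (A : Adm ε J um up u) {t : ℝ} (ht : 0 < t) (x : ℝ) :
    2 * Qf J u t x ≤ (∫ z, z ^ 2 * J z) / t := by
  unfold Qf
  rw [← integral_div]
  have : (∫ z, J z * (primU u t (x + z) + primU u t (x - z) - 2 * primU u t x))
      ≤ ∫ z, z ^ 2 * J z / t := by
    refine integral_mono (A.int_sd ht x) (A.ker.int2.div_const t) fun z => ?_
    calc _ ≤ J z * (z ^ 2 / t) := mul_le_mul_of_nonneg_left (A.sd_le ht x z) (A.ker.pos z)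
      _ = _ := by ring
  linarith

lemma int_mul' (A : Adm ε J um up u) (x : ℝ) {t : ℝ} (ht : 0 < t) :
    Integrable fun z => J z * u (x + z) t := by
  have hc : Continuous fun z => u (x + z) t := (A.cont ht).comp (continuous_const.add continuous_id)
  exact A.ker.int.mul_bdd (c := max |um| |up|) hc.aestronglyMeasurable
    (Eventually.of_forall fun z => A.abs_le _ ht)

lemma hQ (A : Adm ε J um up u) {t : ℝ} (ht : 0 < t) (x : ℝ) :
    HasDerivAt (Qf J u t) ((∫ z, J z * u (x - z) t) - u x t) x := by
  have key := (hasDerivAt_integral_of_dominated_loc_of_deriv_le (μ := volume) (x₀ := x)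
    (F := fun y z => J z * (primU u t (y + z) + primU u t (y - z) - 2 * primU u t y))
    (F' := fun y z => J z * (u (y + z) t + u (y - z) t - 2 * u y t)) (s := Set.univ)
    (bound := fun z => J z * (4 * max |um| |up|)) univ_mem
    (Eventually.of_forall fun y => (A.int_sd ht y).1) (A.int_sd ht x)
    (by
      have hc : Continuous fun z => u (x + z) t + u (x - z) t - 2 * u x t := by
        have := A.cont ht
        exact ((this.comp (continuous_const.add continuous_id)).add
          (this.comp (continuous_const.sub continuous_id))).sub continuous_const
      exact A.ker.int.1.mul hc.aestronglyMeasurable)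
    (by
      refine Eventually.of_forall fun z y _ => ?_
      rw [norm_mul, Real.norm_eq_abs, Real.norm_eq_abs, abs_of_nonneg (A.ker.pos z)]
      refine mul_le_mul_of_nonneg_left ?_ (A.ker.pos z)
      have h1 := _root_.abs_le.1 (A.abs_le (y + z) ht)
      have h2 := _root_.abs_le.1 (A.abs_le (y - z) ht)
      have h3 := _root_.abs_le.1 (A.abs_le y ht)
      rw [_root_.abs_le]; constructor <;> linarith)
    (A.ker.int.mul_const _)
    (by
      refine Eventually.of_forall fun z y _ => ?_
      refine HasDerivAt.const_mul (J z) ?_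
      exact (((A.hprim ht (y + z)).comp_add_const y z).add
        ((A.hprim ht (y - z)).comp_sub_const y z)).sub ((A.hprim ht y).const_mul 2))).2
  have key2 := key.const_mul (1 / 2)
  refine key2.congr_deriv ?_
  have e1 : (∫ z, J z * (u (x + z) t + u (x - z) t - 2 * u x t))
      = (∫ z, J z * u (x + z) t) + (∫ z, J z * u (x - z) t) - 2 * u x t := by
    have : (fun z => J z * (u (x + z) t + u (x - z) t - 2 * u x t))
      = fun z => (J z * u (x + z) t + J z * u (x - z) t) - J z * (2 * u x t) := by
      funext z; ring
    rw [this, integral_sub (f := fun z => J z * u (x + z) t + J z * u (x - z) t)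
      ((A.int_mul' x ht).add (A.int_mul x ht)) (A.ker.int.mul_const _),
      integral_add (A.int_mul' x ht) (A.int_mul x ht), integral_mul_const, A.ker.one, one_mul]
  have e2 : (∫ z, J z * u (x + z) t) = ∫ z, J z * u (x - z) t := by
    rw [← integral_neg_eq_self (fun z => J z * u (x + z) t)]
    congr 1; funext z
    rw [A.ker.even, sub_eq_add_neg]
  rw [e1, e2]; ring

end Adm

/-- total flux in the moving frame -/
noncomputable def Phi (ε : ℝ) (J : ℝ → ℝ) (u : ℝ → ℝ → ℝ) (c t x : ℝ) : ℝ :=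
  ε * dX (Function.uncurry u) (x, t) + Qf J u t x - (1 / 2) * (u x t) ^ 2 + c * u x t

namespace Adm

variable {ε : ℝ} {J : ℝ → ℝ} {um up : ℝ} {u : ℝ → ℝ → ℝ}

lemma hPhi (A : Adm ε J um up u) {t : ℝ} (ht : 0 < t) (c x : ℝ) :
    HasDerivAt (Phi ε J u c t)
      (c * dX (Function.uncurry u) (x, t) + dT (Function.uncurry u) (x, t)) x := by
  have h := ((((A.hxx x ht).const_mul ε).add (A.hQ ht x)).sub
    (((A.hx x ht).pow 2).const_mul (1 / 2))).add ((A.hx x ht).const_mul c)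
  refine h.congr_deriv ?_
  rw [A.eqn x ht]; push_cast; ring

lemma hflow (A : Adm ε J um up u) {t : ℝ} (ht : 0 < t) (c a b : ℝ) :
    HasDerivAt (fun s => ∫ y in a..b, u (y + c * s) s)
      (Phi ε J u c t (b + c * t) - Phi ε J u c t (a + c * t)) t := by
  obtain ⟨K, hK0, hK⟩ := A.ux_bdd (half_pos ht)
  have hcont : Continuous fun y => c * dX (Function.uncurry u) (y + c * t, t)
        + dT (Function.uncurry u) (y + c * t, t) := by
    refine continuous_iff_continuousAt.2 fun y => ?_
    have h1 := ((contDiffAt_dX (A.smooth (y + c * t) t ht)).continuousAt.const_mul c).add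
      (contDiffAt_dT (A.smooth (y + c * t) t ht)).continuousAt
    exact ContinuousAt.comp (f := fun y : ℝ => ((y + c * t, t) : ℝ × ℝ)) h1 (by fun_prop)
  have hci : ∀ s > 0, Continuous fun y => u (y + c * s) s := fun s hs =>
    (A.cont hs).comp (continuous_id.add continuous_const)
  have key := (intervalIntegral.hasDerivAt_integral_of_dominated_loc_of_deriv_le (μ := volume)
    (a := a) (b := b) (x₀ := t) (F := fun s y => u (y + c * s) s)
    (F' := fun s y => c * dX (Function.uncurry u) (y + c * s, s)
        + dT (Function.uncurry u) (y + c * s, s)) (s := Set.Ioi (t / 2))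
    (bound := fun _ => |c| * K + K) (Ioi_mem_nhds (by linarith))
    (by
      filter_upwards [lt_mem_nhds ht] with s hs
      exact (hci s hs).aestronglyMeasurable)
    ((hci t ht).intervalIntegrable _ _) hcont.aestronglyMeasurable
    (Eventually.of_forall fun y _ s hs => by
      obtain ⟨h1, h2, -⟩ := hK (y + c * s) s hs
      refine (norm_add_le _ _).trans (add_le_add ?_ h2)
      rw [norm_mul]
      exact mul_le_mul_of_nonneg_left h1 (norm_nonneg _))
    intervalIntegrable_const
    (Eventually.of_forall fun y _ s hs => by
      exact hasDerivAt_ray (F := Function.uncurry u)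
        (A.smooth _ s ((half_pos ht).trans hs)).diffAt)).2
  refine key.congr_deriv ?_
  refine intervalIntegral.integral_eq_sub_of_hasDerivAt (f := fun y => Phi ε J u c t (y + c * t))
    (fun y _ => ?_) (hcont.intervalIntegrable _ _)
  exact (A.hPhi ht c (y + c * t)).comp_add_const y (c * t)

end Adm

lemma lintegral_enorm_le_of_interval {f : ℝ → ℝ} {C R₀ : ℝ}
    (hf : ∀ a b, IntervalIntegrable f volume a b)
    (h : ∀ R ≥ R₀, (∫ x in (-R)..R, |f x|) ≤ C) : ∫⁻ x, ‖f x‖ₑ ≤ ENNReal.ofReal C := by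
  have hcov : AECover volume atTop (fun R : ℝ => Set.Ioc (-R) R) :=
    aecover_Ioc tendsto_neg_atTop_atBot tendsto_id
  have hloc : AEStronglyMeasurable f volume := by
    have : LocallyIntegrable f volume := by
      intro x
      refine ⟨Set.Ioo (x - 1) (x + 1), Ioo_mem_nhds (by linarith) (by linarith), ?_⟩
      have := (hf (x - 1) (x + 1))
      rw [intervalIntegrable_iff_integrableOn_Ioo_of_le (by linarith)] at this
      exact this
    exact this.aestronglyMeasurable
  have ht := hcov.lintegral_tendsto_of_countably_generated (f := fun x => ‖f x‖ₑ)
    hloc.enorm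
  refine le_of_tendsto ht ?_
  filter_upwards [eventually_ge_atTop R₀, eventually_ge_atTop 0] with R hR hR0
  have h1 := hf (-R) R
  rw [intervalIntegrable_iff_integrableOn_Ioc_of_le (by linarith)] at h1
  rw [← ofReal_integral_norm_eq_lintegral_enorm h1]
  refine ENNReal.ofReal_le_ofReal ?_
  have := h R hR
  rwa [intervalIntegral.integral_of_le (by linarith)] at this

lemma interval_abs_le_of_lintegral {f : ℝ → ℝ} {C a b : ℝ} (hC : 0 ≤ C) (hab : a ≤ b)
    (hf : IntervalIntegrable f volume a b)
    (h : ∫⁻ x, ‖f x‖ₑ ≤ ENNReal.ofReal C) : (∫ x in a..b, |f x|) ≤ C := by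
  rw [intervalIntegral.integral_of_le hab]
  rw [intervalIntegrable_iff_integrableOn_Ioc_of_le hab] at hf
  have h1 := ofReal_integral_norm_eq_lintegral_enorm hf
  have h2 : ENNReal.ofReal (∫ x in Set.Ioc a b, ‖f x‖) ≤ ENNReal.ofReal C := by
    rw [h1]; exact (setLIntegral_le_lintegral _ _).trans h
  exact (ENNReal.ofReal_le_ofReal_iff hC).1 h2

lemma mono_translate_aux {f : ℝ → ℝ} {m M : ℝ} (hf : Monotone f) (hm : ∀ x, m ≤ f x)
    (hM : ∀ x, f x ≤ M) {y : ℝ} (hy : 0 ≤ y) :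
    ∫⁻ x, ‖f (x - y) - f x‖ₑ ≤ ENNReal.ofReal ((M - m) * y) := by
  have hi : ∀ a b, IntervalIntegrable f volume a b := fun a b => hf.intervalIntegrable
  have hf' : Monotone fun x => f (x - y) := fun x x' h => hf (by linarith)
  have hi' : ∀ a b, IntervalIntegrable (fun x => f (x - y)) volume a b :=
    fun a b => hf'.intervalIntegrable
  refine lintegral_enorm_le_of_interval (R₀ := 0) (fun a b => (hi' a b).sub (hi a b)) ?_
  intro R hR
  have e1 : (∫ x in (-R)..R, |f (x - y) - f x|) = ∫ x in (-R)..R, (f x - f (x - y)) := by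
    congr 1; funext x
    rw [abs_sub_comm, abs_of_nonneg]
    linarith [hf (by linarith : x - y ≤ x)]
  rw [e1, intervalIntegral.integral_sub (hi _ _) (hi' _ _),
    intervalIntegral.integral_comp_sub_right (fun x => f x),
    intervalIntegral.integral_interval_sub_interval_comm (hi _ _) (hi _ _) (hi _ _)]
  have h1 : (∫ x in (-R)..(-R - y), f x) ≤ - (m * y) := by
    rw [intervalIntegral.integral_symm]
    have := intervalIntegral.integral_mono_on (μ := volume) (by linarith : -R - y ≤ -R)
      (intervalIntegrable_const (c := m)) (hi _ _) (fun x _ => hm x)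
    rw [intervalIntegral.integral_const, smul_eq_mul] at this
    linarith
  have h2 : - (M * y) ≤ (∫ x in R..(R - y), f x) := by
    rw [intervalIntegral.integral_symm]
    have := intervalIntegral.integral_mono_on (μ := volume) (by linarith : R - y ≤ R)
      (hi _ _) (intervalIntegrable_const (c := M)) (fun x _ => hM x)
    rw [intervalIntegral.integral_const, smul_eq_mul] at this
    linarith
  linarith

lemma mono_translate {f : ℝ → ℝ} {m M : ℝ} (hf : Monotone f) (hm : ∀ x, m ≤ f x)
    (hM : ∀ x, f x ≤ M) (y : ℝ) :
    ∫⁻ x, ‖f (x - y) - f x‖ₑ ≤ ENNReal.ofReal ((M - m) * |y|) := by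
  rcases le_total 0 y with h | h
  · rw [abs_of_nonneg h]; exact mono_translate_aux hf hm hM h
  · rw [abs_of_nonpos h]
    have := mono_translate_aux hf hm hM (y := -y) (by linarith)
    rw [← lintegral_sub_right_eq_self (fun x => ‖f (x - -y) - f x‖ₑ) y] at this
    refine le_trans (le_of_eq ?_) this
    congr 1; funext x
    rw [sub_neg_eq_add, sub_add_cancel, ← enorm_neg, neg_sub]

section Rare

lemma rare_eq {um up x t : ℝ} (h : um < up) (ht : 0 < t) (rw' : ℝ)
    (hrw : rw' = if x ≤ um * t then um else if up * t ≤ x then up else x / t) :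
    rw' = max um (min up (x / t)) := by
  rw [hrw]
  split_ifs with h1 h2
  · rw [← div_le_iff₀ ht] at h1
    rw [min_eq_right (by linarith), max_eq_left h1]
  · rw [← le_div_iff₀ ht] at h2
    rw [min_eq_left h2, max_eq_right h.le]
  · rw [not_le, ← lt_div_iff₀ ht] at h1
    rw [not_le, ← div_lt_iff₀ ht] at h2
    rw [min_eq_right h2.le, max_eq_right h1.le]

end Rare

lemma rarefactionWave_eq {um up : ℝ} (h : um < up) (x : ℝ) {t : ℝ} (ht : 0 < t) :
    rarefactionWave um up x t = max um (min up (x / t)) :=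
  rare_eq h ht _ rfl

lemma riemann_mono {um up : ℝ} (h : um < up) : Monotone (riemannDatum um up) := by
  intro x y hxy
  unfold riemannDatum
  split_ifs with h1 h2 h2 <;> linarith

lemma riemann_ge {um up : ℝ} (h : um < up) (x : ℝ) : um ≤ riemannDatum um up x := by
  unfold riemannDatum; split_ifs <;> linarith

lemma riemann_le {um up : ℝ} (h : um < up) (x : ℝ) : riemannDatum um up x ≤ up := by
  unfold riemannDatum; split_ifs <;> linarith

namespace Adm

variable {ε : ℝ} {J : ℝ → ℝ} {um up : ℝ} {u : ℝ → ℝ → ℝ}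

/-- the signed mass around the ray `x = c t` -/
noncomputable def NR (u : ℝ → ℝ → ℝ) (c R t : ℝ) : ℝ :=
  (∫ y in (-R)..0, u (y + c * t) t) - ∫ y in (0 : ℝ)..R, u (y + c * t) t

lemma growth (A : Adm ε J um up u) {t₁ T : ℝ} (ht₁ : 0 < t₁) (hT : t₁ ≤ T) (c R : ℝ) {α β : ℝ}
    (hα : ∀ t ∈ Set.Icc t₁ T, (u (-R + c * t) t - c) ^ 2 ≤ α)
    (hβ : ∀ t ∈ Set.Icc t₁ T, (u (R + c * t) t - c) ^ 2 ≤ β) :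
    NR u c R T - NR u c R t₁
      ≤ (2 * ε + ∫ z, z ^ 2 * J z) * Real.log (T / t₁) + (T - t₁) * ((α + β) / 2) := by
  set m2 := ∫ z, z ^ 2 * J z with hm2
  have hder : ∀ t, 0 < t → HasDerivAt (NR u c R)
      ((Phi ε J u c t (0 + c * t) - Phi ε J u c t (-R + c * t))
        - (Phi ε J u c t (R + c * t) - Phi ε J u c t (0 + c * t))) t := fun t ht =>
    (A.hflow ht c (-R) 0).sub (A.hflow ht c 0 R)
  -- compare with an explicit primitive
  have hanti : AntitoneOn (fun t => NR u c R t - ((2 * ε + m2) * Real.log t + t * ((α + β) / 2)))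
      (Set.Icc t₁ T) := by
    refine antitoneOn_of_hasDerivWithinAt_nonpos (convex_Icc t₁ T) (f' := fun t =>
      ((Phi ε J u c t (0 + c * t) - Phi ε J u c t (-R + c * t))
        - (Phi ε J u c t (R + c * t) - Phi ε J u c t (0 + c * t)))
        - ((2 * ε + m2) * t⁻¹ + 1 * ((α + β) / 2))) ?_ ?_ ?_
    · intro t ht
      have ht0 : 0 < t := lt_of_lt_of_le ht₁ ht.1
      refine ContinuousAt.continuousWithinAt ?_
      refine (hder t ht0).continuousAt.sub ?_
      exact ((Real.continuousAt_log ht0.ne').const_mul _).add (by fun_prop)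
    · intro t ht
      rw [interior_Icc] at ht
      have ht0 : 0 < t := lt_trans ht₁ ht.1
      refine HasDerivAt.hasDerivWithinAt ?_
      exact (hder t ht0).sub (((Real.hasDerivAt_log ht0.ne').const_mul _).add
        ((hasDerivAt_id t).mul_const _))
    · intro t ht
      rw [interior_Icc] at ht
      have ht0 : 0 < t := lt_trans ht₁ ht.1
      have h1 := hα t ⟨ht.1.le, ht.2.le⟩
      have h2 := hβ t ⟨ht.1.le, ht.2.le⟩
      have h3 := A.Q_le ht0 (0 + c * t)
      have h4 := A.Q_nonneg ht0 (-R + c * t)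
      have h5 := A.Q_nonneg ht0 (R + c * t)
      have h6 := mul_le_mul_of_nonneg_left (A.oleinik ht0 (0 + c * t)) A.eps.le
      have h7 := mul_nonneg A.eps.le (A.ux_nonneg (-R + c * t) ht0)
      have h8 := mul_nonneg A.eps.le (A.ux_nonneg (R + c * t) ht0)
      have h9 := sq_nonneg (u (0 + c * t) t - c)
      have e1 : (2 * ε + m2) * t⁻¹ = 2 * (ε * (1 / t)) + m2 / t := by field_simp
      rw [e1]
      unfold Phi
      nlinarith
  have := hanti ⟨le_rfl, hT⟩ ⟨hT, le_rfl⟩ hT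
  simp only at this
  rw [Real.log_div (by linarith) ht₁.ne']
  linarith

lemma NR_initial (A : Adm ε J um up u) (hu : um < up) {t B : ℝ} (ht : 0 < t) (hB : 0 ≤ B)
    (h : ∫⁻ x, ‖u x t - riemannDatum um up x‖ₑ ≤ ENNReal.ofReal B) (c : ℝ) {R : ℝ} (hR : 0 ≤ R) :
    NR u c R t + R * (up - um) ≤ B + (up - um) * |c * t| := by
  have hi : ∀ a b, IntervalIntegrable (fun y => u (y + c * t) t) volume a b := fun a b =>
    ((A.cont ht).comp (continuous_id.add continuous_const)).intervalIntegrable a b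
  have hi' : ∀ a b, IntervalIntegrable (fun y => riemannDatum um up y) volume a b := fun a b =>
    (riemann_mono hu).intervalIntegrable
  have h1 : ∫⁻ y, ‖u (y + c * t) t - riemannDatum um up y‖ₑ
      ≤ ENNReal.ofReal (B + (up - um) * |c * t|) := by
    rw [ENNReal.ofReal_add hB (mul_nonneg (by linarith) (abs_nonneg _))]
    have e1 := mono_translate (riemann_mono hu) (riemann_ge hu) (riemann_le hu) (-(c * t))
    rw [abs_neg] at e1
    rw [← lintegral_add_right_eq_self _ (c * t)] at h
    refine le_trans ?_ (add_le_add h e1)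
    rw [← lintegral_add_left']
    · refine lintegral_mono fun y => ?_
      rw [sub_neg_eq_add]
      refine le_trans (le_of_eq ?_) (enorm_add_le _ _)
      congr 1; ring
    · refine AEMeasurable.enorm ?_
      refine Measurable.aemeasurable ?_
      have := (A.cont ht).measurable
      exact (this.comp (measurable_id.add_const _)).sub
        ((riemann_mono hu).measurable.comp (measurable_id.add_const _))
  have h2 := interval_abs_le_of_lintegral (a := -R) (b := R)
    (by have := mul_nonneg (sub_nonneg.2 hu.le) (abs_nonneg (c * t)); linarith) (by linarith)
    ((hi _ _).sub (hi' _ _)) h1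
  have hi2 : ∀ a b, IntervalIntegrable (fun y => |u (y + c * t) t - riemannDatum um up y|)
      volume a b := fun a b => ((hi a b).sub (hi' a b)).abs
  rw [← intervalIntegral.integral_add_adjacent_intervals (b := 0) (hi2 _ _) (hi2 _ _)] at h2
  have h3 : (∫ y in (-R)..0, u (y + c * t) t) - R * um
      ≤ ∫ y in (-R)..0, |u (y + c * t) t - riemannDatum um up y| := by
    have e : (∫ y in (-R)..0, (u (y + c * t) t - um)) = (∫ y in (-R)..0, u (y + c * t) t) - R * um := by
      rw [intervalIntegral.integral_sub (hi _ _) intervalIntegrable_const,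
        intervalIntegral.integral_const, smul_eq_mul]; ring
    rw [← e]
    refine intervalIntegral.integral_mono_on_of_le_Ioo (by linarith)
      ((hi _ _).sub intervalIntegrable_const) (hi2 _ _) fun y hy => ?_
    have : riemannDatum um up y = um := if_pos hy.2
    rw [this]; exact le_abs_self _
  have h4 : R * up - (∫ y in (0 : ℝ)..R, u (y + c * t) t)
      ≤ ∫ y in (0 : ℝ)..R, |u (y + c * t) t - riemannDatum um up y| := by
    have e : (∫ y in (0 : ℝ)..R, (up - u (y + c * t) t)) = R * up - (∫ y in (0 : ℝ)..R, u (y + c * t) t) := by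
      rw [intervalIntegral.integral_sub intervalIntegrable_const (hi _ _),
        intervalIntegral.integral_const, smul_eq_mul]; ring
    rw [← e]
    refine intervalIntegral.integral_mono_on_of_le_Ioo (by linarith)
      (intervalIntegrable_const.sub (hi _ _)) (hi2 _ _) fun y hy => ?_
    have : riemannDatum um up y = up := if_neg (not_lt.2 hy.1.le)
    rw [this, abs_sub_comm]; exact le_abs_self _
  unfold NR
  linarith

end Adm

lemma rare_cont {um up : ℝ} (hu : um < up) {t : ℝ} (ht : 0 < t) :
    Continuous fun x => rarefactionWave um up x t := by
  have : (fun x => rarefactionWave um up x t) = fun x => max um (min up (x / t)) :=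
    funext fun x => rarefactionWave_eq hu x ht
  rw [this]; fun_prop

lemma rare_upper {um up c T R : ℝ} (hu : um < up) (hc : c ∈ Set.Icc um up) (hT : 0 < T)
    (hR : T * (up - c) ≤ R) :
    (∫ y in (0 : ℝ)..R, rarefactionWave um up (y + c * T) T) ≤ R * up - T * (up - c) ^ 2 / 2 := by
  set d := T * (up - c) with hd
  have hd0 : 0 ≤ d := mul_nonneg hT.le (by linarith [hc.2])
  have hi : ∀ a b, IntervalIntegrable (fun y => rarefactionWave um up (y + c * T) T) volume a b :=
    fun a b => ((rare_cont hu hT).comp (continuous_id.add continuous_const)).intervalIntegrable a b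
  rw [← intervalIntegral.integral_add_adjacent_intervals (b := d) (hi _ _) (hi _ _)]
  have hci : Continuous fun y : ℝ => c + y / T := by fun_prop
  have hq : Continuous fun y : ℝ => y / T := by fun_prop
  have h1 := intervalIntegral.integral_mono_on (μ := volume) hd0 (hi _ _)
    (hci.intervalIntegrable 0 d)
    (fun y hy => by
      rw [rarefactionWave_eq hu _ hT, add_div, mul_div_cancel_right₀ _ hT.ne']
      have : 0 ≤ y / T := div_nonneg hy.1 hT.le
      exact max_le (by linarith [hc.1]) ((min_le_right _ _).trans (by linarith)))
  have h2 := intervalIntegral.integral_mono_on (μ := volume) hR (hi _ _)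
    (intervalIntegrable_const (c := up))
    (fun y hy => by
      rw [rarefactionWave_eq hu _ hT]
      exact max_le hu.le (min_le_left _ _))
  rw [intervalIntegral.integral_const, smul_eq_mul] at h2
  have e : (∫ y in (0 : ℝ)..d, (c + y / T)) = c * d + d ^ 2 / (2 * T) := by
    rw [intervalIntegral.integral_add intervalIntegrable_const
      (hq.intervalIntegrable _ _), intervalIntegral.integral_const,
      intervalIntegral.integral_div, integral_id, smul_eq_mul]
    field_simp; ring
  rw [e] at h1
  have e2 : d ^ 2 / (2 * T) = T * (up - c) ^ 2 / 2 := by rw [hd]; field_simp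
  rw [e2] at h1
  have e3 : c * d = up * d - T * (up - c) ^ 2 := by rw [hd]; ring
  linarith

lemma rare_lower {um up c T R : ℝ} (hu : um < up) (hc : c ∈ Set.Icc um up) (hT : 0 < T)
    (hR : T * (c - um) ≤ R) :
    R * um + T * (c - um) ^ 2 / 2 ≤ ∫ y in (-R)..0, rarefactionWave um up (y + c * T) T := by
  set d := T * (c - um) with hd
  have hd0 : 0 ≤ d := mul_nonneg hT.le (by linarith [hc.1])
  have hi : ∀ a b, IntervalIntegrable (fun y => rarefactionWave um up (y + c * T) T) volume a b :=
    fun a b => ((rare_cont hu hT).comp (continuous_id.add continuous_const)).intervalIntegrable a b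
  rw [← intervalIntegral.integral_add_adjacent_intervals (b := -d) (hi _ _) (hi _ _)]
  have hci : Continuous fun y : ℝ => c + y / T := by fun_prop
  have hq : Continuous fun y : ℝ => y / T := by fun_prop
  have h1 := intervalIntegral.integral_mono_on (μ := volume) (by linarith : -d ≤ 0)
    (hci.intervalIntegrable (-d) 0) (hi _ _) 
    (fun y hy => by
      rw [rarefactionWave_eq hu _ hT, add_div, mul_div_cancel_right₀ _ hT.ne']
      have : y / T ≤ 0 := div_nonpos_of_nonpos_of_nonneg hy.2 hT.le
      rw [add_comm]
      exact le_max_of_le_right (le_min (by linarith [hc.2]) le_rfl))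
  have h2 := intervalIntegral.integral_mono_on (μ := volume) (by linarith : -R ≤ -d)
    (intervalIntegrable_const (c := um)) (hi _ _)
    (fun y hy => by
      rw [rarefactionWave_eq hu _ hT]
      exact le_max_left _ _)
  rw [intervalIntegral.integral_const, smul_eq_mul] at h2
  have e : (∫ y in (-d)..0, (c + y / T)) = c * d - d ^ 2 / (2 * T) := by
    rw [intervalIntegral.integral_add intervalIntegrable_const
      (hq.intervalIntegrable _ _), intervalIntegral.integral_const,
      intervalIntegral.integral_div, integral_id, smul_eq_mul]
    field_simp; ring
  rw [e] at h1
  have e2 : d ^ 2 / (2 * T) = T * (c - um) ^ 2 / 2 := by rw [hd]; field_simp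
  rw [e2] at h1
  have e3 : c * d = um * d + T * (c - um) ^ 2 := by rw [hd]; ring
  linarith

namespace Adm

variable {ε : ℝ} {J : ℝ → ℝ} {um up : ℝ} {u : ℝ → ℝ → ℝ}

lemma crossing (A : Adm ε J um up u) (hu : um < up) {T : ℝ} (hT : 0 < T) :
    ∃ c ∈ Set.Icc um up, (∀ y ≤ 0, rarefactionWave um up (y + c * T) T ≤ u (y + c * T) T) ∧
      (∀ y ≥ 0, u (y + c * T) T ≤ rarefactionWave um up (y + c * T) T) := by
  have hcont : ContinuousOn (fun s => u (s * T) T - s) (Set.Icc um up) :=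
    (((A.cont hT).comp (continuous_id.mul continuous_const)).sub continuous_id).continuousOn
  obtain ⟨c, hc, hc0⟩ := intermediate_value_Icc' hu.le hcont
    (show (0 : ℝ) ∈ Set.Icc _ _ from
      ⟨by linarith [A.le (up * T) hT], by linarith [A.ge (um * T) hT]⟩)
  simp only at hc0
  have e : c * T / T = c := mul_div_cancel_right₀ _ hT.ne'
  refine ⟨c, hc, fun y hy => ?_, fun y hy => ?_⟩
  · rw [rarefactionWave_eq hu _ hT]
    have := A.slope_le hT (by linarith : y + c * T ≤ c * T)
    simp only at this
    exact max_le (A.ge _ hT) ((min_le_right _ _).trans (by linarith))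
  · rw [rarefactionWave_eq hu _ hT]
    have := A.slope_le hT (by linarith : c * T ≤ y + c * T)
    simp only at this
    exact le_max_of_le_right (le_min (A.le _ hT) (by linarith))

lemma long_aux (A : Adm ε J um up u) (hu : um < up) {t₁ T B : ℝ} (ht₁ : 0 < t₁) (hT : t₁ ≤ T)
    (hB : 0 ≤ B) (h : ∫⁻ x, ‖u x t₁ - riemannDatum um up x‖ₑ ≤ ENNReal.ofReal B) 
    {δ : ℝ} (hδ : 0 < δ) :
    ∫⁻ x, ‖u x T - rarefactionWave um up x T‖ₑ ≤ ENNReal.ofReal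
      (B + (up - um) * (max |um| |up| * t₁)
        + (2 * ε + ∫ z, z ^ 2 * J z) * Real.log (T / t₁) + δ) := by
  have hT0 : 0 < T := lt_of_lt_of_le ht₁ hT
  obtain ⟨c, hc, hl, hr⟩ := A.crossing hu hT0
  set η := min 1 (δ / (T * (2 * (up - um) + 1))) with hη
  have hΔ : 0 < up - um := by linarith
  have hη0 : 0 < η := lt_min one_pos (by positivity)
  have hη1 : η ≤ 1 := min_le_left _ _
  have hη2 : T * (η * (2 * (up - um) + 1)) ≤ δ := by
    have : η ≤ δ / (T * (2 * (up - um) + 1)) := min_le_right _ _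
    rw [le_div_iff₀ (by positivity)] at this
    linarith
  obtain ⟨X1, hX1⟩ := A.unif_top (b := T) ht₁ hη0
  obtain ⟨X2, hX2⟩ := A.unif_bot (b := T) ht₁ hη0
  have hcT : ∀ t ∈ Set.Icc t₁ T, |c * t| ≤ |c| * T := by
    intro t ht
    rw [abs_mul, abs_of_pos (lt_of_lt_of_le ht₁ ht.1)]
    exact mul_le_mul_of_nonneg_left ht.2 (abs_nonneg c)
  rw [← lintegral_add_right_eq_self _ (c * T)]
  have hiu : ∀ a b, IntervalIntegrable (fun y => u (y + c * T) T) volume a b := fun a b =>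
    ((A.cont hT0).comp (continuous_id.add continuous_const)).intervalIntegrable a b
  have hiw : ∀ a b, IntervalIntegrable (fun y => rarefactionWave um up (y + c * T) T) volume a b :=
    fun a b => ((rare_cont hu hT0).comp (continuous_id.add continuous_const)).intervalIntegrable a b
  refine lintegral_enorm_le_of_interval
    (R₀ := max (max (X1 + |c| * T) (-X2 + |c| * T)) (T * (up - um)))
    (fun a b => (hiu a b).sub (hiw a b)) fun R hR => ?_
  have hR1 : X1 + |c| * T ≤ R := ((le_max_left _ _).trans (le_max_left _ _)).trans hR
  have hR2 : -X2 + |c| * T ≤ R := ((le_max_right _ _).trans (le_max_left _ _)).trans hR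
  have hR3 : T * (up - um) ≤ R := (le_max_right _ _).trans hR
  have hR0 : 0 ≤ R := le_trans (by positivity) hR3
  have g1 := A.growth ht₁ hT c R (α := (c - um + η) ^ 2) (β := (up - c + η) ^ 2)
    (fun t ht => by
      have ht0 : 0 < t := lt_of_lt_of_le ht₁ ht.1
      have a1 := _root_.abs_le.1 (hcT t ht)
      have a2 := hX2 (-R + c * t) (by linarith) t ht
      have a3 := A.ge (-R + c * t) ht0
      refine sq_le_sq' ?_ ?_ <;> linarith [hc.1])
    (fun t ht => by
      have ht0 : 0 < t := lt_of_lt_of_le ht₁ ht.1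
      have a1 := _root_.abs_le.1 (hcT t ht)
      have a2 := hX1 (R + c * t) (by linarith) t ht
      have a3 := A.le (R + c * t) ht0
      refine sq_le_sq' ?_ ?_ <;> linarith [hc.2])
  have g2 := A.NR_initial hu ht₁ hB h c hR0
  have g3 := rare_upper hu hc hT0 (R := R)
    (le_trans (mul_le_mul_of_nonneg_left (by linarith [hc.1]) hT0.le) hR3)
  have g4 := rare_lower hu hc hT0 (R := R)
    (le_trans (mul_le_mul_of_nonneg_left (by linarith [hc.2]) hT0.le) hR3)
  have g5 : (up - um) * |c * t₁| ≤ (up - um) * (max |um| |up| * t₁) := by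
    refine mul_le_mul_of_nonneg_left ?_ hΔ.le
    rw [abs_mul, abs_of_pos ht₁]
    exact mul_le_mul_of_nonneg_right (abs_le_max_abs_abs hc.1 hc.2) ht₁.le
  have hi2 : ∀ a b, IntervalIntegrable (fun y => |u (y + c * T) T - rarefactionWave um up (y + c * T) T|)
      volume a b := fun a b => ((hiu a b).sub (hiw a b)).abs
  have g6 : (∫ y in (-R)..R, |u (y + c * T) T - rarefactionWave um up (y + c * T) T|)
      = NR u c R T - (∫ y in (-R)..0, rarefactionWave um up (y + c * T) T)
        + ∫ y in (0 : ℝ)..R, rarefactionWave um up (y + c * T) T := by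
    rw [← intervalIntegral.integral_add_adjacent_intervals (b := 0) (hi2 _ _) (hi2 _ _)]
    have e1 : (∫ y in (-R)..0, |u (y + c * T) T - rarefactionWave um up (y + c * T) T|)
        = ∫ y in (-R)..0, (u (y + c * T) T - rarefactionWave um up (y + c * T) T) := by
      refine intervalIntegral.integral_congr fun y hy => ?_
      rw [Set.uIcc_of_le (by linarith)] at hy
      exact abs_of_nonneg (by linarith [hl y hy.2])
    have e2 : (∫ y in (0 : ℝ)..R, |u (y + c * T) T - rarefactionWave um up (y + c * T) T|)
        = ∫ y in (0 : ℝ)..R, (rarefactionWave um up (y + c * T) T - u (y + c * T) T) := by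
      refine intervalIntegral.integral_congr fun y hy => ?_
      rw [Set.uIcc_of_le (by linarith)] at hy
      rw [abs_sub_comm]
      exact abs_of_nonneg (by linarith [hr y hy.1])
    rw [e1, e2, intervalIntegral.integral_sub (hiu _ _) (hiw _ _),
      intervalIntegral.integral_sub (hiw _ _) (hiu _ _)]
    unfold NR; ring
  rw [g6]
  have g7 : (c - um + η) ^ 2 ≤ (c - um) ^ 2 + η * (2 * (up - um) + 1) := by
    nlinarith [hc.1, hc.2, mul_le_mul_of_nonneg_left hc.2 hη0.le, mul_le_mul_of_nonneg_left hη1 hη0.le]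
  have g8 : (up - c + η) ^ 2 ≤ (up - c) ^ 2 + η * (2 * (up - um) + 1) := by
    nlinarith [hc.1, hc.2, mul_le_mul_of_nonneg_left hc.1 hη0.le, mul_le_mul_of_nonneg_left hη1 hη0.le]
  have g9 : (T - t₁) * (((c - um + η) ^ 2 + (up - c + η) ^ 2) / 2)
      ≤ T * ((((c - um) ^ 2 + η * (2 * (up - um) + 1)) + ((up - c) ^ 2 + η * (2 * (up - um) + 1))) / 2) := by
    refine mul_le_mul (by linarith) (by linarith) (by positivity) hT0.le
  nlinarith

/-- large time `L¹` estimate -/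
lemma long (A : Adm ε J um up u) (hu : um < up) {t₁ T B : ℝ} (ht₁ : 0 < t₁) (hT : t₁ ≤ T)
    (hB : 0 ≤ B) (h : ∫⁻ x, ‖u x t₁ - riemannDatum um up x‖ₑ ≤ ENNReal.ofReal B) :
    ∫⁻ x, ‖u x T - rarefactionWave um up x T‖ₑ ≤ ENNReal.ofReal
      (B + (up - um) * (max |um| |up| * t₁)
        + (2 * ε + ∫ z, z ^ 2 * J z) * Real.log (T / t₁)+ 1) :=
  A.long_aux hu ht₁ hT hB h one_pos

end Adm

namespace Adm

variable {ε : ℝ} {J : ℝ → ℝ} {um up : ℝ} {u : ℝ → ℝ → ℝ}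

lemma near_top (A : Adm ε J um up u) (hu : um < up) {t B R : ℝ} (ht : 0 < t) (hB : 0 ≤ B)
    (h : ∫⁻ x, ‖u x t - riemannDatum um up x‖ₑ ≤ ENNReal.ofReal B) (hR : 0 < R) :
    up - B / R ≤ u R t := by
  have hi : IntervalIntegrable (fun x => u x t - riemannDatum um up x) volume 0 R :=
    ((A.cont ht).intervalIntegrable _ _).sub (riemann_mono hu).intervalIntegrable
  have h1 := interval_abs_le_of_lintegral hB hR.le hi h
  have h2 := intervalIntegral.integral_mono_on (μ := volume) hR.le
    (intervalIntegrable_const (c := up - u R t)) hi.abs (fun x hx => by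
      have h3 : riemannDatum um up x = up := by
        unfold riemannDatum; rw [if_neg (by linarith [hx.1])]
      have h4 : u x t ≤ u R t := A.mono t ht hx.2
      rw [h3, abs_sub_comm]
      exact le_trans (by linarith) (le_abs_self _))
  rw [intervalIntegral.integral_const, smul_eq_mul] at h2
  have h5 : up - u R t ≤ B / R := by
    rw [le_div_iff₀ hR]; linarith
  linarith

lemma near_bot (A : Adm ε J um up u) (hu : um < up) {t B R : ℝ} (ht : 0 < t) (hB : 0 ≤ B)
    (h : ∫⁻ x, ‖u x t - riemannDatum um up x‖ₑ ≤ ENNReal.ofReal B) (hR : 0 < R) :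
    u (-R) t ≤ um + B / R := by
  have hi : IntervalIntegrable (fun x => u x t - riemannDatum um up x) volume (-R) 0 :=
    ((A.cont ht).intervalIntegrable _ _).sub (riemann_mono hu).intervalIntegrable
  have h1 := interval_abs_le_of_lintegral hB (by linarith) hi h
  have h2 := intervalIntegral.integral_mono_on_of_le_Ioo (μ := volume) (by linarith : -R ≤ 0)
    (intervalIntegrable_const (c := u (-R) t - um)) hi.abs (fun x hx => by
      have h3 : riemannDatum um up x = um := by
        unfold riemannDatum; rw [if_pos (by linarith [hx.2])]
      have h4 : u (-R) t ≤ u x t := A.mono t ht hx.1.le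
      rw [h3]
      exact le_trans (by linarith) (le_abs_self _))
  rw [intervalIntegral.integral_const, smul_eq_mul] at h2
  have h5 : u (-R) t - um ≤ B / R := by
    rw [le_div_iff₀ hR]; linarith
  linarith

lemma hprim_t (A : Adm ε J um up u) {t : ℝ} (ht : 0 < t) (x : ℝ) :
    HasDerivAt (fun s => primU u s x) (Phi ε J u 0 t x - Phi ε J u 0 t 0) t := by
  have := A.hflow ht 0 0 x
  simpa [primU] using this

lemma abs_Phi (A : Adm ε J um up u) {t s : ℝ} (ht : 0 < t) (hs : t < s) (x : ℝ) :
    |Phi ε J u 0 s x| ≤ ε / t + (∫ z, z ^ 2 * J z) / t + (max |um| |up|) ^ 2 := by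
  have hs0 := ht.trans hs
  have h1 := A.oleinik hs0 x
  have h2 := A.ux_nonneg x hs0
  have h3 := A.Q_le hs0 x
  have h4 := A.Q_nonneg hs0 x
  have h5 := A.abs_le x hs0
  have h6 : (u x s) ^ 2 ≤ (max |um| |up|) ^ 2 := by
    rw [← sq_abs]; exact pow_le_pow_left₀ (abs_nonneg _) h5 2
  have h7 : 1 / s ≤ 1 / t := one_div_le_one_div_of_le ht hs.le
  have m0 : 0 ≤ ∫ z, z ^ 2 * J z :=
    integral_nonneg fun z => mul_nonneg (sq_nonneg _) (A.ker.pos z)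
  have h8 : (∫ z, z ^ 2 * J z) / s ≤ (∫ z, z ^ 2 * J z) / t :=
    div_le_div_of_nonneg_left m0 ht hs.le
  have h9 : ε * dX (Function.uncurry u) (x, s) ≤ ε / t := by
    rw [div_eq_mul_one_div]
    exact mul_le_mul_of_nonneg_left (h1.trans h7) A.eps.le
  have h10 : 0 ≤ ε * dX (Function.uncurry u) (x, s) := mul_nonneg A.eps.le h2
  have h11 : 0 ≤ (∫ z, z ^ 2 * J z) / t := div_nonneg m0 ht.le
  have h12 : 0 ≤ ε / t := div_nonneg A.eps.le ht.le
  have h13 := sq_nonneg (u x s)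
  unfold Phi
  rw [_root_.abs_le]
  constructor <;> linarith

lemma cont_Phi (A : Adm ε J um up u) {t : ℝ} (ht : 0 < t) (c : ℝ) : Continuous (Phi ε J u c t) :=
  continuous_iff_continuousAt.2 fun x => (A.hPhi ht c x).continuousAt

lemma hP (A : Adm ε J um up u) {t : ℝ} (ht : 0 < t) (R : ℝ) :
    HasDerivAt (fun s => ∫ y in (-R)..R, (primU u s (y + 2 * R) - primU u s y))
      (∫ y in (-R)..R, (Phi ε J u 0 t (y + 2 * R) - Phi ε J u 0 t y)) t := by
  have hc : ∀ s > 0, Continuous fun y => primU u s (y + 2 * R) - primU u s y := fun s hs => by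
    have := A.cont_prim hs
    fun_prop
  have hc' : Continuous fun y => Phi ε J u 0 t (y + 2 * R) - Phi ε J u 0 t y := by
    have := A.cont_Phi ht 0
    fun_prop
  refine (intervalIntegral.hasDerivAt_integral_of_dominated_loc_of_deriv_le (μ := volume)
    (a := -R) (b := R) (x₀ := t) (F := fun s y => primU u s (y + 2 * R) - primU u s y)
    (F' := fun s y => Phi ε J u 0 s (y + 2 * R) - Phi ε J u 0 s y) (s := Set.Ioi (t / 2))
    (bound := fun _ => 2 * (ε / (t/2) + (∫ z, z ^ 2 * J z) / (t/2) + (max |um| |up|) ^ 2))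
    (Ioi_mem_nhds (by linarith))
    (by
      filter_upwards [lt_mem_nhds ht] with s hs
      exact (hc s hs).aestronglyMeasurable)
    ((hc t ht).intervalIntegrable _ _) hc'.aestronglyMeasurable
    (Eventually.of_forall fun y _ s hs => by
      have h1 := A.abs_Phi (half_pos ht) hs (y + 2 * R)
      have h2 := A.abs_Phi (half_pos ht) hs y
      refine (norm_sub_le _ _).trans ?_
      exact (add_le_add h1 h2).trans (le_of_eq (two_mul _).symm))
    intervalIntegrable_const
    (Eventually.of_forall fun y _ s hs => by
      have hs0 : 0 < s := (half_pos ht).trans hs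
      refine ((A.hprim_t hs0 (y + 2 * R)).sub (A.hprim_t hs0 y)).congr_deriv ?_
      ring)).2

lemma P_deriv_le (A : Adm ε J um up u) (hu : um < up) {t B R : ℝ} (ht : 1 / 4 < t) (hB : 0 ≤ B)
    (h : ∫⁻ x, ‖u x t - riemannDatum um up x‖ₑ ≤ ENNReal.ofReal B) (hR : 0 < R)
    (hBR : 3 * (B / R) ≤ (up - um) / 2) :
    (∫ y in (-R)..R, (Phi ε J u 0 t (y + 2 * R) - Phi ε J u 0 t y)) ≤
      - ε * (up - um) / 2 + 2 * R * (2 * (∫ z, z ^ 2 * J z) + (max |um| |up|) ^ 2 / 2) := by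
  have ht0 : 0 < t := by linarith
  set D := 2 * (∫ z, z ^ 2 * J z) + (max |um| |up|) ^ 2 / 2 with hD
  have m0 : 0 ≤ ∫ z, z ^ 2 * J z :=
    integral_nonneg fun z => mul_nonneg (sq_nonneg _) (A.ker.pos z)
  have hc' : Continuous fun y => Phi ε J u 0 t (y + 2 * R) - Phi ε J u 0 t y := by
    have := A.cont_Phi ht0 0
    fun_prop
  have hux := A.cont_ux ht0
  have hux2 : Continuous fun y => dX (Function.uncurry u) (y + 2 * R, t) :=
    hux.comp (by fun_prop : Continuous fun y : ℝ => y + 2 * R)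
  have hc2 : Continuous fun y => ε * dX (Function.uncurry u) (y + 2 * R, t)
      - ε * dX (Function.uncurry u) (y, t) :=
    (continuous_const.mul hux2).sub (continuous_const.mul hux)
  have hmono := intervalIntegral.integral_mono_on (μ := volume) (by linarith : -R ≤ R)
    (hc'.intervalIntegrable _ _)
    ((hc2.intervalIntegrable (-R) R).add (intervalIntegrable_const (c := D)))
    (fun y _ => by
      have h3 := A.Q_le ht0 (y + 2 * R)
      have h4 := A.Q_nonneg ht0 y
      have h5 := A.abs_le y ht0
      have h6 : (u y t) ^ 2 ≤ (max |um| |up|) ^ 2 := by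
        rw [← sq_abs]; exact pow_le_pow_left₀ (abs_nonneg _) h5 2
      have h7 : (∫ z, z ^ 2 * J z) / t ≤ 4 * (∫ z, z ^ 2 * J z) := by
        rw [div_le_iff₀ ht0]; nlinarith
      have h8 := sq_nonneg (u (y + 2 * R) t)
      unfold Phi
      linarith)
  rw [intervalIntegral.integral_add (hc2.intervalIntegrable _ _) intervalIntegrable_const,
    intervalIntegral.integral_const, intervalIntegral.integral_sub
      (f := fun y => ε * dX (Function.uncurry u) (y + 2 * R, t))
      (g := fun y => ε * dX (Function.uncurry u) (y, t))
      ((continuous_const.mul hux2).intervalIntegrable _ _) ((continuous_const.mul hux).intervalIntegrable _ _),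
    intervalIntegral.integral_const_mul, intervalIntegral.integral_const_mul] at hmono
  have e1 : ∫ y in (-R)..R, dX (Function.uncurry u) (y, t) = u R t - u (-R) t :=
    intervalIntegral.integral_eq_sub_of_hasDerivAt (fun y _ => A.hx y ht0)
      (hux.intervalIntegrable _ _)
  have e2 : ∫ y in (-R)..R, dX (Function.uncurry u) (y + 2 * R, t)
      = u (R + 2 * R) t - u (-R + 2 * R) t :=
    intervalIntegral.integral_eq_sub_of_hasDerivAt (f := fun y => u (y + 2 * R) t)
      (fun y _ => (A.hx (y + 2 * R) ht0).comp_add_const y (2 * R))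
      (hux2.intervalIntegrable _ _)
  rw [e1, e2, smul_eq_mul, show -R + 2 * R = R by ring] at hmono
  have h1 := A.near_top hu ht0 hB h hR
  have h2 := A.near_bot hu ht0 hB h hR
  have h3 := A.le (R + 2 * R) ht0
  have h4 : u (R + 2 * R) t - u R t - (u R t - u (-R) t) ≤ - (up - um) / 2 := by linarith
  have h5 := mul_le_mul_of_nonneg_left h4 A.eps.le
  nlinarith

lemma abs_P (A : Adm ε J um up u) {t R : ℝ} (ht : 0 < t) (hR : 0 < R) :
    |∫ y in (-R)..R, (primU u t (y + 2 * R) - primU u t y)| ≤ 4 * R ^ 2 * max |um| |up| := by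
  have := intervalIntegral.norm_integral_le_of_norm_le_const (a := -R) (b := R)
    (f := fun y => primU u t (y + 2 * R) - primU u t y) (C := 2 * R * max |um| |up|) (fun y _ => by
      have h1 : primU u t (y + 2 * R) - primU u t y = ∫ x in y..(y + 2 * R), u x t := by
        unfold primU
        rw [intervalIntegral.integral_interval_sub_left ((A.cont ht).intervalIntegrable _ _)
          ((A.cont ht).intervalIntegrable _ _)]
      rw [h1]
      have h2 := intervalIntegral.norm_integral_le_of_norm_le_const (a := y) (b := y + 2 * R)
        (f := fun x => u x t) (C := max |um| |up|) (fun x _ => A.abs_le x ht)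
      refine h2.trans (le_of_eq ?_)
      rw [add_sub_cancel_left, abs_of_pos (by linarith : 0 < 2 * R)]; ring)
  rw [Real.norm_eq_abs] at this
  refine this.trans (le_of_eq ?_)
  rw [abs_of_pos (by linarith : 0 < R - -R)]; ring

lemma eps_bound (A : Adm ε J um up u) (hu : um < up) {B R : ℝ} (hB : 0 ≤ B)
    (h : ∀ t ∈ Set.Ioo (0 : ℝ) 1,
      ∫⁻ x, ‖u x t - riemannDatum um up x‖ₑ ≤ ENNReal.ofReal B) (hR : 0 < R)
    (hBR : 3 * (B / R) ≤ (up - um) / 2) :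
    ε ≤ (32 * R ^ 2 * max |um| |up|
      + 4 * R * (2 * (∫ z, z ^ 2 * J z) + (max |um| |up|) ^ 2 / 2)) / (up - um) := by
  obtain ⟨c, hc, hc'⟩ := exists_hasDerivAt_eq_slope
    (fun s => ∫ y in (-R)..R, (primU u s (y + 2 * R) - primU u s y))
    (fun s => ∫ y in (-R)..R, (Phi ε J u 0 s (y + 2 * R) - Phi ε J u 0 s y))
    (by norm_num : (1 / 4 : ℝ) < 3 / 4)
    (fun s hs => (A.hP (by linarith [hs.1]) R).continuousAt.continuousWithinAt)
    (fun s hs => A.hP (by linarith [hs.1]) R)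
  have h1 := A.P_deriv_le hu hc.1 hB (h c ⟨by linarith [hc.1], by linarith [hc.2]⟩) hR hBR
  have h2 := A.abs_P (t := 1 / 4) (by norm_num) hR
  have h3 := A.abs_P (t := 3 / 4) (by norm_num) hR
  rw [hc', div_le_iff₀ (by norm_num)] at h1
  rw [_root_.abs_le] at h2 h3
  rw [le_div_iff₀ (by linarith)]
  nlinarith [h2.1, h2.2, h3.1, h3.2]

end Adm

lemma heatK_nonneg {ε t : ℝ} (hε : 0 < ε) (ht : 0 ≤ t) (y : ℝ) : 0 ≤ heatK ε t y := by
  unfold heatK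
  have := Real.pi_pos
  positivity

lemma heatK_zero (ε y : ℝ) : heatK ε 0 y = 0 := by
  unfold heatK
  rw [mul_zero, Real.zero_rpow (by norm_num), zero_mul]

lemma heatK_eq {ε t : ℝ} (hε : 0 < ε) (ht : 0 < t) (y : ℝ) :
    heatK ε t y = (Real.sqrt (4 * Real.pi * ε * t))⁻¹ * Real.exp (-(1 / (4 * ε * t)) * y ^ 2) := by
  unfold heatK
  have := Real.pi_pos
  rw [neg_div, Real.rpow_neg (by positivity), Real.sqrt_eq_rpow]
  congr 2
  ring

lemma heatK_integrable {ε t : ℝ} (hε : 0 < ε) (ht : 0 < t) : Integrable (heatK ε t) := by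
  rw [funext fun y => heatK_eq hε ht y]
  exact (integrable_exp_neg_mul_sq (by positivity)).const_mul _

lemma heatK_integral {ε t : ℝ} (hε : 0 < ε) (ht : 0 < t) : ∫ y, heatK ε t y = 1 := by
  rw [funext fun y => heatK_eq hε ht y, integral_const_mul, integral_gaussian]
  have := Real.pi_pos
  rw [show Real.pi / (1 / (4 * ε * t)) = 4 * Real.pi * ε * t by field_simp]
  exact inv_mul_cancel₀ (by positivity)

lemma heatK_meas (ε : ℝ) : Measurable fun q : ℝ × ℝ => heatK ε q.1 q.2 := by
  unfold heatK
  fun_prop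

lemma heatK_lintegral {ε t : ℝ} (hε : 0 < ε) (ht : 0 < t) :
    ∫⁻ y, ENNReal.ofReal (heatK ε t y) = 1 := by
  rw [← ofReal_integral_eq_lintegral_ofReal (heatK_integrable hε ht)
    (Eventually.of_forall fun y => heatK_nonneg hε ht.le y), heatK_integral hε ht, ENNReal.ofReal_one]

lemma heatK_lintegral_le {ε t : ℝ} (hε : 0 < ε) (ht : 0 ≤ t) :
    ∫⁻ y, ENNReal.ofReal (heatK ε t y) ≤ 1 := by
  rcases ht.eq_or_lt with h | h
  · subst h; simp [heatK_zero]
  · exact (heatK_lintegral hε h).le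

lemma heatK_sq {ε t : ℝ} (hε : 0 < ε) (ht : 0 < t) (y : ℝ) :
    y ^ 2 * heatK ε t y ≤ 16 * ε * t * heatK ε (2 * t) y := by
  have hpi := Real.pi_pos
  rw [heatK_eq hε ht, heatK_eq hε (by linarith : 0 < 2 * t)]
  set S := Real.sqrt (4 * Real.pi * ε * t) with hS
  have hS0 : 0 < S := by positivity
  have e1 : Real.sqrt (4 * Real.pi * ε * (2 * t)) = Real.sqrt 2 * S := by
    rw [hS, ← Real.sqrt_mul (by norm_num)]; congr 1; ring
  rw [e1]
  set a := y ^ 2 / (8 * ε * t) with ha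
  have ha0 : 0 ≤ a := by positivity
  have e2 : Real.exp (-(1 / (4 * ε * t)) * y ^ 2) = Real.exp (-a) * Real.exp (-a) := by
    rw [← Real.exp_add]; congr 1; rw [ha]; field_simp; ring
  have e3 : Real.exp (-(1 / (4 * ε * (2 * t))) * y ^ 2) = Real.exp (-a) := by
    congr 1; rw [ha]; field_simp; ring
  have e4 : y ^ 2 = 8 * ε * t * a := by rw [ha]; field_simp
  rw [e2, e3, e4]
  have h1 : a * Real.exp (-a) ≤ 1 := by
    rw [Real.exp_neg, ← div_eq_mul_inv, div_le_one (Real.exp_pos _)]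
    linarith [Real.add_one_le_exp a]
  have h2 : Real.sqrt 2 ≤ 2 := by
    rw [Real.sqrt_le_left (by norm_num)]; norm_num
  have h2p : 0 < Real.sqrt 2 := by positivity
  have h3 : 8 * ε * t * a * (S⁻¹ * (Real.exp (-a) * Real.exp (-a)))
      = (8 * ε * t * S⁻¹ * Real.exp (-a)) * (a * Real.exp (-a)) := by ring
  have h4 : 16 * ε * t * ((Real.sqrt 2 * S)⁻¹ * Real.exp (-a))
      = (8 * ε * t * S⁻¹ * Real.exp (-a)) * (2 / Real.sqrt 2) := by
    field_simp; norm_num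
  rw [h3, h4]
  refine mul_le_mul_of_nonneg_left (h1.trans ?_) (by positivity)
  rwa [le_div_iff₀ h2p, one_mul]

lemma heatK_abs {ε t : ℝ} (hε : 0 < ε) (ht : 0 < t) :
    ∫⁻ y, ENNReal.ofReal (heatK ε t y) * ENNReal.ofReal |y| ≤ ENNReal.ofReal (1 + 16 * ε * t) := by
  have h1 : ∀ y, ENNReal.ofReal (heatK ε t y) * ENNReal.ofReal |y| ≤
      ENNReal.ofReal (heatK ε t y) + ENNReal.ofReal (16 * ε * t) * ENNReal.ofReal (heatK ε (2 * t) y) := by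
    intro y
    have hn := heatK_nonneg hε ht.le y
    have hn2 := heatK_nonneg hε (by linarith : 0 ≤ 2 * t) y
    rw [← ENNReal.ofReal_mul hn, ← ENNReal.ofReal_mul (by positivity), ← ENNReal.ofReal_add hn (by positivity)]
    apply ENNReal.ofReal_le_ofReal
    have := heatK_sq hε ht y
    have h2 : |y| ≤ 1 + y ^ 2 := by
      rw [← sq_abs]; nlinarith [sq_nonneg (|y| - 1), abs_nonneg y]
    nlinarith [mul_le_mul_of_nonneg_left h2 hn]
  have hm : ∀ t, Measurable (heatK ε t) := fun t => (heatK_meas ε).comp (by fun_prop : Measurable fun y : ℝ => (t, y))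
  refine (lintegral_mono h1).trans ?_
  rw [lintegral_add_left (hm t).ennreal_ofReal, lintegral_const_mul _ (hm _).ennreal_ofReal,
    heatK_lintegral hε ht, heatK_lintegral hε (by linarith : 0 < 2 * t), mul_one,
    ENNReal.ofReal_add (by norm_num) (by positivity), ENNReal.ofReal_one]

/-- Tonelli bound for the Duhamel integral. -/
lemma duhamel_tonelli {ε t : ℝ} (hε : 0 < ε) {c : ℝ≥0∞} (g : ℝ × ℝ → ℝ≥0∞)
    (hg : Measurable g) (hc : ∀ s, 0 < s → ∫⁻ x, g (x, s) ≤ c) :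
    Measurable (fun x => ∫⁻ s in Set.Ioc 0 t, ∫⁻ y, ENNReal.ofReal (heatK ε (t - s) y) * g (x - y, s))
    ∧ ∫⁻ x, ∫⁻ s in Set.Ioc 0 t, ∫⁻ y, ENNReal.ofReal (heatK ε (t - s) y) * g (x - y, s)
      ≤ c * ENNReal.ofReal t := by
  have m3 : Measurable fun q : (ℝ × ℝ) × ℝ =>
      ENNReal.ofReal (heatK ε (t - q.1.2) q.2) * g (q.1.1 - q.2, q.1.2) := by
    refine Measurable.mul ?_ ?_
    · exact ((heatK_meas ε).comp (by fun_prop : Measurable fun q : (ℝ × ℝ) × ℝ => (t - q.1.2, q.2))).ennreal_ofReal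
    · exact hg.comp (by fun_prop)
  have m2 : Measurable fun q : ℝ × ℝ =>
      ∫⁻ y, ENNReal.ofReal (heatK ε (t - q.2) y) * g (q.1 - y, q.2) := m3.lintegral_prod_right'
  refine ⟨m2.lintegral_prod_right' (ν := volume.restrict (Set.Ioc 0 t)), ?_⟩
  rw [lintegral_lintegral_swap (f := fun x s => ∫⁻ y, ENNReal.ofReal (heatK ε (t - s) y) * g (x - y, s))
    m2.aemeasurable]
  have h1 : ∀ s ∈ Set.Ioc 0 t,
      ∫⁻ x, ∫⁻ y, ENNReal.ofReal (heatK ε (t - s) y) * g (x - y, s) ≤ c := by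
    intro s hs
    rw [lintegral_lintegral_swap (f := fun x y => ENNReal.ofReal (heatK ε (t - s) y) * g (x - y, s))
      (m3.comp (by fun_prop : Measurable fun q : ℝ × ℝ => ((q.1, s), q.2))).aemeasurable]
    have h2 : ∀ y, ∫⁻ x, ENNReal.ofReal (heatK ε (t - s) y) * g (x - y, s)
        ≤ ENNReal.ofReal (heatK ε (t - s) y) * c := by
      intro y
      rw [lintegral_const_mul _ (by fun_prop),
        lintegral_sub_right_eq_self (fun x => g (x, s)) y]
      gcongr
      exact hc s hs.1
    refine (lintegral_mono h2).trans ?_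
    have hm : Measurable (heatK ε (t - s)) :=
      (heatK_meas ε).comp (by fun_prop : Measurable fun y : ℝ => (t - s, y))
    rw [lintegral_mul_const _ hm.ennreal_ofReal]
    calc _ ≤ 1 * c := by
          gcongr
          exact heatK_lintegral_le hε (by linarith [hs.2])
      _ = c := one_mul c
  calc _ ≤ ∫⁻ s in Set.Ioc 0 t, c := setLIntegral_mono' measurableSet_Ioc h1
    _ = c * ENNReal.ofReal t := by
      rw [setLIntegral_const, Real.volume_Ioc, sub_zero]

lemma duhamel_initial {ε t : ℝ} (hε : 0 < ε) (ht : 0 < t) {f : ℝ → ℝ} {K : ℝ} (hf : Monotone f)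
    (hK : ∀ x, |f x| ≤ K) :
    Measurable (fun x => ‖(∫ y, heatK ε t y * f (x - y)) - f x‖ₑ) ∧
    ∫⁻ x, ‖(∫ y, heatK ε t y * f (x - y)) - f x‖ₑ
      ≤ ENNReal.ofReal (2 * K) * ENNReal.ofReal (1 + 16 * ε * t) := by
  have hfm := hf.measurable
  have hm : Measurable (heatK ε t) := (heatK_meas ε).comp (by fun_prop : Measurable fun y : ℝ => (t, y))
  have mm : Measurable fun x => ∫ y, heatK ε t y * f (x - y) := by
    have : StronglyMeasurable (fun q : ℝ × ℝ => heatK ε t q.2 * f (q.1 - q.2)) :=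
      Measurable.stronglyMeasurable (by fun_prop)
    exact this.integral_prod_right'.measurable
  refine ⟨(mm.sub hfm).enorm, ?_⟩
  have h1 : ∀ x, ‖(∫ y, heatK ε t y * f (x - y)) - f x‖ₑ ≤
      ∫⁻ y, ENNReal.ofReal (heatK ε t y) * ‖f (x - y) - f x‖ₑ := by
    intro x
    have i1 : Integrable fun y => heatK ε t y * f (x - y) :=
      (heatK_integrable hε ht).mul_bdd (c := K)
        (hfm.comp (by fun_prop)).aestronglyMeasurable (Eventually.of_forall fun y => hK _)
    have e : (∫ y, heatK ε t y * f (x - y)) - f x = ∫ y, heatK ε t y * (f (x - y) - f x) := by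
      have e2 : f x = ∫ y, heatK ε t y * f x := by
        rw [integral_mul_const, heatK_integral hε ht, one_mul]
      conv_lhs => rw [e2]
      rw [← integral_sub i1 ((heatK_integrable hε ht).mul_const _)]
      congr 1; ext y; ring
    rw [e]
    refine (enorm_integral_le_lintegral_enorm _).trans (le_of_eq ?_)
    congr 1; ext y
    rw [enorm_mul, Real.enorm_eq_ofReal (heatK_nonneg hε ht.le y)]
  refine (lintegral_mono h1).trans ?_
  rw [lintegral_lintegral_swap (f := fun x y => ENNReal.ofReal (heatK ε t y) * ‖f (x - y) - f x‖ₑ)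
    (by
      refine Measurable.aemeasurable ?_
      simp only [Function.uncurry_def]
      fun_prop)]
  have h2 : ∀ y, ∫⁻ x, ENNReal.ofReal (heatK ε t y) * ‖f (x - y) - f x‖ₑ ≤
      ENNReal.ofReal (2 * K) * (ENNReal.ofReal (heatK ε t y) * ENNReal.ofReal |y|) := by
    intro y
    have hK0 : 0 ≤ K := (abs_nonneg _).trans (hK 0)
    rw [lintegral_const_mul _ (by fun_prop)]
    have := mono_translate hf (fun x => (abs_le.1 (hK x)).1) (fun x => (abs_le.1 (hK x)).2) y
    rw [show K - -K = 2 * K by ring, ENNReal.ofReal_mul (by linarith)] at this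
    calc _ ≤ ENNReal.ofReal (heatK ε t y) * (ENNReal.ofReal (2 * K) * ENNReal.ofReal |y|) := by gcongr
      _ = _ := by ring
  refine (lintegral_mono h2).trans ?_
  rw [lintegral_const_mul _ (by fun_prop)]
  gcongr
  exact heatK_abs hε ht

/-- measurable extension of `u` -/
noncomputable def uBar (u : ℝ → ℝ → ℝ) (q : ℝ × ℝ) : ℝ :=
  Set.piecewise {q : ℝ × ℝ | 0 < q.2} (Function.uncurry u) (fun _ => 0) q

lemma uBar_eq {u : ℝ → ℝ → ℝ} (x : ℝ) {s : ℝ} (hs : 0 < s) : uBar u (x, s) = u x s := by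
  unfold uBar
  rw [Set.piecewise_eq_of_mem _ _ _ (show (x, s) ∈ {q : ℝ × ℝ | 0 < q.2} from hs)]
  rfl

lemma uBar_meas {u : ℝ → ℝ → ℝ}
    (hs : ∀ x t, 0 < t → ContDiffAt ℝ (⊤ : ℕ∞) (Function.uncurry u) (x, t)) :
    Measurable (uBar u) := by
  have ho : MeasurableSet {q : ℝ × ℝ | 0 < q.2} :=
    measurableSet_lt measurable_const measurable_snd
  refine ContinuousOn.measurable_piecewise (f := Function.uncurry u) (g := fun _ => 0)
    (fun q hq => ?_) continuousOn_const ho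
  exact (hs q.1 q.2 hq).continuousAt.continuousWithinAt

lemma dX_meas (F : ℝ × ℝ → ℝ) : Measurable (dX F) := by
  unfold dX
  exact measurable_fderiv_apply_const ℝ F (1, 0)

lemma ker_abs {J : ℝ → ℝ} (hJ : Ker J) : ∫⁻ z, ‖J z‖ₑ * ENNReal.ofReal |z| < ⊤ := by
  have h : Integrable fun z => J z * z := by
    refine Integrable.mono (hJ.int.add hJ.int2) (hJ.int.1.mul measurable_id.aestronglyMeasurable)
      (Eventually.of_forall fun z => ?_)
    rw [norm_mul, Real.norm_eq_abs, Real.norm_eq_abs, abs_of_nonneg (hJ.pos z)]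
    refine le_trans ?_ (le_abs_self _)
    have h2 : |z| ≤ 1 + z ^ 2 := by
      rw [← sq_abs]; nlinarith [sq_nonneg (|z| - 1), abs_nonneg z]
    have := mul_le_mul_of_nonneg_left h2 (hJ.pos z)
    simp only [Pi.add_apply]
    linarith
  have h2 := h.2
  rw [hasFiniteIntegral_iff_enorm] at h2
  refine lt_of_le_of_lt (le_of_eq ?_) h2
  congr 1; ext z
  rw [enorm_mul, ← Real.enorm_abs z, Real.enorm_eq_ofReal (abs_nonneg z)]

lemma nonlocal_bound {J : ℝ → ℝ} (hJ : Ker J) {u : ℝ → ℝ → ℝ} {K : ℝ}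
    (hK : ∀ x t, 0 < t → |u x t| ≤ K)
    (hs : ∀ x t, 0 < t → ContDiffAt ℝ (⊤ : ℕ∞) (Function.uncurry u) (x, t))
    (hmono : ∀ t > (0 : ℝ), Monotone fun x => u x t) :
    ∃ g : ℝ × ℝ → ℝ≥0∞, Measurable g ∧ (∃ c : ℝ≥0∞, c < ⊤ ∧ ∀ s, 0 < s → ∫⁻ x, g (x, s) ≤ c) ∧
      ∀ x s, 0 < s → ‖(∫ z, J z * u (x - z) s) - u x s‖ₑ ≤ g (x, s) := by
  have hub := uBar_meas hs
  set Jm := hJ.int.1.mk J with hJm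
  have mJ : Measurable Jm := hJ.int.1.stronglyMeasurable_mk.measurable
  have eJ : J =ᵐ[volume] Jm := hJ.int.1.ae_eq_mk
  have m2 : Measurable fun q : (ℝ × ℝ) × ℝ =>
      ‖Jm q.2‖ₑ * ‖uBar u (q.1.1 - q.2, q.1.2) - uBar u (q.1.1, q.1.2)‖ₑ := by fun_prop
  refine ⟨fun q => ∫⁻ z, ‖Jm z‖ₑ * ‖uBar u (q.1 - z, q.2) - uBar u (q.1, q.2)‖ₑ,
    m2.lintegral_prod_right', ⟨ENNReal.ofReal (2 * K) * ∫⁻ z, ‖J z‖ₑ * ENNReal.ofReal |z|,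
      ENNReal.mul_lt_top ENNReal.ofReal_lt_top (ker_abs hJ), ?_⟩, ?_⟩
  · intro s h0
    simp only
    rw [lintegral_lintegral_swap
      (f := fun x z => ‖Jm z‖ₑ * ‖uBar u (x - z, s) - uBar u (x, s)‖ₑ)
      (m2.comp (by fun_prop : Measurable fun q : ℝ × ℝ => ((q.1, s), q.2))).aemeasurable]
    have h2 : ∀ z, ∫⁻ x, ‖Jm z‖ₑ * ‖uBar u (x - z, s) - uBar u (x, s)‖ₑ
        ≤ ENNReal.ofReal (2 * K) * (‖Jm z‖ₑ * ENNReal.ofReal |z|) := by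
      intro z
      rw [lintegral_const_mul _ (by fun_prop)]
      simp only [uBar_eq _ h0]
      have hK0 : 0 ≤ K := (abs_nonneg _).trans (hK 0 s h0)
      have := mono_translate (hmono s h0) (fun x => (abs_le.1 (hK x s h0)).1)
        (fun x => (abs_le.1 (hK x s h0)).2) z
      rw [show K - -K = 2 * K by ring, ENNReal.ofReal_mul (by linarith)] at this
      calc _ ≤ ‖Jm z‖ₑ * (ENNReal.ofReal (2 * K) * ENNReal.ofReal |z|) := by gcongr
        _ = _ := by ring
    refine (lintegral_mono h2).trans ?_
    rw [lintegral_const_mul _ (by fun_prop)]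
    refine mul_le_mul' le_rfl ?_
    refine le_of_eq (lintegral_congr_ae ?_)
    filter_upwards [eJ] with z hz
    rw [hz]
  · intro x s h0
    have hc : Continuous fun y => u y s := continuous_iff_continuousAt.2 fun y =>
      ContinuousAt.comp (f := fun y : ℝ => ((y, s) : ℝ × ℝ)) (hs y s h0).continuousAt (by fun_prop)
    have i1 : Integrable fun z => J z * u (x - z) s :=
      hJ.int.mul_bdd (c := K) (hc.comp (by fun_prop : Continuous fun z => x - z)).aestronglyMeasurable
        (Eventually.of_forall fun y => hK _ _ h0)
    have e : (∫ z, J z * u (x - z) s) - u x s = ∫ z, J z * (u (x - z) s - u x s) := by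
      have e2 : u x s = ∫ z, J z * u x s := by
        rw [integral_mul_const, hJ.one, one_mul]
      conv_lhs => rw [e2]
      rw [← integral_sub i1 (hJ.int.mul_const _)]
      congr 1; ext y; ring
    rw [e]
    refine (enorm_integral_le_lintegral_enorm _).trans (le_of_eq (lintegral_congr_ae ?_))
    filter_upwards [eJ] with z hz
    simp only [uBar_eq _ h0]
    rw [enorm_mul, hz]

lemma transport_bound {u : ℝ → ℝ → ℝ} {K : ℝ}
    (hK : ∀ x t, 0 < t → |u x t| ≤ K)
    (hs : ∀ x t, 0 < t → ContDiffAt ℝ (⊤ : ℕ∞) (Function.uncurry u) (x, t))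
    (hmono : ∀ t > (0 : ℝ), Monotone fun x => u x t) :
    ∃ g : ℝ × ℝ → ℝ≥0∞, Measurable g ∧ (∃ c : ℝ≥0∞, c < ⊤ ∧ ∀ s, 0 < s → ∫⁻ x, g (x, s) ≤ c) ∧
      ∀ x s, 0 < s → ‖u x s * deriv (fun z => u z s) x‖ₑ ≤ g (x, s) := by
  have mX := dX_meas (Function.uncurry u)
  have hx : ∀ x s, 0 < s → HasDerivAt (fun y => u y s) (dX (Function.uncurry u) (x, s)) x :=
    fun x s h => hasDerivAt_x (F := Function.uncurry u) (hs x s h).diffAt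
  refine ⟨fun q => ENNReal.ofReal K * ‖dX (Function.uncurry u) q‖ₑ, by fun_prop,
    ⟨ENNReal.ofReal K * ENNReal.ofReal (2 * K), 
      ENNReal.mul_lt_top ENNReal.ofReal_lt_top ENNReal.ofReal_lt_top, ?_⟩, ?_⟩
  · intro s h0
    simp only
    rw [lintegral_const_mul _ (by fun_prop)]
    gcongr
    have hcx : Continuous fun y => dX (Function.uncurry u) (y, s) :=
      continuous_iff_continuousAt.2 fun x =>
        ContinuousAt.comp (f := fun y : ℝ => ((y, s) : ℝ × ℝ))
          (contDiffAt_dX (hs x s h0)).continuousAt (by fun_prop)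
    refine lintegral_enorm_le_of_interval (R₀ := 0) (fun a b => hcx.intervalIntegrable a b) ?_
    intro R hR
    have hn : ∀ x, |dX (Function.uncurry u) (x, s)| = dX (Function.uncurry u) (x, s) := fun x => by
      rw [abs_of_nonneg]
      rw [← (hx x s h0).deriv]
      exact (hmono s h0).deriv_nonneg
    simp only [hn]
    rw [intervalIntegral.integral_eq_sub_of_hasDerivAt (fun y _ => hx y s h0)
      (hcx.intervalIntegrable _ _)]
    linarith [(abs_le.1 (hK R s h0)).2, (abs_le.1 (hK (-R) s h0)).1]
  · intro x s h0
    rw [(hx x s h0).deriv, enorm_mul]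
    refine mul_le_mul' ?_ le_rfl
    rw [← Real.enorm_abs, Real.enorm_eq_ofReal (abs_nonneg _)]
    exact ENNReal.ofReal_le_ofReal (hK x s h0)

lemma duhamel_term {ε t : ℝ} (hε : 0 < ε) (ht : 0 < t) {f : ℝ → ℝ → ℝ} {g : ℝ × ℝ → ℝ≥0∞}
    (hfg : ∀ x s, 0 < s → ‖f x s‖ₑ ≤ g (x, s)) (x : ℝ) :
    ‖∫ s in (0 : ℝ)..t, ∫ y, heatK ε (t - s) y * f (x - y) s‖ₑ ≤
      ∫⁻ s in Set.Ioc 0 t, ∫⁻ y, ENNReal.ofReal (heatK ε (t - s) y) * g (x - y, s) := by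
  rw [intervalIntegral.integral_of_le ht.le]
  refine (enorm_integral_le_lintegral_enorm _).trans ?_
  refine setLIntegral_mono' measurableSet_Ioc fun s hs => ?_
  refine (enorm_integral_le_lintegral_enorm _).trans ?_
  refine lintegral_mono fun y => ?_
  rw [enorm_mul, Real.enorm_eq_ofReal (heatK_nonneg hε (by linarith [hs.2]) y)]
  gcongr
  exact hfg _ _ hs.1

lemma duhamel_L1 {ε : ℝ} (hε : 0 < ε) {J : ℝ → ℝ} (hJ : Ker J) {u : ℝ → ℝ → ℝ} {u₀ : ℝ → ℝ}
    (hK : ∃ K, ∀ x t, 0 < t → |u x t| ≤ K)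
    (hs : ∀ x t, 0 < t → ContDiffAt ℝ (⊤ : ℕ∞) (Function.uncurry u) (x, t))
    (hmono : ∀ t > (0 : ℝ), Monotone fun x => u x t)
    (h0m : Monotone u₀) (h0b : ∃ M, ∀ x, |u₀ x| ≤ M)
    (hD : IsDuhamelSol ε J u₀ u) (T : ℝ) :
    ∃ C : ℝ≥0∞, C < ⊤ ∧ ∀ t, 0 < t → t ≤ T → ∫⁻ x, ‖u x t - u₀ x‖ₑ ≤ C := by
  obtain ⟨K, hK⟩ := hK
  obtain ⟨M, hM⟩ := h0b
  obtain ⟨g1, mg1, ⟨c1, hc1, hg1⟩, hf1⟩ := nonlocal_bound hJ hK hs hmono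
  obtain ⟨g2, mg2, ⟨c2, hc2, hg2⟩, hf2⟩ := transport_bound hK hs hmono
  refine ⟨ENNReal.ofReal (2 * M) * ENNReal.ofReal (1 + 16 * ε * T) + c1 * ENNReal.ofReal T
    + c2 * ENNReal.ofReal T, ?_, ?_⟩
  · refine ENNReal.add_lt_top.2 ⟨ENNReal.add_lt_top.2 ⟨?_, ?_⟩, ?_⟩ <;>
      refine ENNReal.mul_lt_top ?_ ?_ <;> first | assumption | exact ENNReal.ofReal_lt_top
  intro t ht htT
  obtain ⟨mA, hA⟩ := duhamel_initial hε ht h0m hM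
  obtain ⟨m1, h1⟩ := duhamel_tonelli (t := t) hε g1 mg1 hg1
  obtain ⟨m2, h2⟩ := duhamel_tonelli (t := t) hε g2 mg2 hg2
  have key : ∀ x, ‖u x t - u₀ x‖ₑ ≤ (‖(∫ y, heatK ε t y * u₀ (x - y)) - u₀ x‖ₑ
      + ∫⁻ s in Set.Ioc 0 t, ∫⁻ y, ENNReal.ofReal (heatK ε (t - s) y) * g1 (x - y, s))
      + ∫⁻ s in Set.Ioc 0 t, ∫⁻ y, ENNReal.ofReal (heatK ε (t - s) y) * g2 (x - y, s) := by
    intro x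
    have t1 := duhamel_term hε ht (f := fun x s => (∫ z, J z * u (x - z) s) - u x s) hf1 x
    have t2 := duhamel_term hε ht (f := fun x s => u x s * deriv (fun z => u z s) x) hf2 x
    rw [hD x t ht]
    refine le_trans ?_ (add_le_add (add_le_add le_rfl t1) t2)
    rw [show ∀ a b c d : ℝ, a + b - c - d = ((a - d) + b) - c by intros; ring]
    exact enorm_sub_le.trans (add_le_add (enorm_add_le _ _) le_rfl)
  refine (lintegral_mono key).trans ?_
  rw [lintegral_add_right _ m2, lintegral_add_right _ m1]
  refine add_le_add (add_le_add (hA.trans ?_) (h1.trans ?_)) (h2.trans ?_)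
  all_goals gcongr

lemma limit_zero_of_L1 {l : Filter ℝ} (hl : ∀ S ∈ l, volume S = ⊤) {g : ℝ → ℝ} {a : ℝ}
    (hg : AEMeasurable g) (hi : ∫⁻ x, ‖g x‖ₑ < ⊤) (ht : Tendsto g l (nhds a)) : a = 0 := by
  by_contra ha
  have hpos : 0 < ‖a‖ₑ := enorm_pos.2 ha
  obtain ⟨δ, hδ0, hδ⟩ := exists_between hpos
  have h1 : Tendsto (fun x => ‖g x‖ₑ) l (nhds ‖a‖ₑ) := ht.enorm
  have h2 : {x | δ ≤ ‖g x‖ₑ} ∈ l := by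
    filter_upwards [h1.eventually (lt_mem_nhds hδ)] with x hx using le_of_lt hx
  have h3 := meas_ge_le_lintegral_div (μ := volume) hg.enorm hδ0.ne' (hδ.trans_le le_top).ne
  rw [hl _ h2] at h3
  exact absurd (h3.trans_lt (ENNReal.div_lt_top hi.ne hδ0.ne')) (lt_irrefl _)

lemma mono_limits {um up : ℝ} (hu : um < up) {f : ℝ → ℝ} (hf : Monotone f) {K : ℝ}
    (hK : ∀ x, |f x| ≤ K) (hi : ∫⁻ x, ‖f x - riemannDatum um up x‖ₑ < ⊤) :
    Tendsto f atBot (nhds um) ∧ Tendsto f atTop (nhds up) := by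
  have hm : AEMeasurable (fun x => f x - riemannDatum um up x) :=
    (hf.measurable.sub (riemann_mono hu).measurable).aemeasurable
  constructor
  · have h1 := tendsto_atBot_ciInf hf ⟨-K, by rintro _ ⟨x, rfl⟩; exact (abs_le.1 (hK x)).1⟩
    have h2 : Tendsto (fun x => f x - riemannDatum um up x) atBot (nhds ((⨅ i, f i) - um)) := by
      refine (h1.sub_const um).congr' ?_
      filter_upwards [eventually_lt_atBot (0 : ℝ)] with x hx
      rw [riemannDatum, if_pos hx]
    have h3 := limit_zero_of_L1 (fun S hS => by
      obtain ⟨X, hX⟩ := mem_atBot_sets.1 hS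
      refine top_le_iff.1 ?_
      rw [← Real.volume_Iic (a := X)]
      exact measure_mono hX) hm hi h2
    rwa [sub_eq_zero.1 h3] at h1
  · have h1 := tendsto_atTop_ciSup hf ⟨K, by rintro _ ⟨x, rfl⟩; exact (abs_le.1 (hK x)).2⟩
    have h2 : Tendsto (fun x => f x - riemannDatum um up x) atTop (nhds ((⨆ i, f i) - up)) := by
      refine (h1.sub_const up).congr' ?_
      filter_upwards [eventually_ge_atTop (0 : ℝ)] with x hx
      rw [riemannDatum, if_neg (not_lt.2 hx)]
    have h3 := limit_zero_of_L1 (fun S hS => by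
      obtain ⟨X, hX⟩ := mem_atTop_sets.1 hS
      refine top_le_iff.1 ?_
      rw [← Real.volume_Ici (a := X)]
      exact measure_mono hX) hm hi h2
    rwa [sub_eq_zero.1 h3] at h1

lemma init_mono {u₀ v : ℝ → ℝ} (hv : Integrable v) (hv0 : ∀ᵐ x ∂(volume : Measure ℝ), 0 ≤ v x)
    (hu₀v : ∀ x, u₀ x = u₀ 0 + ∫ s in (0 : ℝ)..x, v s) : Monotone u₀ := by
  intro x y hxy
  have h1 := intervalIntegral.integral_interval_sub_left (μ := volume) (f := v) (a := 0) (b := y) (c := x)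
    hv.intervalIntegrable hv.intervalIntegrable
  have h2 : 0 ≤ ∫ s in x..y, v s := intervalIntegral.integral_nonneg_of_ae hxy hv0
  rw [hu₀v x, hu₀v y]
  linarith

lemma init_L1 {um up : ℝ} {u₀ : ℝ → ℝ} 
    (hm : IntegrableOn (fun x => u₀ x - um) (Set.Iio 0))
    (hp : IntegrableOn (fun x => u₀ x - up) (Set.Ioi 0)) :
    ∫⁻ x, ‖u₀ x - riemannDatum um up x‖ₑ < ⊤ := by
  rw [← integrableOn_Ici_iff_integrableOn_Ioi] at hp
  have h1 : IntegrableOn (fun x => u₀ x - riemannDatum um up x) (Set.Iio 0) :=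
    hm.congr_fun (fun x hx => by simp only [riemannDatum]; rw [if_pos (show x < 0 from hx)]) measurableSet_Iio
  have h2 : IntegrableOn (fun x => u₀ x - riemannDatum um up x) (Set.Ici 0) :=
    hp.congr_fun (fun x hx => by simp only [riemannDatum]; rw [if_neg (not_lt.2 (show 0 ≤ x from hx))]) measurableSet_Ici
  have h3 := h1.union h2
  rw [Set.Iio_union_Ici, integrableOn_univ] at h3
  exact h3.2

lemma riem_rare {um up : ℝ} (hu : um < up) {t : ℝ} (ht : 0 < t) :
    ∫⁻ x, ‖riemannDatum um up x - rarefactionWave um up x t‖ₑ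
      ≤ ENNReal.ofReal ((up - um) * (2 * (max |um| |up| * t))) := by
  set K := max |um| |up| with hK
  have h1 : ∀ x, ‖riemannDatum um up x - rarefactionWave um up x t‖ₑ ≤
      (Set.Icc (-(K * t)) (K * t)).indicator (fun _ => ENNReal.ofReal (up - um)) x := by
    intro x
    have k1 : up ≤ K := (le_abs_self _).trans (le_max_right _ _)
    have k2 : -um ≤ K := (neg_le_abs _).trans (le_max_left _ _)
    have k0 : 0 ≤ K := (abs_nonneg _).trans (le_max_left _ _)
    by_cases hx : x ∈ Set.Icc (-(K * t)) (K * t)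
    · rw [Set.indicator_of_mem hx, ← Real.enorm_abs, Real.enorm_eq_ofReal (abs_nonneg _)]
      apply ENNReal.ofReal_le_ofReal
      have a1 := riemann_ge hu x
      have a2 := riemann_le hu x
      have a3 : um ≤ rarefactionWave um up x t := by
        rw [rarefactionWave_eq hu _ ht]; exact le_max_left _ _
      have a4 : rarefactionWave um up x t ≤ up := by
        rw [rarefactionWave_eq hu _ ht]; exact max_le hu.le (min_le_left _ _)
      rw [abs_le]; constructor <;> linarith
    · rw [Set.indicator_of_notMem hx]
      rw [Set.mem_Icc, not_and_or, not_le, not_le] at hx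
      have kt : 0 ≤ K * t := mul_nonneg k0 ht.le
      have : riemannDatum um up x - rarefactionWave um up x t = 0 := by
        rcases hx with h | h
        · have h2 : x ≤ um * t := by nlinarith
          rw [rarefactionWave, if_pos h2, riemannDatum, if_pos (by linarith), sub_self]
        · have h2 : up * t ≤ x := by nlinarith
          have h3 : ¬ x ≤ um * t := by
            have : um * t < up * t := mul_lt_mul_of_pos_right hu ht
            linarith
          rw [rarefactionWave, if_neg h3, if_pos h2, riemannDatum, if_neg (by linarith), sub_self]
      rw [this, enorm_zero]
  refine (lintegral_mono h1).trans ?_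
  rw [lintegral_indicator measurableSet_Icc, setLIntegral_const, Real.volume_Icc,
    ← ENNReal.ofReal_mul (by linarith)]
  apply ENNReal.ofReal_le_ofReal
  apply le_of_eq; ring

lemma lipschitz_L1_sup {z : ℝ → ℝ} {t L : ℝ} (ht : 0 < t) (hL : 0 ≤ L) (hc : Continuous z)
    (hz : ∀ x y, x ≤ y → |z y - z x| ≤ (y - x) / t) (hi : ∫⁻ x, ‖z x‖ₑ ≤ ENNReal.ofReal L) (x : ℝ) :
    |z x| ^ 2 ≤ 4 * L / t := by
  set a := |z x| with ha
  have ha0 : 0 ≤ a := abs_nonneg _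
  have hta : 0 ≤ t * a / 2 := by positivity
  have h1 := interval_abs_le_of_lintegral hL (by linarith : x ≤ x + t * a / 2)
    (hc.intervalIntegrable _ _) hi
  have h2 := intervalIntegral.integral_mono_on (μ := volume) (by linarith : x ≤ x + t * a / 2)
    (intervalIntegrable_const (c := a / 2)) (hc.abs.intervalIntegrable _ _) (fun y hy => by
      have h3 := hz x y hy.1
      have h4 : (y - x) / t ≤ a / 2 := by
        rw [div_le_iff₀ ht]; linarith [hy.2]
      have h5 := abs_sub_abs_le_abs_sub (z x) (z y)
      rw [abs_sub_comm] at h5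
      linarith)
  rw [intervalIntegral.integral_const, smul_eq_mul] at h2
  rw [le_div_iff₀ ht]
  nlinarith

lemma Adm.sup_bound {ε : ℝ} {J : ℝ → ℝ} {um up : ℝ} {u : ℝ → ℝ → ℝ} (A : Adm ε J um up u)
    (hu : um < up) {t L : ℝ} (ht : 0 < t) (hL : 0 ≤ L)
    (hi : ∫⁻ x, ‖u x t - rarefactionWave um up x t‖ₑ ≤ ENNReal.ofReal L) (x : ℝ) :
    |u x t - rarefactionWave um up x t| ^ 2 ≤ 4 * L / t := by
  refine lipschitz_L1_sup (z := fun x => u x t - rarefactionWave um up x t) ht hL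
    ((A.cont ht).sub (rare_cont hu ht)) ?_ hi x
  intro x y hxy
  have h1 : u x t ≤ u y t := A.mono t ht hxy
  have h2 : u y t - y / t ≤ u x t - x / t := A.slope_le ht hxy
  have hd : x / t ≤ y / t := div_le_div_of_nonneg_right hxy ht.le
  have h3 : rarefactionWave um up x t ≤ rarefactionWave um up y t := by
    rw [rarefactionWave_eq hu _ ht, rarefactionWave_eq hu _ ht]
    exact max_le_max le_rfl (min_le_min le_rfl hd)
  have h4 : rarefactionWave um up y t ≤ rarefactionWave um up x t + (y / t - x / t) := by
    rw [rarefactionWave_eq hu _ ht, rarefactionWave_eq hu _ ht]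
    refine max_le (by linarith [le_max_left um (min up (x / t))]) ?_
    have h5 := le_max_right um (min up (x / t))
    refine le_trans ?_ (add_le_add h5 le_rfl)
    rw [min_add]
    exact min_le_min (by linarith) (by linarith)
  rw [sub_div, _root_.abs_le]
  constructor <;> linarith

lemma Lp_bound {p : ℝ≥0∞} (hp : 1 ≤ p) {C₁ : ℝ} (hC : 0 < C₁) : ∃ C > (0 : ℝ),
    ∀ (z : ℝ → ℝ) (t l : ℝ), 0 < t → 0 < l → (∀ x, |z x| ^ 2 ≤ 4 * (C₁ * l) / t) →
      ∫⁻ x, ‖z x‖ₑ ≤ ENNReal.ofReal (C₁ * l) →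
      eLpNorm z p volume ≤ ENNReal.ofReal
        (C * t ^ (-(1 - p⁻¹.toReal) / 2) * l ^ ((1 + p⁻¹.toReal) / 2)) := by
  have hA : ∀ (z : ℝ → ℝ) (t l : ℝ), 0 < t → 0 < l → (∀ x, |z x| ^ 2 ≤ 4 * (C₁ * l) / t) →
      ∀ x, |z x| ≤ (4 * C₁) ^ (1 / 2 : ℝ) * t ^ (-(1 : ℝ) / 2) * l ^ (1 / 2 : ℝ) := by
    intro z t l ht hl h x
    have h1 : |z x| ≤ Real.sqrt (4 * (C₁ * l) / t) := Real.le_sqrt_of_sq_le (h x)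
    refine h1.trans (le_of_eq ?_)
    rw [Real.sqrt_eq_rpow, Real.div_rpow (by positivity) ht.le, ← mul_assoc,
      Real.mul_rpow (by positivity) hl.le, neg_div, Real.rpow_neg ht.le]
    ring
  rcases eq_or_ne p ⊤ with rfl | hpt
  · refine ⟨(4 * C₁) ^ (1 / 2 : ℝ), by positivity, fun z t l ht hl h1 _ => ?_⟩
    rw [eLpNorm_exponent_top]
    refine eLpNormEssSup_le_of_ae_bound (Eventually.of_forall fun x => ?_)
    have := hA z t l ht hl h1 x
    simpa using this
  · set q := p.toReal with hq
    have hq1 : 1 ≤ q := by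
      rw [hq, ← ENNReal.toReal_one]
      exact ENNReal.toReal_mono hpt hp
    have hq0 : 0 < q := by linarith
    have hp0 : p ≠ 0 := (zero_lt_one.trans_le hp).ne'
    refine ⟨(((4 * C₁) ^ (1 / 2 : ℝ)) ^ (q - 1) * C₁) ^ (1 / q), by positivity,
      fun z t l ht hl h1 h2 => ?_⟩
    have hz := hA z t l ht hl h1
    set A := (4 * C₁) ^ (1 / 2 : ℝ) * t ^ (-(1 : ℝ) / 2) * l ^ (1 / 2 : ℝ) with hAd
    have hA0 : 0 < A := by positivity
    rw [eLpNorm_eq_lintegral_rpow_enorm_toReal hp0 hpt, ← hq]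
    have h3 : ∀ x, ‖z x‖ₑ ^ q ≤ ENNReal.ofReal (A ^ (q - 1)) * ‖z x‖ₑ := by
      intro x
      rw [← Real.enorm_abs, Real.enorm_eq_ofReal (abs_nonneg _),
        ENNReal.ofReal_rpow_of_nonneg (abs_nonneg _) hq0.le, ← ENNReal.ofReal_mul (by positivity)]
      apply ENNReal.ofReal_le_ofReal
      have e : |z x| ^ q = |z x| ^ (q - 1) * |z x| := by
        rcases (abs_nonneg (z x)).eq_or_lt with h | h
        · rw [← h, mul_zero, Real.zero_rpow hq0.ne']
        · rw [← Real.rpow_add_one h.ne']; congr 1; ring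
      rw [e]
      exact mul_le_mul_of_nonneg_right
        (Real.rpow_le_rpow (abs_nonneg _) (hz x) (by linarith)) (abs_nonneg _)
    have h4 : ∫⁻ x, ‖z x‖ₑ ^ q ≤ ENNReal.ofReal (A ^ (q - 1) * (C₁ * l)) := by
      refine (lintegral_mono h3).trans ?_
      rw [lintegral_const_mul' _ _ ENNReal.ofReal_ne_top, ENNReal.ofReal_mul (by positivity)]
      gcongr
    refine (ENNReal.rpow_le_rpow h4 (by positivity : 0 ≤ 1 / q)).trans ?_
    rw [ENNReal.ofReal_rpow_of_nonneg (by positivity) (by positivity)]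
    apply ENNReal.ofReal_le_ofReal
    apply le_of_eq
    rw [ENNReal.toReal_inv, ← hq]
    have et : (0:ℝ) ≤ t := ht.le
    have el : (0:ℝ) ≤ l := hl.le
    have e1 : A ^ (q - 1) * (C₁ * l) = (((4 * C₁) ^ (1 / 2 : ℝ)) ^ (q - 1) * C₁)
        * t ^ (-(1 : ℝ) / 2 * (q - 1)) * l ^ (1 / 2 * (q - 1) + 1) := by
      rw [hAd, Real.mul_rpow (by positivity) (by positivity),
        Real.mul_rpow (by positivity) (by positivity), ← Real.rpow_mul et, ← Real.rpow_mul el,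
        Real.rpow_add hl, Real.rpow_one]
      ring
    rw [e1, Real.mul_rpow (by positivity) (by positivity),
      Real.mul_rpow (by positivity) (by positivity), ← Real.rpow_mul et, ← Real.rpow_mul el]
    congr 2
    · congr 1; field_simp
    · field_simp; ring

/-- the standing assumptions on the regularized solution -/
structure Hyp (ε : ℝ) (J u₀ : ℝ → ℝ) (w : ℝ → ℝ → ℝ) (M : ℝ) (u : ℝ → ℝ → ℝ) : Prop where
  eps : 0 < ε
  bd : ∃ K, ∀ x t, 0 < t → |u x t| ≤ K
  smooth : ∀ x t, 0 < t → ContDiffAt ℝ (⊤ : ℕ∞) (Function.uncurry u) (x, t)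
  bdd : ∀ t₀ > (0 : ℝ), ∀ n : ℕ, ∃ K, ∀ x t, t₀ < t →
        ‖iteratedFDeriv ℝ n (Function.uncurry u) (x, t)‖ ≤ K
  pde : ∀ x t, 0 < t →
        HasDerivAt (fun s => u x s)
          (ε * iteratedDeriv 2 (fun y => u y t) x + ((∫ z, J z * u (x - z) t) - u x t)
            - u x t * deriv (fun y => u y t) x) t
  mono : ∀ t > (0 : ℝ), Monotone fun x => u x t
  duh : IsDuhamelSol ε J u₀ u
  int : ∀ t > (0 : ℝ), Integrable fun x => u x t - w x t
  near : ∀ t ∈ Set.Ioo (0 : ℝ) 1, (∫ x, |u x t - w x t|) ≤ M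

section
variable {J : ℝ → ℝ} {um up : ℝ} {u₀ : ℝ → ℝ} {w : ℝ → ℝ → ℝ} {M : ℝ}

lemma Hyp.L1_riem {ε : ℝ} {u : ℝ → ℝ → ℝ} (H : Hyp ε J u₀ w M u) (hJ : Ker J)
    (h0m : Monotone u₀) (h0b : ∃ M, ∀ x, |u₀ x| ≤ M)
    (h0 : ∫⁻ x, ‖u₀ x - riemannDatum um up x‖ₑ < ⊤) (hu : um < up) (T : ℝ) :
    ∃ C : ℝ≥0∞, C < ⊤ ∧ ∀ t, 0 < t → t ≤ T → ∫⁻ x, ‖u x t - riemannDatum um up x‖ₑ ≤ C := by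
  obtain ⟨C, hC, h⟩ := duhamel_L1 H.eps hJ H.bd H.smooth H.mono h0m h0b H.duh T
  refine ⟨C + ∫⁻ x, ‖u₀ x - riemannDatum um up x‖ₑ, ENNReal.add_lt_top.2 ⟨hC, h0⟩, ?_⟩
  intro t ht htT
  refine le_trans ?_ (add_le_add (h t ht htT) le_rfl)
  have mm : Measurable fun x => ‖u₀ x - riemannDatum um up x‖ₑ :=
    (h0m.measurable.sub (riemann_mono hu).measurable).enorm
  rw [← lintegral_add_right _ mm]
  refine lintegral_mono fun x => ?_
  have := enorm_add_le (u x t - u₀ x) (u₀ x - riemannDatum um up x)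
  rwa [sub_add_sub_cancel] at this

lemma Hyp.adm {ε : ℝ} {u : ℝ → ℝ → ℝ} (H : Hyp ε J u₀ w M u) (hJ : Ker J)
    (h0m : Monotone u₀) (h0b : ∃ M, ∀ x, |u₀ x| ≤ M)
    (h0 : ∫⁻ x, ‖u₀ x - riemannDatum um up x‖ₑ < ⊤) (hu : um < up) : Adm ε J um up u := by
  have hl : ∀ t > 0, Tendsto (fun x => u x t) atBot (nhds um) ∧
      Tendsto (fun x => u x t) atTop (nhds up) := by
    intro t ht
    obtain ⟨C, hC, h⟩ := H.L1_riem hJ h0m h0b h0 hu t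
    obtain ⟨K, hK⟩ := H.bd
    exact mono_limits hu (H.mono t ht) (fun x => hK x t ht) ((h t ht le_rfl).trans_lt hC)
  exact { eps := H.eps, ker := hJ, smooth := H.smooth, bdd := H.bdd, pde := H.pde, mono := H.mono,
          bot := fun t ht => (hl t ht).1, top := fun t ht => (hl t ht).2 }

lemma Hyp.near_w {ε : ℝ} {u : ℝ → ℝ → ℝ} (H : Hyp ε J u₀ w M u) {t : ℝ}
    (ht : t ∈ Set.Ioo (0 : ℝ) 1) : ∫⁻ x, ‖u x t - w x t‖ₑ ≤ ENNReal.ofReal M := by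
  rw [← ofReal_integral_norm_eq_lintegral_enorm (H.int t ht.1)]
  exact ENNReal.ofReal_le_ofReal (H.near t ht)

lemma uniform_B (hJ : Ker J)
    (h0m : Monotone u₀) (h0b : ∃ M, ∀ x, |u₀ x| ≤ M)
    (h0 : ∫⁻ x, ‖u₀ x - riemannDatum um up x‖ₑ < ⊤) (hu : um < up) :
    ∃ B : ℝ, 0 ≤ B ∧ ∀ ε u, Hyp ε J u₀ w M u → ∀ t ∈ Set.Ioo (0 : ℝ) 1,
      ∫⁻ x, ‖u x t - riemannDatum um up x‖ₑ ≤ ENNReal.ofReal B := by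
  by_cases hex : ∃ ε u, Hyp ε J u₀ w M u
  · obtain ⟨ε₁, u₁, H₁⟩ := hex
    obtain ⟨C, hC, h⟩ := H₁.L1_riem hJ h0m h0b h0 hu 1
    refine ⟨(ENNReal.ofReal M + ENNReal.ofReal M + C).toReal, ENNReal.toReal_nonneg, ?_⟩
    intro ε u H t ht
    rw [ENNReal.ofReal_toReal (by simp [hC.ne])]
    refine le_trans ?_ (add_le_add (add_le_add (H.near_w ht) (H₁.near_w ht)) (h t ht.1 ht.2.le))
    have mm : Measurable fun x => ‖u₁ x t - riemannDatum um up x‖ₑ :=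
      ((H₁.mono t ht.1).measurable.sub (riemann_mono hu).measurable).enorm
    rw [← lintegral_add_left' (H.int t ht.1).1.enorm, ← lintegral_add_right _ mm]
    refine lintegral_mono fun x => ?_
    rw [show u x t - riemannDatum um up x
      = (u x t - w x t - (u₁ x t - w x t)) + (u₁ x t - riemannDatum um up x) by ring]
    exact (enorm_add_le _ _).trans (add_le_add enorm_sub_le le_rfl)
  · exact ⟨0, le_rfl, fun ε u H => absurd ⟨ε, u, H⟩ hex⟩

lemma uniform_L1 (hJ : Ker J)
    (h0m : Monotone u₀) (h0b : ∃ M, ∀ x, |u₀ x| ≤ M)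
    (h0 : ∫⁻ x, ‖u₀ x - riemannDatum um up x‖ₑ < ⊤) (hu : um < up) :
    ∃ C : ℝ, 0 < C ∧ ∀ ε u, Hyp ε J u₀ w M u → ∀ t > (0 : ℝ),
      ∫⁻ x, ‖u x t - rarefactionWave um up x t‖ₑ ≤ ENNReal.ofReal (C * Real.log (2 + t)) := by
  obtain ⟨B, hB, hBu⟩ := uniform_B (w := w) (M := M) hJ h0m h0b h0 hu
  set K := max |um| |up| with hK
  have hK0 : 0 ≤ K := (abs_nonneg _).trans (le_max_left _ _)
  set m2 := ∫ z, z ^ 2 * J z with hm2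
  have m0 : 0 ≤ m2 := integral_nonneg fun z => mul_nonneg (sq_nonneg _) (hJ.pos z)
  have hΔ : 0 < up - um := by linarith
  set R := 6 * B / (up - um) + 1 with hR
  have hR0 : 0 < R := by positivity
  have hBR : 3 * (B / R) ≤ (up - um) / 2 := by
    have : R * (up - um) = 6 * B + (up - um) := by rw [hR]; field_simp
    rw [mul_div_assoc', div_le_iff₀ hR0]
    nlinarith
  set E := (32 * R ^ 2 * K + 4 * R * (2 * m2 + K ^ 2 / 2)) / (up - um) with hE
  have hE0 : 0 ≤ E := by positivity
  have hlog : ∀ t : ℝ, 0 < t → 1 / 2 ≤ Real.log (2 + t) := by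
    intro t ht
    have h1 := Real.log_two_gt_d9
    have h2 : Real.log 2 ≤ Real.log (2 + t) := Real.log_le_log (by norm_num) (by linarith)
    linarith
  refine ⟨2 * (B + 2 * ((up - um) * K) + 1) + 2 * (2 * E + m2), by positivity, ?_⟩
  intro ε u H t ht
  have A := H.adm hJ h0m h0b h0 hu
  have hl := hlog t ht
  set l := Real.log (2 + t) with hldef
  have hpos : 0 ≤ (up - um) * K := by positivity
  rcases lt_or_ge t 1 with h1 | h1
  · have a1 := hBu ε u H t ⟨ht, h1⟩
    have a2 := riem_rare hu ht
    have mR : Measurable fun x => ‖u x t - riemannDatum um up x‖ₑ :=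
      ((H.mono t ht).measurable.sub (riemann_mono hu).measurable).enorm
    calc ∫⁻ x, ‖u x t - rarefactionWave um up x t‖ₑ
        ≤ ∫⁻ x, (‖u x t - riemannDatum um up x‖ₑ
          + ‖riemannDatum um up x - rarefactionWave um up x t‖ₑ) := by
          refine lintegral_mono fun x => ?_
          have := enorm_add_le (u x t - riemannDatum um up x)
            (riemannDatum um up x - rarefactionWave um up x t)
          rwa [sub_add_sub_cancel] at this
      _ ≤ ENNReal.ofReal B + ENNReal.ofReal ((up - um) * (2 * (K * t))) := by
          rw [lintegral_add_left mR]; exact add_le_add a1 a2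
      _ ≤ _ := by
          rw [← ENNReal.ofReal_add hB (by positivity)]
          apply ENNReal.ofReal_le_ofReal
          have : (up - um) * (2 * (K * t)) ≤ 2 * ((up - um) * K) := by nlinarith
          nlinarith
  · have a1 := A.long hu (t₁ := 1 / 2) (T := t) (by norm_num) (by linarith) hB
      (hBu ε u H (1 / 2) (by norm_num))
    have a2 := A.eps_bound hu hB (hBu ε u H) hR0 hBR
    refine a1.trans (ENNReal.ofReal_le_ofReal ?_)
    have a3 : Real.log (t / (1 / 2)) ≤ 2 * l := by
      rw [hldef, ← Real.log_rpow (by linarith)]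
      apply Real.log_le_log (by positivity)
      norm_num
      nlinarith
    have a4 : 0 ≤ Real.log (t / (1 / 2)) := Real.log_nonneg (by linarith)
    rw [← hK, ← hm2]
    have a5 : (2 * ε + m2) * Real.log (t / (1 / 2)) ≤ (2 * E + m2) * (2 * l) := by
      have : 2 * ε + m2 ≤ 2 * E + m2 := by linarith
      exact mul_le_mul this a3 a4 (by positivity)
    have a6 : (up - um) * (K * (1 / 2)) ≤ 2 * ((up - um) * K) := by nlinarith
    have a7 : B + 2 * ((up - um) * K) + 1 ≤ 2 * (B + 2 * ((up - um) * K) + 1) * l := by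
      nlinarith
    linarith
end

/-- Convergence of the regularized solutions towards the rarefaction wave:
for every `p ∈ [1,∞]` there is `C = C(p) > 0`, independent of `t` and of `ε`, such that
`‖u^ε(·,t) - w^R(·,t)‖_p ≤ C t^{-(1-1/p)/2} [log(2+t)]^{(1+1/p)/2}` for all `t > 0`. -/
theorem stmt14 (J : ℝ → ℝ) (hJint : Integrable J) (hJ2 : Integrable fun x => x ^ 2 * J x)
    (hJ1 : (∫ x, J x) = 1) (hJeven : ∀ x, J (-x) = J x) (hJpos : ∀ x, 0 ≤ J x)
    (um up : ℝ) (hum : um < up)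
    (u₀ : ℝ → ℝ) (hu₀b : ∃ M, ∀ x, |u₀ x| ≤ M)
    (hm : IntegrableOn (fun x => u₀ x - um) (Set.Iio 0))
    (hp : IntegrableOn (fun x => u₀ x - up) (Set.Ioi 0))
    (v : ℝ → ℝ) (hv : Integrable v) (hv0 : ∀ᵐ x ∂(volume : Measure ℝ), 0 ≤ v x)
    (hu₀v : ∀ x, u₀ x = u₀ 0 + ∫ s in (0 : ℝ)..x, v s)
    (w : ℝ → ℝ → ℝ) (hw : IsBurgersRiemannSol um up w)
    (M : ℝ) :
    ∀ p : ℝ≥0∞, 1 ≤ p → ∃ C > (0 : ℝ), ∀ ε > (0 : ℝ), ∀ u : ℝ → ℝ → ℝ,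
      (∃ K, ∀ x t, 0 < t → |u x t| ≤ K) →
      (∀ x t, 0 < t → ContDiffAt ℝ (⊤ : ℕ∞) (Function.uncurry u) (x, t)) →
      (∀ t₀ > (0 : ℝ), ∀ n : ℕ, ∃ K, ∀ x t, t₀ < t →
        ‖iteratedFDeriv ℝ n (Function.uncurry u) (x, t)‖ ≤ K) →
      (∀ x t, 0 < t →
        HasDerivAt (fun s => u x s)
          (ε * iteratedDeriv 2 (fun y => u y t) x + ((∫ z, J z * u (x - z) t) - u x t)
            - u x t * deriv (fun y => u y t) x) t) →
      (∀ t > (0 : ℝ), Monotone fun x => u x t) →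
      IsDuhamelSol ε J u₀ u →
      (∀ t > (0 : ℝ), Integrable fun x => u x t - w x t) →
      (∀ t ∈ Set.Ioo (0 : ℝ) 1, (∫ x, |u x t - w x t|) ≤ M) →
      ∀ t > (0 : ℝ),
        eLpNorm (fun x => u x t - rarefactionWave um up x t) p volume
          ≤ ENNReal.ofReal
              (C * t ^ (-(1 - p⁻¹.toReal) / 2) *
                Real.log (2 + t) ^ ((1 + p⁻¹.toReal) / 2)) := by
  intro p hp1
  have hJ : Ker J := ⟨hJint, hJ2, hJ1, hJeven, hJpos⟩
  have h0m := init_mono hv hv0 hu₀v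
  have h0 := init_L1 hm hp
  obtain ⟨C₁, hC₁, hL⟩ := uniform_L1 (w := w) (M := M) hJ h0m hu₀b h0 hum
  obtain ⟨C, hC, hP⟩ := Lp_bound hp1 hC₁
  refine ⟨C, hC, ?_⟩
  intro ε hε u h1 h2 h3 h4 h5 h6 h7 h8 t ht
  have H : Hyp ε J u₀ w M u := ⟨hε, h1, h2, h3, h4, h5, h6, h7, h8⟩
  have A := H.adm hJ h0m hu₀b h0 hum
  have hl : 0 < Real.log (2 + t) := Real.log_pos (by linarith)
  exact hP (fun x => u x t - rarefactionWave um up x t) t _ ht hl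
    (A.sup_bound hum ht (by positivity) (hL ε u H t ht)) (hL ε u H t ht)
end

section
/- Let J ∈ L¹(ℝ) be nonnegative and even with ∫_ℝ J(x) dx = 1 and ∫_ℝ x² J(x) dx < ∞. Let w : ℝ → ℝ be bounded and twice continuously differentiable with bounded first derivative and with w″ ∈ L¹(ℝ). Then J*w − w ∈ L¹(ℝ) and ‖J*w − w‖_{L¹(ℝ)} ≤ (1/2) (∫_ℝ y² J(y) dy) ‖w″‖_{L¹(ℝ)}. -/
open MeasureTheory

lemma aux_int {ν : Measure (ℝ × ℝ)} [SFinite ν] (g : ℝ × ℝ → ℝ) (h : ℝ → ℝ) (s : ℝ × ℝ → ℝ)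
    (hg : Integrable g ν) (hh : Integrable h) (hc : Continuous h) (hs : Continuous s) :
    Integrable (fun z : ℝ × (ℝ × ℝ) => g z.2 * h (z.1 - s z.2)) ((volume : Measure ℝ).prod ν) := by
  have hm : AEStronglyMeasurable (fun z : ℝ × (ℝ × ℝ) => g z.2 * h (z.1 - s z.2))
      ((volume : Measure ℝ).prod ν) := by
    refine AEStronglyMeasurable.mul ?_ ?_
    · exact hg.aestronglyMeasurable.comp_snd
    · exact Continuous.aestronglyMeasurable (by fun_prop)
  rw [integrable_prod_iff' hm]
  constructor
  · refine Filter.Eventually.of_forall fun p => ?_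
    exact (hh.comp_sub_right (s p)).const_mul (g p)
  · have : (fun p : ℝ × ℝ => ∫ x, ‖g p * h (x - s p)‖) = fun p => ‖g p‖ * ∫ x, ‖h x‖ := by
      funext p
      simp only [norm_mul]
      rw [integral_const_mul, integral_sub_right_eq_self (fun x => ‖h x‖) (s p)]
    rw [this]
    exact hg.norm.mul_const _

lemma aux_taylor_s15 (w : ℝ → ℝ) (hw : ContDiff ℝ 2 w) (x y : ℝ) :
    ∫ t in (0:ℝ)..1, y ^ 2 * (1 - t) * iteratedDeriv 2 w (x - y * t)
      = w (x - y) - w x + y * deriv w x := by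
  have h1 : ∀ z, HasDerivAt w (deriv w z) z := fun z =>
    (hw.differentiable (by norm_num) z).hasDerivAt
  have h2 : ∀ z, HasDerivAt (deriv w) (iteratedDeriv 2 w z) z := fun z => by
    have hd : Differentiable ℝ (iteratedDeriv 1 w) :=
      hw.differentiable_iteratedDeriv 1 (by norm_num)
    rw [iteratedDeriv_one] at hd
    have := (hd z).hasDerivAt
    rwa [iteratedDeriv_succ, iteratedDeriv_one]
  have hc : Continuous (iteratedDeriv 2 w) := hw.continuous_iteratedDeriv 2 le_rfl
  have key : ∀ t ∈ Set.uIcc (0:ℝ) 1,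
      HasDerivAt (fun t : ℝ => (1 - t) * (-y) * deriv w (x - y * t) + w (x - y * t))
      (y ^ 2 * (1 - t) * iteratedDeriv 2 w (x - y * t)) t := by
    intro t _
    have hl : HasDerivAt (fun t : ℝ => x - y * t) (-y) t := by
      simpa using ((hasDerivAt_id t).const_mul y).const_sub x
    have hl1 : HasDerivAt (fun t : ℝ => (1 - t) * (-y)) y t := by
      simpa using ((hasDerivAt_id t).const_sub 1).mul_const (-y)
    have a := (h1 (x - y * t)).comp t hl
    have b := (h2 (x - y * t)).comp t hl
    refine HasDerivAt.congr_deriv ((hl1.mul b).add a) ?_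
    simp only [Function.comp]
    ring
  rw [intervalIntegral.integral_eq_sub_of_hasDerivAt key
    (Continuous.intervalIntegrable (by fun_prop) _ _)]
  simp
  ring

theorem stmt15 (J : ℝ → ℝ) (hJint : Integrable J) (hJpos : ∀ x, 0 ≤ J x)
    (hJeven : ∀ x, J (-x) = J x) (hJ1 : (∫ x, J x) = 1)
    (hJ2 : Integrable (fun x => x ^ 2 * J x))
    (w : ℝ → ℝ) (hw : ContDiff ℝ 2 w)
    (hwb : ∃ M, ∀ x, |w x| ≤ M) (hwb' : ∃ M, ∀ x, |deriv w x| ≤ M)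
    (hw'' : Integrable (iteratedDeriv 2 w)) :
    Integrable (fun x => (∫ y, J y * w (x - y)) - w x) ∧
      (∫ x, |(∫ y, J y * w (x - y)) - w x|)
        ≤ (1 / 2) * (∫ y, y ^ 2 * J y) * ∫ x, |iteratedDeriv 2 w x| := by
  obtain ⟨M, hM⟩ := hwb
  have hc : Continuous (iteratedDeriv 2 w) := hw.continuous_iteratedDeriv 2 le_rfl
  have hwc : Continuous w := hw.continuous
  have hJ1i : Integrable (fun y => y * J y) := by
    refine (hJint.add hJ2).mono' (continuous_id.aestronglyMeasurable.mul
      hJint.aestronglyMeasurable) (Filter.Eventually.of_forall fun y => ?_)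
    have : |y| ≤ 1 + y ^ 2 := by
      rw [abs_le]; constructor <;> nlinarith [sq_nonneg (y - 1), sq_nonneg (y + 1)]
    simp only [id, Pi.add_apply, norm_mul, Real.norm_eq_abs, abs_of_nonneg (hJpos y)]
    nlinarith [mul_le_mul_of_nonneg_right this (hJpos y)]
  have hodd : ∫ y, y * J y = 0 := by
    have := integral_neg_eq_self (fun y => y * J y) volume
    simp only [hJeven, neg_mul, integral_neg] at this
    linarith
  let μ1 : Measure ℝ := volume.restrict (Set.Ioc 0 1)
  let ν : Measure (ℝ × ℝ) := (volume : Measure ℝ).prod μ1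
  have h1t : Integrable (fun t : ℝ => 1 - t) μ1 :=
    ((by fun_prop : Continuous fun t : ℝ => 1 - t).integrableOn_Ioc)
  let g : ℝ × ℝ → ℝ := fun p => (p.1 ^ 2 * J p.1) * (1 - p.2)
  have hg : Integrable g ν := hJ2.mul_prod h1t
  have hgn : ∫ p, ‖g p‖ ∂ν = (∫ y, y ^ 2 * J y) * (1 / 2) := by
    have e : ∫ p, ‖g p‖ ∂ν = ∫ p, ‖p.1 ^ 2 * J p.1‖ * ‖1 - p.2‖ ∂ν := by simp only [g, norm_mul]
    rw [e, integral_prod_mul (fun y => ‖y ^ 2 * J y‖) (fun t : ℝ => ‖1 - t‖)]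
    congr 1
    · refine integral_congr_ae (Filter.Eventually.of_forall fun y => ?_)
      exact Real.norm_of_nonneg (mul_nonneg (sq_nonneg y) (hJpos y))
    · have : ∫ t, ‖1 - t‖ ∂μ1 = ∫ t in Set.Ioc (0:ℝ) 1, (1 - t) := by
        refine setIntegral_congr_fun measurableSet_Ioc fun t ht => ?_
        exact Real.norm_of_nonneg (by linarith [ht.2])
      rw [this, ← intervalIntegral.integral_of_le zero_le_one,
        intervalIntegral.integral_sub (by simp) (by simp)]
      simp
      norm_num
  have hF := aux_int g (iteratedDeriv 2 w) (fun p => p.1 * p.2) hg hw'' hc (by fun_prop)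
  have heq : ∀ᵐ x : ℝ, ∫ p, g p * iteratedDeriv 2 w (x - p.1 * p.2) ∂ν
      = (∫ y, J y * w (x - y)) - w x := by
    filter_upwards [hF.prod_right_ae] with x hx
    rw [integral_prod _ hx]
    have e1 : ∀ y, ∫ t, g (y, t) * iteratedDeriv 2 w (x - y * t) ∂μ1
        = J y * w (x - y) - w x * J y + deriv w x * (y * J y) := by
      intro y
      have := aux_taylor_s15 w hw x y
      rw [intervalIntegral.integral_of_le zero_le_one] at this
      calc _ = ∫ t, J y * (y ^ 2 * (1 - t) * iteratedDeriv 2 w (x - y * t)) ∂μ1 := by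
            refine integral_congr_ae (Filter.Eventually.of_forall fun t => ?_)
            simp only [g]; ring
        _ = _ := by
            rw [integral_const_mul, this]; ring
    simp only [e1]
    have hi1 : Integrable (fun y => J y * w (x - y)) := by
      refine hJint.mul_bdd (c := M) ?_ (Filter.Eventually.of_forall fun y => hM _)
      exact Continuous.aestronglyMeasurable (by fun_prop)
    have hi2 : Integrable (fun y => J y * w (x - y) - w x * J y) := hi1.sub (hJint.const_mul _)
    rw [integral_add hi2 (hJ1i.const_mul _),
      integral_sub hi1 (hJint.const_mul _), integral_const_mul, integral_const_mul, hodd, hJ1]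
    ring
  refine ⟨hF.integral_prod_left.congr heq, ?_⟩
  have heq' : ∫ x, |(∫ y, J y * w (x - y)) - w x|
      = ∫ x, ‖∫ p, g p * iteratedDeriv 2 w (x - p.1 * p.2) ∂ν‖ := by
    refine integral_congr_ae ?_
    filter_upwards [heq] with x hx
    rw [hx, Real.norm_eq_abs]
  rw [heq']
  calc _ ≤ ∫ x, ∫ p, ‖g p * iteratedDeriv 2 w (x - p.1 * p.2)‖ ∂ν :=
        integral_mono hF.integral_prod_left.norm hF.norm.integral_prod_left
          fun x => norm_integral_le_integral_norm _
    _ = ∫ p, (∫ x, ‖g p * iteratedDeriv 2 w (x - p.1 * p.2)‖) ∂ν := integral_integral_swap hF.norm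
    _ = ∫ p, ‖g p‖ * (∫ x, |iteratedDeriv 2 w x|) ∂ν := by
        refine integral_congr_ae (Filter.Eventually.of_forall fun p => ?_)
        simp only [norm_mul]
        rw [integral_const_mul,
          integral_sub_right_eq_self (fun x => ‖iteratedDeriv 2 w x‖) (p.1 * p.2)]
        rfl
    _ = _ := by
        rw [integral_mul_const, hgn]; ring
end
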